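/- If A is K-trivial and W_A is a bounded set of finite binary strings that is computably enumerable relative to A, then there is a bounded computably enumerable set of strings W with W_A ⊆ W. -/

import Mathlib

open MeasureTheory ENNReal

/-! ### Cantor space and the uniform (coin-flipping) measure -/

/-- The binary digits of a real number in `[0,1)`, giving a point of Cantor space. -/
noncomputable def binaryDigits (x : ℝ) : ℕ → Bool :=
  fun n => decide (⌊x * 2 ^ (n + 1)⌋ % 2 = 1)

/-- The uniform (Lebesgue / coin-flipping) measure on Cantor space `2^ω`,
obtained as the pushforward of Lebesgue measure on `[0,1)` under binary expansion. -/
noncomputable def μCantor : Measure (ℕ → Bool) :=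
  Measure.map binaryDigits (volume.restrict (Set.Ico (0 : ℝ) 1))

/-- `σ` is an initial segment of the infinite sequence `X`. -/
def IsPrefixOf (σ : List Bool) (X : ℕ → Bool) : Prop :=
  ∀ i : Fin σ.length, X i = σ.get i

/-- The cylinder determined by a finite binary string. -/
def cylinder (σ : List Bool) : Set (ℕ → Bool) := {X | IsPrefixOf σ X}

/-- The open set generated by a set of finite binary strings. -/
def openOf (S : Set (List Bool)) : Set (ℕ → Bool) := ⋃ σ ∈ S, cylinder σ

/-- The density of a set `P` above the string `τ`: `μ([τ] ∩ P) · 2^{|τ|}`. -/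
noncomputable def dens (τ : List Bool) (P : Set (ℕ → Bool)) : ℝ≥0∞ :=
  μCantor (cylinder τ ∩ P) * 2 ^ τ.length

/-- The length-`n` initial segment of `X`, as a finite binary string. -/
def strPrefix (X : ℕ → Bool) (n : ℕ) : List Bool := (List.range n).map X

/-- A set of strings is prefix-free if no element is a proper prefix of another. -/
def PrefixFreeSet (S : Set (List Bool)) : Prop :=
  ∀ σ ∈ S, ∀ τ ∈ S, σ <+: τ → σ = τ

/-- The weight `∑_{σ ∈ S} 2^{-|σ|}` of a set of strings. -/
noncomputable def weight (S : Set (List Bool)) : ℝ≥0∞ :=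
  ∑' σ : S, 2⁻¹ ^ (σ : List Bool).length

/-- A set of strings is bounded if its weight is finite. -/
def BoundedStr (S : Set (List Bool)) : Prop := weight S < ⊤

/-- The tail `X(·+k)` of an infinite binary sequence. -/
def tailSeq (X : ℕ → Bool) (k : ℕ) : ℕ → Bool := fun n => X (n + k)

/-! ### Oracle computability -/

/-- The `e`-th computably enumerable set of naturals (the domain of the `e`-th
partial computable function). -/
def WEnum (e n : ℕ) : Prop := ((Denumerable.ofNat Nat.Partrec.Code e).eval n).Dom

/-- `OracleComputes e X n m` holds if the `e`-th Turing functional with oracle `X`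
outputs `m` on input `n`; a Turing functional is presented by the c.e. set `W_e`
of coded axioms `(σ, n, m)`, and `Γ_e^X(n) = m` iff some initial segment `σ` of `X`
has `(σ, n, m) ∈ W_e`. -/
def OracleComputes (e : ℕ) (X : ℕ → Bool) (n m : ℕ) : Prop :=
  ∃ σ : List Bool, IsPrefixOf σ X ∧
    WEnum e (Nat.pair (Encodable.encode σ) (Nat.pair n m))

def natOfBool (b : Bool) : ℕ := cond b 1 0

/-- `f : ℕ → ℕ` is computable with oracle `A`: some Turing functional with oracle `A`
has graph exactly `f`. -/
def FnComputableIn (f : ℕ → ℕ) (A : ℕ → Bool) : Prop :=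
  ∃ e, ∀ n m, OracleComputes e A n m ↔ m = f n

/-- Turing reducibility `B ≤_T A` for subsets of `ω` (as elements of Cantor space). -/
def TuringLE (B A : ℕ → Bool) : Prop := FnComputableIn (fun n => natOfBool (B n)) A

/-- Turing equivalence. -/
def TuringEquiv (A B : ℕ → Bool) : Prop := TuringLE A B ∧ TuringLE B A

/-- The Turing join `A ⊕ B`. -/
def joinSet (A B : ℕ → Bool) : ℕ → Bool :=
  fun n => if n % 2 = 0 then A (n / 2) else B (n / 2)

open Classical in
/-- The Turing jump `A′ = {e : Γ_e^A(e)↓}`. -/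
noncomputable def jump (A : ℕ → Bool) : ℕ → Bool :=
  fun e => decide (∃ m, OracleComputes e A e m)

/-- The empty oracle. -/
def emptyOracle : ℕ → Bool := fun _ => false

/-- The halting problem `∅′`. -/
noncomputable def zeroJump : ℕ → Bool := jump emptyOracle

/-- A set is computable iff it is Turing reducible to the empty oracle. -/
def ComputableSet (A : ℕ → Bool) : Prop := TuringLE A emptyOracle

/-- A set of naturals is c.e. in `A`. -/
def CeIn (A : ℕ → Bool) (S : Set ℕ) : Prop :=
  ∃ e, ∀ n, n ∈ S ↔ ∃ m, OracleComputes e A n m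

/-- A set of strings is c.e. in `A`. -/
def CeStrIn (A : ℕ → Bool) (S : Set (List Bool)) : Prop :=
  ∃ e, ∀ σ : List Bool, σ ∈ S ↔ ∃ m, OracleComputes e A (Encodable.encode σ) m

/-- A c.e. set of strings. -/
def CeStr (S : Set (List Bool)) : Prop := CeStrIn emptyOracle S

/-! ### Π⁰₁ classes, Martin-Löf randomness, K-triviality -/

/-- A `Π⁰₁(A)` class: the complement of the union of cylinders over an `A`-c.e.
set of strings. -/
def Pi01In (A : ℕ → Bool) (P : Set (ℕ → Bool)) : Prop :=
  ∃ S : Set (List Bool), CeStrIn A S ∧ P = (openOf S)ᶜ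

/-- A `Π⁰₁` class. -/
def Pi01 (P : Set (ℕ → Bool)) : Prop := Pi01In emptyOracle P

/-- The `n`-th level of the `e`-th `A`-effective sequence of open sets. -/
def testLevel (e : ℕ) (A : ℕ → Bool) (n : ℕ) : Set (ℕ → Bool) :=
  openOf {σ | ∃ m, OracleComputes e A (Nat.pair n (Encodable.encode σ)) m}

/-- A Martin-Löf test relative to `A`: a uniformly `A`-c.e. sequence of open sets
`G n` with `μ(G n) ≤ 2^{-n}`. -/
def MLTestIn (A : ℕ → Bool) (G : ℕ → Set (ℕ → Bool)) : Prop :=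
  (∃ e, ∀ n, G n = testLevel e A n) ∧ ∀ n, μCantor (G n) ≤ 2⁻¹ ^ n

/-- `X` is Martin-Löf random relative to `A`: it passes every `A`-Martin-Löf test. -/
def MLRandomIn (A X : ℕ → Bool) : Prop :=
  ∀ G : ℕ → Set (ℕ → Bool), MLTestIn A G → ∃ n, X ∉ G n

/-- `X` is Martin-Löf random. -/
def MLRandom (X : ℕ → Bool) : Prop := MLRandomIn emptyOracle X

/-- The domain of the `e`-th machine, viewed as a set of binary strings. -/
def machineDom (e : ℕ) : Set (List Bool) :=
  {σ | ((Denumerable.ofNat Nat.Partrec.Code e).eval (Encodable.encode σ)).Dom}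

/-- The `e`-th machine is prefix-free. -/
def PrefixFreeMachine (e : ℕ) : Prop := PrefixFreeSet (machineDom e)

/-- Prefix-free Kolmogorov complexity (defined, up to an additive constant, as the
least `|σ| + 2e + 2` over prefix-free machines `e` and programs `σ` producing `x`). -/
noncomputable def Kcpx (x : ℕ) : ℕ :=
  sInf {k | ∃ e, ∃ σ : List Bool, PrefixFreeMachine e ∧
    x ∈ (Denumerable.ofNat Nat.Partrec.Code e).eval (Encodable.encode σ) ∧
    k = σ.length + 2 * e + 2}

/-- `K(n)` means `K(1^n)`. -/
noncomputable def KofNat (n : ℕ) : ℕ := Kcpx (Encodable.encode (List.replicate n true))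

/-- `A` is K-trivial: `K(A↾n) ≤ K(n) + c` for some constant `c`. -/
def KTrivial (A : ℕ → Bool) : Prop :=
  ∃ c, ∀ n, Kcpx (Encodable.encode (strPrefix A n)) ≤ KofNat n + c


namespace KT

abbrev Str := List Bool
abbrev Dy := ℕ × ℕ

/-- value of a dyadic pair -/
noncomputable def dv (x : Dy) : ℝ := (x.1 : ℝ) / 2 ^ x.2

def dadd (x y : Dy) : Dy := (x.1 * 2 ^ y.2 + y.1 * 2 ^ x.2, x.2 + y.2)

def dshift (a : ℕ) (x : Dy) : Dy := (x.1, x.2 + a)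

lemma dv_nonneg (x : Dy) : 0 ≤ dv x := by unfold dv; positivity

@[simp] lemma dv_zero (e : ℕ) : dv (0, e) = 0 := by simp [dv]

lemma dv_dadd (x y : Dy) : dv (dadd x y) = dv x + dv y := by
  simp only [dv, dadd]; push_cast; rw [pow_add]; field_simp

lemma dv_dshift (a : ℕ) (x : Dy) : dv (dshift a x) = dv x / 2 ^ a := by
  simp only [dv, dshift]; rw [pow_add]; field_simp

/-- frame: base string, goal, quota exponent, counter, achieved amount -/
abbrev Frame := Str × Dy × ℕ × ℕ × Dy

def done (f : Frame) : Prop := f.2.1.1 * 2 ^ f.2.2.2.2.2 ≤ f.2.2.2.2.1 * 2 ^ f.2.1.2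

instance : DecidablePred done := fun f => by unfold done; infer_instance

lemma done_iff (f : Frame) : done f ↔ dv f.2.1 ≤ dv f.2.2.2.2 := by
  simp only [done, dv]
  rw [div_le_div_iff₀ (by positivity) (by positivity)]
  exact_mod_cast Iff.rfl

def lcp (ρ X : Str) : ℕ := Nat.findGreatest (fun h => X.take h = ρ.take h) ρ.length

lemma lcp_le (ρ X : Str) : lcp ρ X ≤ ρ.length := Nat.findGreatest_le _

lemma lcp_take (ρ X : Str) : X.take (lcp ρ X) = ρ.take (lcp ρ X) :=
  Nat.findGreatest_spec (P := fun h => X.take h = ρ.take h) (Nat.zero_le _) (by simp)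

lemma le_lcp {ρ X : Str} {n : ℕ} (h1 : n ≤ ρ.length) (h2 : X.take n = ρ.take n) : n ≤ lcp ρ X :=
  Nat.le_findGreatest h1 h2

section
variable (u : Str → Dy) (e : ℕ)

def fresh (n : ℕ) (τ : Str) (goal : Dy) (d : ℕ) : List Frame :=
  (List.range n).map fun i =>
    (τ, (if i = 0 then goal else dshift (d + 2 * (i - 1) + 1 + e) (u τ)), d + 2 * i, 1, (0, 0))

lemma fresh_succ (n : ℕ) (τ : Str) (goal : Dy) (d : ℕ) :
    fresh u e (n + 1) τ goal d =
      (τ, goal, d, 1, (0, 0)) :: fresh u e n τ (dshift (d + 1 + e) (u τ)) (d + 2) := by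
  unfold fresh
  rw [List.range_succ_eq_map, List.map_cons, List.map_map]
  congr 1
  apply List.map_congr_left
  intro i _
  rcases i with _ | i
  · simp
  · simp only [Function.comp, Nat.succ_eq_add_one, Nat.add_eq_zero_iff, one_ne_zero, and_false,
      if_false, Nat.add_sub_cancel]
    congr 2
    · congr 1; ring
    · congr 1; ring

def gain (a : ℕ) (ρ : Str) (h n : ℕ) : Dy :=
  Nat.rec (0, 0) (fun k ih => if h < k then dadd ih (dshift a (u (ρ.take k))) else ih) n

lemma dv_gain (a : ℕ) (ρ : Str) (h n : ℕ) :
    dv (gain u a ρ h n) = ∑ k ∈ Finset.range n, if h < k then dv (u (ρ.take k)) / 2 ^ a else 0 := by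
  induction n with
  | zero => simp [gain]
  | succ n ih =>
    rw [Finset.sum_range_succ, ← ih]
    show dv (if h < n then dadd (gain u a ρ h n) _ else gain u a ρ h n) = _
    split_ifs
    · rw [dv_dadd, dv_dshift]
    · simp

def restart (ρ : Str) (f : Frame) (D : Dy) (n : ℕ) : List Frame :=
  (f.1, f.2.1, f.2.2.1, f.2.2.2.1 + 1, D) ::
    fresh u e n ρ (dshift (f.2.2.1 + 1 + e) (u ρ)) (f.2.2.1 + 1 + (f.2.2.2.1 + 1))

def actG (X : Str) (f : Frame) (rest : List Frame) (ih : List Frame × Option ℕ) (g : Frame) :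
    List Frame × Option ℕ :=
  if g.1 <+: X then
    if done g then
      if g.1.length < X.length then
        (restart u e (X.take (g.1.length + 1)) f f.2.2.2.2 rest.length, none)
      else (f :: rest, none)
    else (f :: ih.1, ih.2)
  else
    (restart u e (X.take (lcp g.1 X + 1)) f
      (dadd f.2.2.2.2 (dadd (gain u (f.2.2.1 + 1 + e) g.1 (lcp g.1 X) g.1.length) g.2.2.2.2))
      rest.length, none)

def act (X : Str) (f : Frame) (rest : List Frame) (ih : List Frame × Option ℕ) :
    List Frame × Option ℕ :=
  if done f then (f :: rest, none)
  else
    List.casesOn rest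
      ([(f.1, f.2.1, f.2.2.1, f.2.2.2.1, f.2.1)], some f.2.1.2)
      (fun g _ => actG u e X f rest ih g)

def step (X : Str) (L : List Frame) : List Frame × Option ℕ :=
  List.recOn L ([], none) (fun f rest ih => act u e X f rest ih)

def runA (X : ℕ → Str) (L : List Frame) (a m : ℕ) : List Frame :=
  Nat.rec L (fun k ih => (step u e (X (a + k)) ih).1) (m - a)

@[simp] lemma runA_self (X : ℕ → Str) (L : List Frame) (a : ℕ) : runA u e X L a a = L := by
  simp [runA]

lemma runA_succ (X : ℕ → Str) (L : List Frame) {a m : ℕ} (h : a ≤ m) :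
    runA u e X L a (m + 1) = (step u e (X m) (runA u e X L a m)).1 := by
  obtain ⟨k, rfl⟩ := Nat.exists_eq_add_of_le h
  simp [runA, Nat.add_assoc, show a + (k + 1) - a = k + 1 by omega]

noncomputable def rw' (q : Option ℕ) : ℝ := q.elim 0 (fun r => 1 / 2 ^ r)

lemma rw'_nonneg (q : Option ℕ) : 0 ≤ rw' q := by
  cases q <;> simp [rw']

def lev (X : ℕ → Str) (i m : ℕ) : ℕ :=
  ((Finset.Ioo i m).image (fun l => (X l).take (X i).length)).card

lemma lev_mono (X : ℕ → Str) (i : ℕ) {m m' : ℕ} (h : m ≤ m') : lev X i m ≤ lev X i m' := by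
  unfold lev
  apply Finset.card_le_card
  apply Finset.image_subset_image
  intro l; simp; omega

lemma prefix_take {ρ Y : Str} {n : ℕ} (h : ρ <+: Y) (hn : ρ.length ≤ n) : ρ <+: Y.take n := by
  rw [List.prefix_take_iff]; exact ⟨h, hn⟩

lemma lev_succ (X : ℕ → Str) {i m : ℕ} (ρ : Str) (him : i < m)
    (h : ∀ l, i ≤ l → l < m → ρ <+: X l) (hm : ¬ ρ <+: X m) :
    lev X i m + 1 ≤ lev X i (m + 1) := by
  unfold lev
  have hlen : ρ.length ≤ (X i).length := (h i le_rfl him).length_le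
  rw [show Finset.Ioo i (m + 1) = insert m (Finset.Ioo i m) by ext; simp; omega,
    Finset.image_insert, Finset.card_insert_of_notMem]
  intro hmem
  simp only [Finset.mem_image, Finset.mem_Ioo] at hmem
  obtain ⟨l, ⟨h1, h2⟩, h3⟩ := hmem
  apply hm
  have : ρ <+: (X l).take (X i).length := prefix_take (h l h1.le h2) hlen
  rw [h3] at this
  exact this.trans (List.take_prefix _ _)

def Contract (j : ℕ) (X : ℕ → Str) (a : ℕ) (τ : Str) (goal : Dy) (d : ℕ) (w : ℕ → ℝ) (m : ℕ)
    (L : List Frame) : Prop :=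
  ∃ c D rest, L = (τ, goal, d, c, D) :: rest ∧
    dv D ≤ ∑ i ∈ Finset.Ico a m, w i ∧
    ∑ i ∈ Finset.Ico a m, w i ≤ min (dv D) (dv goal) + 1 / 2 ^ d ∧
    j * dv D ≤ ∑ i ∈ Finset.Ico a m, w i * lev X i m

lemma step_cons (X : Str) (f : Frame) (rest : List Frame) :
    step u e X (f :: rest) = act u e X f rest (step u e X rest) := rfl

lemma step_done (X : Str) (f : Frame) (rest : List Frame) (h : done f) :
    step u e X (f :: rest) = (f :: rest, none) := by
  rw [step_cons]; unfold act; simp [h]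

lemma contract_frozen {j : ℕ} {X : ℕ → Str} {a : ℕ} {τ : Str} {goal : Dy} {d : ℕ} {w : ℕ → ℝ}
    {m : ℕ} {f : Frame} {rest : List Frame} (ham : a ≤ m)
    (hw : w m = rw' (step u e (X m) (f :: rest)).2) (hw0 : ∀ i ∈ Finset.Ico a m, 0 ≤ w i)
    (hd : done f)
    (hc : Contract j X a τ goal d w m (f :: rest)) :
    Contract j X a τ goal d w (m + 1) (step u e (X m) (f :: rest)).1 := by
  rw [step_done u e _ _ _ hd] at hw ⊢
  obtain ⟨c, D, r, h1, h2, h3, h4⟩ := hc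
  have hwm : w m = 0 := by rw [hw]; rfl
  refine ⟨c, D, r, h1, ?_, ?_, ?_⟩
  · rw [Finset.sum_Ico_succ_top ham, hwm]; linarith
  · rw [Finset.sum_Ico_succ_top ham, hwm]; linarith
  · rw [Finset.sum_Ico_succ_top ham, hwm]
    refine h4.trans ?_
    rw [zero_mul, add_zero]
    apply Finset.sum_le_sum
    intro i hi
    have := hw0 i hi
    have h5 := lev_mono X i (Nat.le_succ m)
    gcongr

theorem contract_zero (X : ℕ → Str) (a K : ℕ) (τ : Str) (goal : Dy) (d : ℕ) (w : ℕ → ℝ)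
    (hg : goal.1 ≤ 1)
    (hw : ∀ m, a ≤ m → m < K → w m = rw' (step u e (X m) (runA u e X (fresh u e 1 τ goal d) a m)).2) :
    ∀ m, a ≤ m → m ≤ K →
      Contract 0 X a τ goal d w m (runA u e X (fresh u e 1 τ goal d) a m) := by
  have key : ∀ m, a ≤ m → m ≤ K →
      (runA u e X (fresh u e 1 τ goal d) a m = [(τ, goal, d, 1, (0, 0))] ∧
        ∑ i ∈ Finset.Ico a m, w i = 0) ∨
      (runA u e X (fresh u e 1 τ goal d) a m = [(τ, goal, d, 1, goal)] ∧
        ∑ i ∈ Finset.Ico a m, w i = dv goal) := by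
    intro m ham
    induction m, ham using Nat.le_induction with
    | base => intro _; left; simp [fresh]
    | succ m ham ih =>
      intro hmK
      have hwm := hw m ham (by omega)
      rw [runA_succ u e X _ ham, Finset.sum_Ico_succ_top ham, hwm]
      rcases ih (by omega) with ⟨h1, h2⟩ | ⟨h1, h2⟩
      · rw [h1, h2]
        by_cases hd : done (τ, goal, d, 1, (0, 0))
        · left; rw [step_done u e _ _ _ hd]; simp [rw']
        · right
          have hst : step u e (X m) [(τ, goal, d, 1, (0, 0))] =
              ([(τ, goal, d, 1, goal)], some goal.2) := by
            rw [step_cons]; unfold act; simp [hd]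
          have hg1 : goal.1 = 1 := by
            rcases Nat.le_one_iff_eq_zero_or_eq_one.1 hg with h | h
            · exfalso; apply hd
              rw [done_iff]; simp [dv, h]
            · exact h
          rw [hst]; simp [rw', dv, hg1]
      · right
        have hd : done (τ, goal, d, 1, goal) := by rw [done_iff]
        rw [h1, h2, step_done u e _ _ _ hd]; simp [rw']
  intro m ham hmK
  have h0 := dv_nonneg goal
  have hpos : (((0 : ℕ) : ℝ)) * 0 ≤ ∑ i ∈ Finset.Ico a m, w i * lev X i m := by
    rw [mul_zero]
    apply Finset.sum_nonneg
    intro i hi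
    rw [Finset.mem_Ico] at hi
    rw [hw i (by omega) (by omega)]
    exact mul_nonneg (rw'_nonneg _) (by positivity)
  rcases key m ham hmK with ⟨h1, h2⟩ | ⟨h1, h2⟩
  · refine ⟨1, (0, 0), [], h1, ?_, ?_, by simpa using hpos⟩
    · rw [h2]; simp
    · rw [h2]; simp [h0]
  · refine ⟨1, goal, [], h1, ?_, ?_, by simpa using hpos⟩
    · rw [h2]
    · rw [h2]; simp

end
end KT

namespace KT

lemma fiber_sum (s : Finset ℕ) (f : ℕ → ℝ) (own : ℕ → ℕ) (h N : ℕ)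
    (hN : ∀ i ∈ s, own i ≤ N) :
    (∑ i ∈ s, if own i = 0 ∨ h + 1 < own i then f i else 0) =
      (∑ i ∈ s, if own i = 0 then f i else 0) +
        ∑ n ∈ Finset.range N, if h < n then (∑ i ∈ s, if own i = n + 1 then f i else 0) else 0 := by
  have h1 : (∑ n ∈ Finset.range N, if h < n then (∑ i ∈ s, if own i = n + 1 then f i else 0) else 0)
      = ∑ i ∈ s, if h + 1 < own i then f i else 0 := by
    have : ∀ n ∈ Finset.range N,
        (if h < n then (∑ i ∈ s, if own i = n + 1 then f i else 0) else 0) =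
        ∑ i ∈ s, if h < n ∧ own i = n + 1 then f i else 0 := by
      intro n _
      split_ifs with hn <;> simp [hn]
    rw [Finset.sum_congr rfl this, Finset.sum_comm]
    apply Finset.sum_congr rfl
    intro i hi
    have hi' := hN i hi
    split_ifs with hh
    · rw [Finset.sum_eq_single (own i - 1)]
      · rw [if_pos]; omega
      · intro b _ hb; rw [if_neg]; omega
      · intro hb; exfalso; apply hb; rw [Finset.mem_range]; omega
    · apply Finset.sum_eq_zero
      intro n _; rw [if_neg]; omega
  rw [h1, ← Finset.sum_add_distrib]
  apply Finset.sum_congr rfl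
  intro i _
  by_cases h0 : own i = 0
  · simp [h0]
  · simp [h0]

section
variable (u : Str → Dy) (e : ℕ)

/-- The state invariant of a run which is not done. -/
structure Inv (j : ℕ) (X : ℕ → Str) (a K : ℕ) (τ : Str) (goal : Dy) (d : ℕ) (w : ℕ → ℝ) (m : ℕ)
    (a1 : ℕ) (ρ : Str) (c : ℕ) (D : Dy) (own : ℕ → ℕ) : Prop where
  haa : a ≤ a1
  ham : a1 ≤ m
  hst : runA u e X (fresh u e (j + 2) τ goal d) a m = (τ, goal, d, c, D) ::
    runA u e X (fresh u e (j + 1) ρ (dshift (d + 1 + e) (u ρ)) (d + 1 + c)) a1 m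
  hc : 1 ≤ c
  hpre : τ <+: ρ
  hX : ∀ l, a1 ≤ l → l < m → ρ <+: X l
  hlen : ∀ l, m ≤ l → l < K → ρ.length ≤ (X l).length
  hw : ∀ l, a1 ≤ l → l < m → w l = rw' (step u e (X l) (runA u e X
    (fresh u e (j + 1) ρ (dshift (d + 1 + e) (u ρ)) (d + 1 + c)) a1 l)).2
  hnd : dv D < dv goal
  o1 : ∀ i, a ≤ i → i < a1 → ∀ n, own i = n + 1 → τ.length ≤ n ∧ n < ρ.length ∧
    ∀ l, i ≤ l → l < m → ρ.take n <+: X l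
  o2 : ∀ n, τ.length ≤ n → n < ρ.length →
    dv (u (ρ.take n)) / 2 ^ (d + 1 + e) ≤
      (∑ i ∈ Finset.Ico a a1, if own i = n + 1 then w i else 0) ∧
    j * (dv (u (ρ.take n)) / 2 ^ (d + 1 + e)) ≤
      (∑ i ∈ Finset.Ico a a1, if own i = n + 1 then w i * lev X i m else 0)
  o3 : dv D ≤ (∑ i ∈ Finset.Ico a a1, if own i = 0 then w i else 0) ∧
    (j + 1) * dv D ≤ (∑ i ∈ Finset.Ico a a1, if own i = 0 then w i * lev X i m else 0)
  o4 : ∑ i ∈ Finset.Ico a a1, w i ≤ dv D +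
    (∑ n ∈ Finset.Ico τ.length ρ.length, dv (u (ρ.take n)) / 2 ^ (d + 1 + e)) +
    1 / 2 ^ (d + 1) - 1 / 2 ^ (d + c)

variable (hu1 : ∀ ρ, (u ρ).1 ≤ 1)
  (hu : ∀ ρ : Str, ∑ k ∈ Finset.range (ρ.length + 1), dv (u (ρ.take k)) ≤ 2 ^ e)

/-- the contract at level j, for all runs -/
def ContractAll (j : ℕ) : Prop :=
  ∀ (X : ℕ → Str) (a K : ℕ) (τ : Str) (goal : Dy) (d : ℕ) (w : ℕ → ℝ), goal.1 ≤ 1 →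
    (∀ l, a ≤ l → l < K → τ <+: X l) →
    (∀ l l', a ≤ l → l ≤ l' → l' < K → (X l).length ≤ (X l').length) →
    (∀ m, a ≤ m → m < K →
      w m = rw' (step u e (X m) (runA u e X (fresh u e (j + 1) τ goal d) a m)).2) →
    ∀ m, a ≤ m → m ≤ K →
      Contract j X a τ goal d w m (runA u e X (fresh u e (j + 1) τ goal d) a m)

lemma runA_length (X : ℕ → Str) (L : List Frame) {a m : ℕ} (h : a ≤ m) :
    (runA u e X L a m).length = L.length := by
  have hstep : ∀ (Y : Str) (L : List Frame), (step u e Y L).1.length = L.length := by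
    intro Y L
    induction L with
    | nil => rfl
    | cons f rest ih =>
      rw [step_cons]; unfold act
      split_ifs
      · rfl
      · cases rest with
        | nil => rfl
        | cons g r =>
          simp only
          unfold actG
          split_ifs
          · simp [restart, fresh]
          · rfl
          · simpa using ih
          · simp [restart, fresh]
  induction m, h using Nat.le_induction with
  | base => simp
  | succ m h ih => rw [runA_succ u e X _ h, hstep, ih]

lemma fresh_length (n : ℕ) (τ : Str) (goal : Dy) (d : ℕ) : (fresh u e n τ goal d).length = n := by
  simp [fresh]

/-- contract from invariant -/
lemma Inv.contract {j : ℕ} {X : ℕ → Str} {a K : ℕ} {τ : Str} {goal : Dy} {d : ℕ} {w : ℕ → ℝ}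
    {m a1 : ℕ} {ρ : Str} {c : ℕ} {D : Dy} {own : ℕ → ℕ}
    (hu : ∀ ρ : Str, ∑ k ∈ Finset.range (ρ.length + 1), dv (u (ρ.take k)) ≤ 2 ^ e)
    (hI : Inv u e j X a K τ goal d w m a1 ρ c D own)
    (hw0 : ∀ i ∈ Finset.Ico a m, 0 ≤ w i)
    (hsub : ∑ i ∈ Finset.Ico a1 m, w i ≤
      dv (u ρ) / 2 ^ (d + 1 + e) + 1 / 2 ^ (d + 1 + c)) :
    (∑ i ∈ Finset.Ico a m, w i ≤ dv D + 1 / 2 ^ d) ∧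
    Contract (j + 1) X a τ goal d w m (runA u e X (fresh u e (j + 2) τ goal d) a m) := by
  have hsplit : ∀ f : ℕ → ℝ, ∑ i ∈ Finset.Ico a m, f i =
      ∑ i ∈ Finset.Ico a a1, f i + ∑ i ∈ Finset.Ico a1 m, f i := fun f =>
    (Finset.sum_Ico_consecutive f hI.haa hI.ham).symm
  have hsum : ∑ i ∈ Finset.Ico a m, w i ≤ dv D + 1 / 2 ^ d := by
    have h1 : (∑ n ∈ Finset.Ico τ.length ρ.length, dv (u (ρ.take n)) / 2 ^ (d + 1 + e)) +
        dv (u ρ) / 2 ^ (d + 1 + e) ≤ 1 / 2 ^ (d + 1) := by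
      have h2 := hu ρ
      rw [Finset.sum_range_succ, List.take_length] at h2
      have h3 : ∑ n ∈ Finset.Ico τ.length ρ.length, dv (u (ρ.take n)) ≤
          ∑ n ∈ Finset.range ρ.length, dv (u (ρ.take n)) := by
        apply Finset.sum_le_sum_of_subset_of_nonneg
        · intro x; simp
        · intro i _ _; exact dv_nonneg _
      rw [← Finset.sum_div, ← add_div, pow_add _ _ e, div_le_div_iff₀ (by positivity) (by positivity)]
      have : (0:ℝ) < 2 ^ (d + 1) := by positivity
      nlinarith
    have h4 := hI.o4
    rw [hsplit]
    have h5 : (1:ℝ) / 2 ^ (d + 1 + c) ≤ 1 / 2 ^ (d + c) := by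
      apply one_div_le_one_div_of_le (by positivity)
      apply pow_le_pow_right₀ (by norm_num); omega
    have h6 : (1:ℝ) / 2 ^ (d + 1) + 1 / 2 ^ (d + 1) = 1 / 2 ^ d := by
      rw [pow_succ]; field_simp; norm_num
    linarith
  refine ⟨hsum, c, D, _, hI.hst, ?_, ?_, ?_⟩
  · refine hI.o3.1.trans ?_
    rw [hsplit]
    have : 0 ≤ ∑ i ∈ Finset.Ico a1 m, w i := by
      apply Finset.sum_nonneg; intro i hi; apply hw0
      have := hI.haa
      rw [Finset.mem_Ico] at hi ⊢; omega
    have h2 : (∑ i ∈ Finset.Ico a a1, if own i = 0 then w i else 0) ≤ ∑ i ∈ Finset.Ico a a1, w i := by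
      apply Finset.sum_le_sum
      intro i hi
      have := hw0 i (by have := hI.ham; rw [Finset.mem_Ico] at hi ⊢; omega)
      split_ifs <;> linarith
    linarith
  · rw [min_eq_left hI.hnd.le]; exact hsum
  · push_cast
    refine hI.o3.2.trans ?_
    rw [hsplit]
    have : 0 ≤ ∑ i ∈ Finset.Ico a1 m, w i * lev X i m := by
      apply Finset.sum_nonneg; intro i hi; apply mul_nonneg _ (by positivity); apply hw0
      have := hI.haa
      rw [Finset.mem_Ico] at hi ⊢; omega
    have h2 : (∑ i ∈ Finset.Ico a a1, if own i = 0 then w i * lev X i m else 0) ≤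
        ∑ i ∈ Finset.Ico a a1, w i * lev X i m := by
      apply Finset.sum_le_sum
      intro i hi
      have := mul_nonneg (hw0 i (by have := hI.ham; rw [Finset.mem_Ico] at hi ⊢; omega))
        (Nat.cast_nonneg (α := ℝ) (lev X i m))
      split_ifs <;> linarith
    linarith

end
end KT

namespace KT
section
variable (u : Str → Dy) (e : ℕ)

lemma lev_sum_mono (X : ℕ → Str) (w : ℕ → ℝ) (s : Finset ℕ) (p : ℕ → Prop) [DecidablePred p]
    (hw : ∀ i ∈ s, 0 ≤ w i) (m : ℕ) :
    (∑ i ∈ s, if p i then w i * lev X i m else 0) ≤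
      ∑ i ∈ s, if p i then w i * lev X i (m + 1) else 0 := by
  apply Finset.sum_le_sum
  intro i hi
  have := hw i hi
  have h5 := lev_mono X i (Nat.le_succ m)
  split_ifs
  · gcongr
  · rfl

/-- sub-step preserves the invariant -/
lemma Inv.substep {j : ℕ} {X : ℕ → Str} {a K : ℕ} {τ : Str} {goal : Dy} {d : ℕ} {w : ℕ → ℝ}
    {m a1 : ℕ} {ρ : Str} {c : ℕ} {D : Dy} {own : ℕ → ℕ}
    (hI : Inv u e j X a K τ goal d w m a1 ρ c D own)
    (hw0 : ∀ i ∈ Finset.Ico a m, 0 ≤ w i)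
    (hρ : ρ <+: X m)
    (hs : step u e (X m) (runA u e X (fresh u e (j + 2) τ goal d) a m) =
      ((τ, goal, d, c, D) :: (step u e (X m) (runA u e X
        (fresh u e (j + 1) ρ (dshift (d + 1 + e) (u ρ)) (d + 1 + c)) a1 m)).1,
        (step u e (X m) (runA u e X
        (fresh u e (j + 1) ρ (dshift (d + 1 + e) (u ρ)) (d + 1 + c)) a1 m)).2))
    (hwm : w m = rw' (step u e (X m) (runA u e X (fresh u e (j + 2) τ goal d) a m)).2) :
    Inv u e j X a K τ goal d w (m + 1) a1 ρ c D own := by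
  have haa := hI.haa
  have ham := hI.ham
  have hw1 : ∀ i ∈ Finset.Ico a a1, 0 ≤ w i := by
    intro i hi; apply hw0; rw [Finset.mem_Ico] at hi ⊢; omega
  refine ⟨hI.haa, by omega, ?_, hI.hc, hI.hpre, ?_, ?_, ?_, hI.hnd, ?_, ?_, ?_, hI.o4⟩
  · rw [runA_succ u e X _ (by omega), hs, runA_succ u e X _ ham]
  · intro l h1 h2
    rcases Nat.lt_succ_iff_lt_or_eq.1 h2 with h | rfl
    · exact hI.hX l h1 h
    · exact hρ
  · intro l h1 h2; exact hI.hlen l (by omega) h2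
  · intro l h1 h2
    rcases Nat.lt_succ_iff_lt_or_eq.1 h2 with h | rfl
    · exact hI.hw l h1 h
    · rw [hwm, hs]
  · intro i h1 h2 n hn
    obtain ⟨h3, h4, h5⟩ := hI.o1 i h1 h2 n hn
    refine ⟨h3, h4, fun l h6 h7 => ?_⟩
    rcases Nat.lt_succ_iff_lt_or_eq.1 h7 with h | rfl
    · exact h5 l h6 h
    · exact (List.take_prefix _ _).trans hρ
  · intro n h1 h2
    exact ⟨(hI.o2 n h1 h2).1, (hI.o2 n h1 h2).2.trans (lev_sum_mono X w _ _ hw1 m)⟩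
  · exact ⟨hI.o3.1, hI.o3.2.trans (lev_sum_mono X w _ _ hw1 m)⟩

/-- advancing preserves the invariant -/
lemma Inv.advance {j : ℕ} {X : ℕ → Str} {a K : ℕ} {τ : Str} {goal : Dy} {d : ℕ} {w : ℕ → ℝ}
    {m a1 : ℕ} {ρ : Str} {c : ℕ} {D : Dy} {own : ℕ → ℕ}
    (hI : Inv u e j X a K τ goal d w m a1 ρ c D own)
    (hw0 : ∀ i ∈ Finset.Ico a m, 0 ≤ w i) (hmK : m < K)
    (hmono : ∀ l l', a ≤ l → l ≤ l' → l' < K → (X l).length ≤ (X l').length)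
    (hρ : ρ <+: X m) (hlt : ρ.length < (X m).length)
    (hsub1 : dv (u ρ) / 2 ^ (d + 1 + e) ≤ ∑ i ∈ Finset.Ico a1 m, w i)
    (hsub2 : ∑ i ∈ Finset.Ico a1 m, w i ≤ dv (u ρ) / 2 ^ (d + 1 + e) + 1 / 2 ^ (d + 1 + c))
    (hsub3 : j * (dv (u ρ) / 2 ^ (d + 1 + e)) ≤ ∑ i ∈ Finset.Ico a1 m, w i * lev X i m)
    (hs : step u e (X m) (runA u e X (fresh u e (j + 2) τ goal d) a m) =
      ((τ, goal, d, c + 1, D) :: fresh u e (j + 1) ((X m).take (ρ.length + 1))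
        (dshift (d + 1 + e) (u ((X m).take (ρ.length + 1)))) (d + 1 + (c + 1)), none))
    (hwm : w m = rw' (step u e (X m) (runA u e X (fresh u e (j + 2) τ goal d) a m)).2) :
    Inv u e j X a K τ goal d w (m + 1) (m + 1) ((X m).take (ρ.length + 1)) (c + 1) D
      (fun i => if i < a1 then own i else ρ.length + 1) := by
  have haa := hI.haa
  have ham := hI.ham
  have hwz : w m = 0 := by rw [hwm, hs]; rfl
  have hw1 : ∀ i ∈ Finset.Ico a a1, 0 ≤ w i := by
    intro i hi; apply hw0; rw [Finset.mem_Ico] at hi ⊢; omega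
  have hsplit : ∀ f : ℕ → ℝ, ∑ i ∈ Finset.Ico a (m + 1), f i =
      ∑ i ∈ Finset.Ico a a1, f i + ∑ i ∈ Finset.Ico a1 m, f i + f m := by
    intro f
    rw [Finset.sum_Ico_succ_top (by omega), Finset.sum_Ico_consecutive f haa ham]
  set ρ' := (X m).take (ρ.length + 1) with hρ'
  have hl' : ρ'.length = ρ.length + 1 := by rw [hρ', List.length_take]; omega
  have hρρ' : ρ <+: ρ' := prefix_take hρ (by omega)
  have htake : ∀ n, n ≤ ρ.length → ρ'.take n = ρ.take n := by
    intro n hn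
    obtain ⟨t, ht⟩ := hρρ'
    rw [← ht, List.take_append_of_le_length hn]
  have hlow : ∀ (f : ℕ → ℝ) (n : ℕ), (∀ i ∈ Finset.Ico a m, 0 ≤ f i) → f m = 0 → 
      (∑ i ∈ Finset.Ico a a1, if own i = n then f i else 0) +
      (if n = ρ.length + 1 then ∑ i ∈ Finset.Ico a1 m, f i else 0) ≤
      ∑ i ∈ Finset.Ico a (m + 1), if (if i < a1 then own i else ρ.length + 1) = n then f i else 0 := by
    intro f n hf hfm
    rw [hsplit, hfm]
    have e1 : (∑ i ∈ Finset.Ico a a1, if own i = n then f i else 0) = 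
      (∑ i ∈ Finset.Ico a a1, if (if i < a1 then own i else ρ.length + 1) = n then f i else 0) := by
      apply Finset.sum_congr rfl
      intro i hi
      rw [Finset.mem_Ico] at hi
      simp [hi.2]
    have e2 : (if n = ρ.length + 1 then ∑ i ∈ Finset.Ico a1 m, f i else 0) ≤
      (∑ i ∈ Finset.Ico a1 m, if (if i < a1 then own i else ρ.length + 1) = n then f i else 0) := by
      split_ifs with hn
      · apply le_of_eq
        apply Finset.sum_congr rfl
        intro i hi
        rw [Finset.mem_Ico] at hi
        simp [not_lt.2 hi.1, hn]
      · apply Finset.sum_nonneg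
        intro i hi
        have := hf i (by rw [Finset.mem_Ico] at hi ⊢; omega)
        split_ifs <;> simp [this]
    have e3 : (if (if m < a1 then own m else ρ.length + 1) = n then (0:ℝ) else 0) = 0 := by split_ifs <;> rfl
    rw [e3]
    linarith
  have hwl0 : ∀ i ∈ Finset.Ico a m, 0 ≤ w i * lev X i (m + 1) := fun i hi =>
    mul_nonneg (hw0 i hi) (by positivity)
  refine ⟨by omega, le_rfl, ?_, by omega, hI.hpre.trans hρρ', ?_, ?_, ?_, hI.hnd, ?_, ?_, ?_, ?_⟩
  · rw [runA_succ u e X _ (by omega), hs, runA_self]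
  · intro l h1 h2; omega
  · intro l h1 h2
    have := hmono m l (by omega) (by omega) h2
    omega
  · intro l h1 h2; omega
  · intro i h1 h2 n hn
    beta_reduce at hn
    split_ifs at hn with hi
    · obtain ⟨h3, h4, h5⟩ := hI.o1 i h1 hi n hn
      refine ⟨h3, by omega, fun l h6 h7 => ?_⟩
      rw [htake n h4.le]
      rcases Nat.lt_succ_iff_lt_or_eq.1 h7 with h | rfl
      · exact h5 l h6 h
      · exact (List.take_prefix _ _).trans hρ
    · have hn' : n = ρ.length := by omega
      subst hn'
      refine ⟨hI.hpre.length_le, by omega, fun l h6 h7 => ?_⟩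
      rw [htake _ le_rfl, List.take_length]
      rcases Nat.lt_succ_iff_lt_or_eq.1 h7 with h | rfl
      · exact hI.hX l (by omega) h
      · exact hρ
  · intro n h1 h2
    rw [htake n (by omega)]
    have A := hlow w (n + 1) hw0 hwz
    have B := hlow (fun i => w i * lev X i (m + 1)) (n + 1) hwl0 (by simp [hwz])
    rcases Nat.lt_or_ge n ρ.length with h | h
    · rw [if_neg (by omega), add_zero] at A B
      exact ⟨(hI.o2 n h1 h).1.trans A,
        ((hI.o2 n h1 h).2.trans (lev_sum_mono X w _ _ hw1 m)).trans B⟩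
    · have hn' : n = ρ.length := by omega
      subst hn'
      rw [if_pos rfl] at A B
      rw [List.take_length]
      have hz : 0 ≤ (∑ i ∈ Finset.Ico a a1, if own i = ρ.length + 1 then w i else 0) := by
        apply Finset.sum_nonneg; intro i hi; have := hw1 i hi; split_ifs <;> simp [this]
      have hz' : 0 ≤ (∑ i ∈ Finset.Ico a a1, if own i = ρ.length + 1 then w i * lev X i (m + 1) else 0) := by
        apply Finset.sum_nonneg; intro i hi
        have := mul_nonneg (hw1 i hi) (Nat.cast_nonneg (α := ℝ) (lev X i (m + 1)))
        split_ifs <;> simp [this]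
      have C : ∑ i ∈ Finset.Ico a1 m, w i * lev X i m ≤ ∑ i ∈ Finset.Ico a1 m, w i * lev X i (m + 1) := by
        have := lev_sum_mono X w (Finset.Ico a1 m) (fun _ => True) (by
          intro i hi; apply hw0; rw [Finset.mem_Ico] at hi ⊢; omega) m
        simpa using this
      exact ⟨by linarith, by linarith⟩
  · have A := hlow w 0 hw0 hwz
    have B := hlow (fun i => w i * lev X i (m + 1)) 0 hwl0 (by simp [hwz])
    rw [if_neg (by omega), add_zero] at A B
    exact ⟨hI.o3.1.trans A, (hI.o3.2.trans (lev_sum_mono X w _ _ hw1 m)).trans B⟩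
  · rw [hsplit, hwz, hl', Finset.sum_Ico_succ_top hI.hpre.length_le]
    have e1 : ∑ n ∈ Finset.Ico τ.length ρ.length, dv (u (ρ'.take n)) / 2 ^ (d + 1 + e) =
      ∑ n ∈ Finset.Ico τ.length ρ.length, dv (u (ρ.take n)) / 2 ^ (d + 1 + e) := by
      apply Finset.sum_congr rfl
      intro n hn; rw [Finset.mem_Ico] at hn; rw [htake n hn.2.le]
    rw [e1, htake _ le_rfl, List.take_length]
    have h4 := hI.o4
    have h6 : (1:ℝ) / 2 ^ (d + (c + 1)) + 1 / 2 ^ (d + 1 + c) = 1 / 2 ^ (d + c) := by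
      rw [show d + (c + 1) = d + c + 1 by ring, show d + 1 + c = d + c + 1 by ring, pow_succ]
      field_simp; norm_num
    linarith

end
end KT

namespace KT
section
variable (u : Str → Dy) (e : ℕ)

/-- the amount achieved when popping -/
def popD (a : ℕ) (ρ X : Str) (D D' : Dy) : Dy :=
  dadd D (dadd (gain u a ρ (lcp ρ X) ρ.length) D')

lemma take_prefix_mono {ρ : Str} {m n : ℕ} (h : m ≤ n) : ρ.take m <+: ρ.take n := by
  rw [List.prefix_take_iff]; exact ⟨List.take_prefix _ _, by rw [List.length_take]; omega⟩

lemma take_prefix_iff {ρ X : Str} {n : ℕ} (hn : n ≤ ρ.length) : ρ.take n <+: X ↔ X.take n = ρ.take n := by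
  rw [List.prefix_iff_eq_take, List.length_take, min_eq_left hn, eq_comm]

/-- popping: the sums -/
lemma Inv.pop_sums {j : ℕ} {X : ℕ → Str} {a K : ℕ} {τ : Str} {goal : Dy} {d : ℕ} {w : ℕ → ℝ}
    {m a1 : ℕ} {ρ : Str} {c : ℕ} {D : Dy} {own : ℕ → ℕ} {D' : Dy}
    (hI : Inv u e j X a K τ goal d w m a1 ρ c D own)
    (hw0 : ∀ i ∈ Finset.Ico a m, 0 ≤ w i)
    (hτ : τ <+: X m)
    (hρ : ¬ ρ <+: X m)
    (hwz : w m = 0)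
    (hsub1 : dv D' ≤ ∑ i ∈ Finset.Ico a1 m, w i)
    (hsub3 : j * dv D' ≤ ∑ i ∈ Finset.Ico a1 m, w i * lev X i m) :
    dv (popD u (d + 1 + e) ρ (X m) D D') ≤ (∑ i ∈ Finset.Ico a (m + 1),
      if (if i < a1 ∧ own i ≤ lcp ρ (X m) + 1 then own i else 0) = 0 then w i else 0) ∧
    (j + 1) * dv (popD u (d + 1 + e) ρ (X m) D D') ≤ (∑ i ∈ Finset.Ico a (m + 1),
      if (if i < a1 ∧ own i ≤ lcp ρ (X m) + 1 then own i else 0) = 0 then w i * lev X i (m + 1) else 0) := by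
  have haa := hI.haa
  have ham := hI.ham
  set h := lcp ρ (X m) with hh
  have hτh : τ.length ≤ h := by
    apply le_lcp hI.hpre.length_le
    rw [← List.prefix_iff_eq_take.1 hτ, ← List.prefix_iff_eq_take.1 hI.hpre]
  have hw1 : ∀ i ∈ Finset.Ico a a1, 0 ≤ w i := by
    intro i hi; apply hw0; rw [Finset.mem_Ico] at hi ⊢; omega
  have hsplit : ∀ f : ℕ → ℝ, ∑ i ∈ Finset.Ico a (m + 1), f i =
      ∑ i ∈ Finset.Ico a a1, f i + ∑ i ∈ Finset.Ico a1 m, f i + f m := by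
    intro f
    rw [Finset.sum_Ico_succ_top (by omega), Finset.sum_Ico_consecutive f haa ham]
  have hown : ∀ i ∈ Finset.Ico a a1, own i ≤ ρ.length := by
    intro i hi
    rw [Finset.mem_Ico] at hi
    rcases ho : own i with _ | n
    · omega
    · have := (hI.o1 i hi.1 hi.2 n ho).2.1; omega
  have key : ∀ f : ℕ → ℝ, f m = 0 →
      (∑ i ∈ Finset.Ico a (m + 1), if (if i < a1 ∧ own i ≤ h + 1 then own i else 0) = 0 then f i else 0)
      = (∑ i ∈ Finset.Ico a a1, if own i = 0 then f i else 0) +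
        (∑ n ∈ Finset.range ρ.length, if h < n then (∑ i ∈ Finset.Ico a a1, if own i = n + 1 then f i else 0) else 0) +
        ∑ i ∈ Finset.Ico a1 m, f i := by
    intro f hfm
    rw [← fiber_sum _ _ _ _ _ hown, hsplit, hfm]
    have e3 : (if (if m < a1 ∧ own m ≤ h + 1 then own m else 0) = 0 then (0:ℝ) else 0) = 0 := by
      split_ifs <;> rfl
    rw [e3, add_zero]
    congr 1
    · apply Finset.sum_congr rfl
      intro i hi
      rw [Finset.mem_Ico] at hi
      congr 1
      simp only [hi.2, true_and, eq_iff_iff]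
      split_ifs with h1
      · constructor
        · intro h2; exact Or.inl h2
        · intro h2; rcases h2 with h2 | h2 <;> omega
      · simp; omega
    · apply Finset.sum_congr rfl
      intro i hi
      rw [Finset.mem_Ico] at hi
      simp [not_lt.2 hi.1]
  have hpv : dv (popD u (d + 1 + e) ρ (X m) D D') = dv D +
      (∑ n ∈ Finset.range ρ.length, if h < n then dv (u (ρ.take n)) / 2 ^ (d + 1 + e) else 0) + dv D' := by
    rw [popD, dv_dadd, dv_dadd, dv_gain]; ring
  constructor
  · rw [hpv, key w hwz]
    have : (∑ n ∈ Finset.range ρ.length, if h < n then dv (u (ρ.take n)) / 2 ^ (d + 1 + e) else 0) ≤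
      (∑ n ∈ Finset.range ρ.length, if h < n then (∑ i ∈ Finset.Ico a a1, if own i = n + 1 then w i else 0) else 0) := by
      apply Finset.sum_le_sum
      intro n hn
      rw [Finset.mem_range] at hn
      split_ifs with h1
      · exact (hI.o2 n (by omega) hn).1
      · rfl
    have := hI.o3.1
    linarith
  · rw [hpv, key (fun i => w i * lev X i (m + 1)) (by simp [hwz])]
    have A : (∑ n ∈ Finset.range ρ.length, (j + 1) * if h < n then dv (u (ρ.take n)) / 2 ^ (d + 1 + e) else 0) ≤
      (∑ n ∈ Finset.range ρ.length, if h < n then (∑ i ∈ Finset.Ico a a1, if own i = n + 1 then w i * lev X i (m + 1) else 0) else 0) := by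
      apply Finset.sum_le_sum
      intro n hn
      rw [Finset.mem_range] at hn
      split_ifs with h1
      · obtain ⟨o1, o2⟩ := hI.o2 n (by omega) hn
        have : (∑ i ∈ Finset.Ico a a1, if own i = n + 1 then w i else 0) +
          (∑ i ∈ Finset.Ico a a1, if own i = n + 1 then w i * lev X i m else 0) ≤
          (∑ i ∈ Finset.Ico a a1, if own i = n + 1 then w i * lev X i (m + 1) else 0) := by
          rw [← Finset.sum_add_distrib]
          apply Finset.sum_le_sum
          intro i hi
          have hwi := hw1 i hi
          rw [Finset.mem_Ico] at hi
          split_ifs with ho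
          · have hl := lev_succ X (i := i) (m := m) (ρ.take n) (by omega)
              (hI.o1 i hi.1 hi.2 n ho).2.2 (by
                rw [take_prefix_iff hn.le]
                intro hc
                have := le_lcp hn.le hc
                omega)
            have hl' : (lev X i m : ℝ) + 1 ≤ lev X i (m + 1) := by exact_mod_cast hl
            nlinarith
          · simp
        linarith
      · simp
    have B : (j + 1) * dv D' ≤ ∑ i ∈ Finset.Ico a1 m, w i * lev X i (m + 1) := by
      have : ∑ i ∈ Finset.Ico a1 m, w i + ∑ i ∈ Finset.Ico a1 m, w i * lev X i m ≤
          ∑ i ∈ Finset.Ico a1 m, w i * lev X i (m + 1) := by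
        rw [← Finset.sum_add_distrib]
        apply Finset.sum_le_sum
        intro i hi
        have hwi := hw0 i (by rw [Finset.mem_Ico] at hi ⊢; omega)
        rw [Finset.mem_Ico] at hi
        have hl := lev_succ X (i := i) (m := m) ρ (by omega)
              (fun l h1 h2 => hI.hX l (by omega) h2) hρ
        have hl' : (lev X i m : ℝ) + 1 ≤ lev X i (m + 1) := by exact_mod_cast hl
        nlinarith
      linarith
    have C := hI.o3.2.trans (lev_sum_mono X w _ _ hw1 m)
    rw [← Finset.mul_sum] at A
    linarith

lemma Inv.pop {j : ℕ} {X : ℕ → Str} {a K : ℕ} {τ : Str} {goal : Dy} {d : ℕ} {w : ℕ → ℝ}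
    {m a1 : ℕ} {ρ : Str} {c : ℕ} {D : Dy} {own : ℕ → ℕ} {D' : Dy}
    (hI : Inv u e j X a K τ goal d w m a1 ρ c D own)
    (hw0 : ∀ i ∈ Finset.Ico a m, 0 ≤ w i) (hmK : m < K)
    (hmono : ∀ l l', a ≤ l → l ≤ l' → l' < K → (X l).length ≤ (X l').length)
    (hτ : τ <+: X m)
    (hρ : ¬ ρ <+: X m)
    (hwz : w m = 0)
    (hsub1 : dv D' ≤ ∑ i ∈ Finset.Ico a1 m, w i)
    (hsub2 : ∑ i ∈ Finset.Ico a1 m, w i ≤ dv D' + 1 / 2 ^ (d + 1 + c))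
    (hsub3 : j * dv D' ≤ ∑ i ∈ Finset.Ico a1 m, w i * lev X i m)
    (hnd : dv (popD u (d + 1 + e) ρ (X m) D D') < dv goal)
    (hs : step u e (X m) (runA u e X (fresh u e (j + 2) τ goal d) a m) =
      ((τ, goal, d, c + 1, popD u (d + 1 + e) ρ (X m) D D') ::
        fresh u e (j + 1) ((X m).take (lcp ρ (X m) + 1))
        (dshift (d + 1 + e) (u ((X m).take (lcp ρ (X m) + 1)))) (d + 1 + (c + 1)), none)) :
    Inv u e j X a K τ goal d w (m + 1) (m + 1) ((X m).take (lcp ρ (X m) + 1)) (c + 1)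
      (popD u (d + 1 + e) ρ (X m) D D')
      (fun i => if i < a1 ∧ own i ≤ lcp ρ (X m) + 1 then own i else 0) := by
  have hps := hI.pop_sums u e hw0 hτ hρ hwz hsub1 hsub3
  have haa := hI.haa
  have ham := hI.ham
  set h := lcp ρ (X m) with hh
  have hτh : τ.length ≤ h := by
    apply le_lcp hI.hpre.length_le
    rw [← List.prefix_iff_eq_take.1 hτ, ← List.prefix_iff_eq_take.1 hI.hpre]
  have hlt := lcp_take ρ (X m)
  rw [← hh] at hlt
  have hhρ : h < ρ.length := by
    rcases (lcp_le ρ (X m)).lt_or_eq with h1 | h1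
    · exact h1
    · exfalso; apply hρ
      rw [← hh] at h1
      rw [h1, List.take_length] at hlt
      rw [← hlt]; exact List.take_prefix _ _
  have hρX := hI.hlen m le_rfl hmK
  have hw1 : ∀ i ∈ Finset.Ico a a1, 0 ≤ w i := by
    intro i hi; apply hw0; rw [Finset.mem_Ico] at hi ⊢; omega
  have hsplit : ∀ f : ℕ → ℝ, ∑ i ∈ Finset.Ico a (m + 1), f i =
      ∑ i ∈ Finset.Ico a a1, f i + ∑ i ∈ Finset.Ico a1 m, f i + f m := by
    intro f
    rw [Finset.sum_Ico_succ_top (by omega), Finset.sum_Ico_consecutive f haa ham]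
  set ρ' := (X m).take (h + 1) with hρ'
  have hl' : ρ'.length = h + 1 := by rw [hρ', List.length_take]; omega
  have htake : ∀ n, n ≤ h → ρ'.take n = ρ.take n := by
    intro n hn
    rw [hρ', List.take_take, min_eq_left (by omega), ← min_eq_left hn, ← List.take_take, hlt,
      List.take_take]
  have hlow : ∀ (f : ℕ → ℝ) (n : ℕ), (∀ i ∈ Finset.Ico a m, 0 ≤ f i) → f m = 0 → n ≤ h →
      (∑ i ∈ Finset.Ico a a1, if own i = n + 1 then f i else 0) ≤
      ∑ i ∈ Finset.Ico a (m + 1), if (if i < a1 ∧ own i ≤ h + 1 then own i else 0) = n + 1 then f i else 0 := by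
    intro f n hf hfm hn
    rw [hsplit, hfm]
    have e1 : (∑ i ∈ Finset.Ico a a1, if own i = n + 1 then f i else 0) = 
      (∑ i ∈ Finset.Ico a a1, if (if i < a1 ∧ own i ≤ h + 1 then own i else 0) = n + 1 then f i else 0) := by
      apply Finset.sum_congr rfl
      intro i hi
      rw [Finset.mem_Ico] at hi
      congr 1
      simp only [hi.2, true_and, eq_iff_iff]
      split_ifs with h1
      · rfl
      · simp; omega
    have e2 : 0 ≤
      (∑ i ∈ Finset.Ico a1 m, if (if i < a1 ∧ own i ≤ h + 1 then own i else 0) = n + 1 then f i else 0) := by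
      apply Finset.sum_nonneg
      intro i hi
      have := hf i (by rw [Finset.mem_Ico] at hi ⊢; omega)
      split_ifs <;> simp [this]
    have e3 : (if (if m < a1 ∧ own m ≤ h + 1 then own m else 0) = n + 1 then (0:ℝ) else 0) = 0 := by
      split_ifs <;> rfl
    rw [e3]
    linarith
  have hwl0 : ∀ i ∈ Finset.Ico a m, 0 ≤ w i * lev X i (m + 1) := fun i hi =>
    mul_nonneg (hw0 i hi) (by positivity)
  refine ⟨by omega, le_rfl, ?_, by omega, ?_, ?_, ?_, ?_, hnd, ?_, ?_, hps, ?_⟩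
  · rw [runA_succ u e X _ (by omega), hs, runA_self]
  · exact prefix_take hτ (by omega)
  · intro l h1 h2; omega
  · intro l h1 h2
    have := hmono m l (by omega) (by omega) h2
    omega
  · intro l h1 h2; omega
  · intro i h1 h2 n hn
    beta_reduce at hn
    split_ifs at hn with hi
    · obtain ⟨h3, h4, h5⟩ := hI.o1 i h1 hi.1 n hn
      refine ⟨h3, by omega, fun l h6 h7 => ?_⟩
      rw [htake n (by omega)]
      rcases Nat.lt_succ_iff_lt_or_eq.1 h7 with h8 | rfl
      · exact h5 l h6 h8
      · refine (take_prefix_mono (n := h) (by omega)).trans ?_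
        rw [← hlt]; exact List.take_prefix _ _
  · intro n h1 h2
    rw [htake n (by omega)]
    have A := hlow w n hw0 hwz (by omega)
    have B := hlow (fun i => w i * lev X i (m + 1)) n hwl0 (by simp [hwz]) (by omega)
    have C := hI.o2 n h1 (by omega)
    exact ⟨C.1.trans A, (C.2.trans (lev_sum_mono X w _ _ hw1 m)).trans B⟩
  · rw [hsplit, hwz, hl']
    have hpv : dv (popD u (d + 1 + e) ρ (X m) D D') = dv D +
        (∑ n ∈ Finset.range ρ.length, if h < n then dv (u (ρ.take n)) / 2 ^ (d + 1 + e) else 0) + dv D' := by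
      rw [popD, dv_dadd, dv_dadd, dv_gain]; ring
    rw [hpv]
    have e1 : ∑ n ∈ Finset.Ico τ.length (h + 1), dv (u (ρ'.take n)) / 2 ^ (d + 1 + e) =
      ∑ n ∈ Finset.Ico τ.length (h + 1), dv (u (ρ.take n)) / 2 ^ (d + 1 + e) := by
      apply Finset.sum_congr rfl
      intro n hn; rw [Finset.mem_Ico] at hn; rw [htake n (by omega)]
    have e2 : (∑ n ∈ Finset.range ρ.length, if h < n then dv (u (ρ.take n)) / 2 ^ (d + 1 + e) else 0) =
        ∑ n ∈ Finset.Ico (h + 1) ρ.length, dv (u (ρ.take n)) / 2 ^ (d + 1 + e) := by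
      rw [← Finset.sum_filter]
      apply Finset.sum_congr _ (fun _ _ => rfl)
      ext n; simp; omega
    have e3 := Finset.sum_Ico_consecutive (fun n => dv (u (ρ.take n)) / 2 ^ (d + 1 + e))
      (show τ.length ≤ h + 1 by omega) (show h + 1 ≤ ρ.length by omega)
    rw [e1, e2]
    have h4 := hI.o4
    have h6 : (1:ℝ) / 2 ^ (d + (c + 1)) + 1 / 2 ^ (d + 1 + c) = 1 / 2 ^ (d + c) := by
      rw [show d + (c + 1) = d + c + 1 by ring, show d + 1 + c = d + c + 1 by ring, pow_succ]
      field_simp; norm_num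
    beta_reduce at e3
    linarith

end
end KT

namespace KT
section
variable (u : Str → Dy) (e : ℕ)

lemma step_sub (X : Str) (f g : Frame) (rest : List Frame) (hf : ¬ done f) (hg : g.1 <+: X)
    (h : ¬ (done g ∧ g.1.length < X.length)) :
    step u e X (f :: g :: rest) = (f :: (step u e X (g :: rest)).1, (step u e X (g :: rest)).2) := by
  rw [step_cons]
  unfold act
  rw [if_neg hf]
  show actG u e X f (g :: rest) _ g = _
  unfold actG
  rw [if_pos hg]
  by_cases hd : done g
  · rw [if_pos hd, if_neg (fun h1 => h ⟨hd, h1⟩), step_done u e _ _ _ hd]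
  · rw [if_neg hd]

lemma step_adv (X : Str) (f g : Frame) (rest : List Frame) (hf : ¬ done f) (hg : g.1 <+: X)
    (h1 : done g) (h2 : g.1.length < X.length) :
    step u e X (f :: g :: rest) =
      (restart u e (X.take (g.1.length + 1)) f f.2.2.2.2 (rest.length + 1), none) := by
  rw [step_cons]
  unfold act
  rw [if_neg hf]
  show actG u e X f (g :: rest) _ g = _
  unfold actG
  rw [if_pos hg, if_pos h1, if_pos h2]
  rfl

lemma step_pop (X : Str) (f g : Frame) (rest : List Frame) (hf : ¬ done f) (hg : ¬ g.1 <+: X) :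
    step u e X (f :: g :: rest) =
      (restart u e (X.take (lcp g.1 X + 1)) f
        (popD u (f.2.2.1 + 1 + e) g.1 X f.2.2.2.2 g.2.2.2.2) (rest.length + 1), none) := by
  rw [step_cons]
  unfold act
  rw [if_neg hf]
  show actG u e X f (g :: rest) _ g = _
  unfold actG
  rw [if_neg hg]
  rfl

/-- Hypotheses on an environment for a run. -/
structure Env (X : ℕ → Str) (a K : ℕ) (τ : Str) : Prop where
  pre : ∀ l, a ≤ l → l < K → τ <+: X l
  mono : ∀ l l', a ≤ l → l ≤ l' → l' < K → (X l).length ≤ (X l').length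

variable (hu1 : ∀ ρ, (u ρ).1 ≤ 1)
  (hu : ∀ ρ : Str, ∑ k ∈ Finset.range (ρ.length + 1), dv (u (ρ.take k)) ≤ 2 ^ e)

lemma Inv.sub (hu1 : ∀ ρ, (u ρ).1 ≤ 1) {j : ℕ} (hj : ContractAll u e j) {X : ℕ → Str} {a K : ℕ} {τ : Str} {goal : Dy}
    {d : ℕ} {w : ℕ → ℝ} {m a1 : ℕ} {ρ : Str} {c : ℕ} {D : Dy} {own : ℕ → ℕ}
    (hI : Inv u e j X a K τ goal d w m a1 ρ c D own) (hmK : m ≤ K)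
    (hmono : ∀ l l', a ≤ l → l ≤ l' → l' < K → (X l).length ≤ (X l').length) :
    Contract j X a1 ρ (dshift (d + 1 + e) (u ρ)) (d + 1 + c) w m (runA u e X
      (fresh u e (j + 1) ρ (dshift (d + 1 + e) (u ρ)) (d + 1 + c)) a1 m) :=
  hj X a1 m ρ (dshift (d + 1 + e) (u ρ)) (d + 1 + c) w (hu1 ρ) hI.hX
    (fun l l' h1 h2 h3 => hmono l l' (hI.haa.trans h1) h2 (by omega)) hI.hw m hI.ham le_rfl

theorem run_inv (hu1 : ∀ ρ, (u ρ).1 ≤ 1)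
    (hu : ∀ ρ : Str, ∑ k ∈ Finset.range (ρ.length + 1), dv (u (ρ.take k)) ≤ 2 ^ e) {j : ℕ} (hj : ContractAll u e j) {X : ℕ → Str} {a K : ℕ} {τ : Str} {goal : Dy}
    {d : ℕ} {w : ℕ → ℝ} (hE : Env X a K τ) 
    (hw : ∀ m, a ≤ m → m < K →
      w m = rw' (step u e (X m) (runA u e X (fresh u e (j + 2) τ goal d) a m)).2) :
    ∀ m, a ≤ m → m ≤ K →
      Contract (j + 1) X a τ goal d w m (runA u e X (fresh u e (j + 2) τ goal d) a m) ∧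
      ((∃ f rest, runA u e X (fresh u e (j + 2) τ goal d) a m = f :: rest ∧ done f) ∨
      ∃ a1 ρ c D own, Inv u e j X a K τ goal d w m a1 ρ c D own) := by
  have hw0 : ∀ m ≤ K, ∀ i ∈ Finset.Ico a m, 0 ≤ w i := by
    intro m hm i hi
    rw [Finset.mem_Ico] at hi
    rw [hw i (by omega) (by omega)]; exact rw'_nonneg _
  have fin : ∀ m ≤ K, ∀ a1 ρ c D own, Inv u e j X a K τ goal d w m a1 ρ c D own →
      Contract (j + 1) X a τ goal d w m (runA u e X (fresh u e (j + 2) τ goal d) a m) := by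
    intro m hm a1 ρ c D own hI
    refine (hI.contract u e hu (hw0 m hm) ?_).2
    obtain ⟨c', D', r', h1, h2, h3, h4⟩ := hI.sub u e hu1 hj hm hE.mono
    refine h3.trans ?_
    rw [← dv_dshift]
    gcongr
    exact min_le_right _ _
  intro m ham
  induction m, ham using Nat.le_induction with
  | base =>
    intro _
    by_cases hd : dv goal ≤ 0
    · have hz : dv goal = 0 := le_antisymm hd (dv_nonneg _)
      constructor
      · refine ⟨1, (0, 0), _, by rw [runA_self, fresh_succ], by simp, ?_, by simp⟩
        simp [hz]
      · left
        refine ⟨_, _, by rw [runA_self, fresh_succ], ?_⟩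
        rw [done_iff]; simpa using hd
    · have hI : Inv u e j X a K τ goal d w a a τ 1 (0, 0) (fun _ => 0) := by
        refine ⟨le_rfl, le_rfl, ?_, le_rfl, List.prefix_rfl, ?_, ?_, ?_, ?_, ?_, ?_, ?_, ?_⟩
        · rw [runA_self, runA_self, fresh_succ]
        · intro l h1 h2; omega
        · intro l h1 h2; exact (hE.pre l h1 h2).length_le
        · intro l h1 h2; omega
        · simpa using hd
        · intro i h1 h2; omega
        · intro n h1 h2; omega
        · simp
        · simp
      exact ⟨fin a (by omega) _ _ _ _ _ hI, Or.inr ⟨_, _, _, _, _, hI⟩⟩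
  | succ m ham ih =>
    intro hmK
    obtain ⟨hC, hcase⟩ := ih (by omega)
    have hwm := hw m ham (by omega)
    rcases hcase with ⟨f, rest, hf, hd⟩ | ⟨a1, ρ, c, D, own, hI⟩
    · rw [runA_succ u e X _ ham]
      rw [hf] at hC hwm ⊢
      refine ⟨contract_frozen u e ham hwm (hw0 m (by omega)) hd hC, Or.inl ⟨f, rest, ?_, hd⟩⟩
      rw [step_done u e _ _ _ hd]
    · suffices h : (∃ f rest, runA u e X (fresh u e (j + 2) τ goal d) a (m + 1) = f :: rest ∧ done f ∧
          Contract (j + 1) X a τ goal d w (m + 1) (f :: rest)) ∨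
          ∃ a1 ρ c D own, Inv u e j X a K τ goal d w (m + 1) a1 ρ c D own by
        rcases h with ⟨f, rest, h1, h2, h3⟩ | ⟨a1, ρ, c, D, own, h⟩
        · rw [h1]; exact ⟨h3, Or.inl ⟨f, rest, rfl, h2⟩⟩
        · exact ⟨fin _ hmK _ _ _ _ _ h, Or.inr ⟨_, _, _, _, _, h⟩⟩
      obtain ⟨c', D', r', h1, h2, h3, h4⟩ := hI.sub u e hu1 hj (by omega) hE.mono
      have hnd : ¬ done (τ, goal, d, c, D) := by
        rw [done_iff, not_le]; exact hI.hnd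
      have hlen : r'.length + 1 = j + 1 := by
        have := runA_length u e X
          (fresh u e (j + 1) ρ (dshift (d + 1 + e) (u ρ)) (d + 1 + c)) hI.ham
        rw [h1, fresh_length] at this
        simpa using this
      by_cases hρ : ρ <+: X m
      · by_cases hdl : done (ρ, dshift (d + 1 + e) (u ρ), d + 1 + c, c', D') ∧ ρ.length < (X m).length
        · right
          refine ⟨_, _, _, _, _, hI.advance u e (hw0 m (by omega)) (by omega) hE.mono hρ hdl.2
            ?_ ?_ ?_ ?_ hwm⟩
          · have := hdl.1
            rw [done_iff] at this
            simp only [dv_dshift] at this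
            linarith
          · rw [← dv_dshift]
            refine h3.trans ?_
            gcongr
            exact min_le_right _ _
          · have := hdl.1
            rw [done_iff] at this
            simp only [dv_dshift] at this
            refine le_trans ?_ h4
            gcongr
          · rw [hI.hst, h1, step_adv u e _ _ _ _ hnd hρ hdl.1 hdl.2, hlen]
            rfl
        · right
          refine ⟨_, _, _, _, _, hI.substep u e (hw0 m (by omega)) hρ ?_ hwm⟩
          rw [hI.hst, h1, step_sub u e _ _ _ _ hnd hρ hdl]
      · have hs : step u e (X m) (runA u e X (fresh u e (j + 2) τ goal d) a m) =
            ((τ, goal, d, c + 1, popD u (d + 1 + e) ρ (X m) D D') ::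
              fresh u e (j + 1) ((X m).take (lcp ρ (X m) + 1))
              (dshift (d + 1 + e) (u ((X m).take (lcp ρ (X m) + 1)))) (d + 1 + (c + 1)), none) := by
          rw [hI.hst, h1, step_pop u e _ _ _ _ hnd hρ, hlen]
          rfl
        have hwz : w m = 0 := by rw [hwm, hs]; rfl
        have hτ := hE.pre m ham (by omega)
        by_cases hnd' : dv goal ≤ dv (popD u (d + 1 + e) ρ (X m) D D')
        · left
          refine ⟨_, _, by rw [runA_succ u e X _ ham, hs], by rw [done_iff]; exact hnd', ?_⟩
          obtain ⟨p1, p2⟩ := hI.pop_sums u e (hw0 m (by omega)) hτ hρ hwz h2 h4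
          have hsum := (hI.contract u e hu (hw0 m (by omega)) (by
            rw [← dv_dshift]
            refine h3.trans ?_
            gcongr
            exact min_le_right _ _)).1
          refine ⟨_, _, _, rfl, ?_, ?_, ?_⟩
          · refine p1.trans ?_
            apply Finset.sum_le_sum
            intro i hi
            have := hw0 (m + 1) hmK i hi
            split_ifs <;> simp [this]
          · rw [Finset.sum_Ico_succ_top ham, hwz, min_eq_right hnd']
            have := hI.hnd
            linarith
          · push_cast
            refine p2.trans ?_
            apply Finset.sum_le_sum
            intro i hi
            have := mul_nonneg (hw0 (m + 1) hmK i hi) (Nat.cast_nonneg (α := ℝ) (lev X i (m + 1)))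
            split_ifs <;> simp [this]
        · right
          refine ⟨_, _, _, _, _, hI.pop u e (hw0 m (by omega)) (by omega) hE.mono hτ hρ hwz h2
            ?_ h4 (by linarith) hs⟩
          refine h3.trans ?_
          gcongr
          exact min_le_left _ _

theorem contract_all (hu1 : ∀ ρ, (u ρ).1 ≤ 1)
    (hu : ∀ ρ : Str, ∑ k ∈ Finset.range (ρ.length + 1), dv (u (ρ.take k)) ≤ 2 ^ e) (j : ℕ) : ContractAll u e j := by
  induction j with
  | zero =>
    intro X a K τ goal d w hg h1 h2 h3 m h4 h5
    exact contract_zero u e X a K τ goal d w hg h3 m h4 h5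
  | succ j ih =>
    intro X a K τ goal d w hg h1 h2 h3 m h4 h5
    exact (run_inv u e hu1 hu ih ⟨h1, h2⟩ h3 m h4 h5).1

end
end KT

namespace KT

lemma re_exists {α : Type*} [Primcodable α] {p : α → ℕ → Bool} (hp : Computable₂ p) :
    REPred (fun a => ∃ k, p a k = true) := by
  have h := (Partrec.rfind (p := fun a n => Part.some (p a n)) hp.partrec₂).dom_re
  refine h.of_eq fun a => ?_
  refine Nat.rfind_dom.trans ?_
  constructor
  · rintro ⟨n, h1, _⟩; exact ⟨n, (Part.mem_some_iff.1 h1).symm⟩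
  · rintro ⟨n, h1⟩; exact ⟨n, Part.mem_some_iff.2 h1.symm, fun {m} _ => trivial⟩

lemma strPrefix_length (A : ℕ → Bool) (n : ℕ) : (strPrefix A n).length = n := by simp [strPrefix]

lemma strPrefix_take (A : ℕ → Bool) {m n : ℕ} (h : m ≤ n) :
    (strPrefix A n).take m = strPrefix A m := by
  simp [strPrefix, ← List.map_take, List.take_range, min_eq_left h]

lemma primrecRel_prefix : PrimrecRel (fun a b : Str => a <+: b) := by
  have : PrimrecRel (fun a b : Str => a = b.take a.length) := by
    apply Primrec.eq.comp₂ Primrec₂.left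
    exact (Primrec.list_take.comp (Primrec.list_length.comp Primrec.fst) Primrec.snd)
  exact this.of_eq (fun a b => List.prefix_iff_eq_take.symm)

section
variable (u : Str → Dy) (e : ℕ)

structure GoodX (A : ℕ → Bool) (X : ℕ → Str) : Prop where
  mono : ∀ l l', l ≤ l' → (X l).length ≤ (X l').length
  conv : ∀ n, ∃ m0, ∀ m, m0 ≤ m → (X m).take n = strPrefix A n
  comp : Computable X

def SuccLev (A : ℕ → Bool) (j : ℕ) : Prop :=
  ∀ X, GoodX A X → ∀ a τ goal d, goal.1 ≤ 1 → (∀ l, a ≤ l → τ <+: X l) →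
    ∃ m, a ≤ m ∧ ∃ f rest, runA u e X (fresh u e (j + 1) τ goal d) a m = f :: rest ∧ done f

def Cover (A : ℕ → Bool) : Prop :=
  ∃ G : Str → Prop, REPred G ∧ (∀ n, G (strPrefix A n)) ∧
    ∃ B : ℝ, ∀ F : Finset Str, (∀ ρ ∈ F, G ρ) → ∑ ρ ∈ F, dv (u ρ) ≤ B

lemma runA_head (X : ℕ → Str) (f : Frame) (rest : List Frame) (a m : ℕ) (ham : a ≤ m) :
    ∃ c D r, runA u e X (f :: rest) a m = (f.1, f.2.1, f.2.2.1, c, D) :: r := by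
  have hs : ∀ (Y : Str) (f : Frame) (rest : List Frame),
      ∃ c D r, (step u e Y (f :: rest)).1 = (f.1, f.2.1, f.2.2.1, c, D) :: r := by
    intro Y f rest
    by_cases hd : done f
    · rw [step_done u e _ _ _ hd]; exact ⟨_, _, _, rfl⟩
    · rw [step_cons]; unfold act; rw [if_neg hd]
      cases rest with
      | nil => exact ⟨_, _, _, rfl⟩
      | cons g r =>
        show ∃ c D r', (actG u e Y f (g :: r) _ g).1 = _
        unfold actG
        split_ifs
        · exact ⟨_, _, _, rfl⟩
        · exact ⟨_, _, _, rfl⟩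
        · exact ⟨_, _, _, rfl⟩
        · exact ⟨_, _, _, rfl⟩
  induction m, ham using Nat.le_induction with
  | base => rw [runA_self]; exact ⟨_, _, _, rfl⟩
  | succ m ham ih =>
    rw [runA_succ u e X _ ham]
    obtain ⟨c, D, r, h⟩ := ih
    rw [h]
    exact hs _ _ _

lemma runA_done {X : ℕ → Str} {L : List Frame} {a m : ℕ} (ham : a ≤ m) {f : Frame}
    {rest : List Frame} (h : runA u e X L a m = f :: rest) (hd : done f) {m' : ℕ} (hm : m ≤ m') :
    runA u e X L a m' = f :: rest := by
  induction m', hm using Nat.le_induction with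
  | base => exact h
  | succ k hk ih => rw [runA_succ u e X _ (by omega), ih, step_done u e _ _ _ hd]

theorem succ_zero (A : ℕ → Bool) : SuccLev u e A 0 := by
  intro X _ a τ goal d _ _
  by_cases hd : done (τ, goal, d, 1, (0, 0))
  · exact ⟨a, le_rfl, _, _, by rw [runA_self, fresh_succ], hd⟩
  · refine ⟨a + 1, by omega, (τ, goal, d, 1, goal), [], ?_, by rw [done_iff]⟩
    rw [runA_succ u e X _ le_rfl, runA_self, fresh_succ, step_cons]
    unfold act
    rw [if_neg hd]
    simp [fresh]

/-- light state description -/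
structure St (j : ℕ) (X : ℕ → Str) (a : ℕ) (τ : Str) (goal : Dy) (d m a1 : ℕ) (ρ : Str) (c : ℕ)
    (D : Dy) : Prop where
  haa : a ≤ a1
  ham : a1 ≤ m
  hst : runA u e X (fresh u e (j + 2) τ goal d) a m = (τ, goal, d, c, D) ::
    runA u e X (fresh u e (j + 1) ρ (dshift (d + 1 + e) (u ρ)) (d + 1 + c)) a1 m
  hpre : τ <+: ρ
  hX : ∀ l, a1 ≤ l → l < m → ρ <+: X l
  hlen : ∀ l, m ≤ l → ρ.length ≤ (X l).length

lemma St.next {j : ℕ} {X : ℕ → Str} {a : ℕ} {τ : Str} {goal : Dy} {d m a1 : ℕ} {ρ : Str} {c : ℕ}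
    {D : Dy} (hS : St u e j X a τ goal d m a1 ρ c D)
    (hmono : ∀ l l', l ≤ l' → (X l).length ≤ (X l').length)
    (hτ : τ <+: X m)
    (hnd : ∀ f rest, runA u e X (fresh u e (j + 2) τ goal d) a m = f :: rest → ¬ done f) :
    (ρ <+: X m ∧ ¬ (∃ f rest, runA u e X (fresh u e (j + 1) ρ (dshift (d + 1 + e) (u ρ)) (d + 1 + c)) a1 m
        = f :: rest ∧ done f ∧ ρ.length < (X m).length) ∧ St u e j X a τ goal d (m + 1) a1 ρ c D) ∨
    (ρ <+: X m ∧ ρ.length < (X m).length ∧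
      St u e j X a τ goal d (m + 1) (m + 1) ((X m).take (ρ.length + 1)) (c + 1) D) ∨
    (¬ ρ <+: X m ∧ τ.length ≤ lcp ρ (X m) ∧ lcp ρ (X m) < ρ.length ∧ lcp ρ (X m) < (X m).length ∧
      ∃ D', St u e j X a τ goal d (m + 1) (m + 1)
      ((X m).take (lcp ρ (X m) + 1)) (c + 1) (popD u (d + 1 + e) ρ (X m) D D')) := by
  have haa := hS.haa
  have ham := hS.ham
  have hnd' := hnd _ _ hS.hst
  obtain ⟨c', D', r', hr⟩ := runA_head u e X (rest := fresh u e j ρ (dshift (d + 1 + c + 1 + e) (u ρ)) (d + 1 + c + 2))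
    (a := a1) (m := m) ham (f := (ρ, (dshift (d + 1 + e) (u ρ)), (d + 1 + c), 1, (0, 0)))
  rw [← fresh_succ] at hr
  simp only at hr
  have hlen : r'.length + 1 = j + 1 := by
    have := runA_length u e X
      (fresh u e (j + 1) ρ (dshift (d + 1 + e) (u ρ)) (d + 1 + c)) ham
    rw [hr, fresh_length] at this
    simpa using this
  have hρX := hS.hlen m le_rfl
  by_cases hρ : ρ <+: X m
  · by_cases hdl : done (ρ, dshift (d + 1 + e) (u ρ), d + 1 + c, c', D') ∧ ρ.length < (X m).length
    · right; left
      refine ⟨hρ, hdl.2, by omega, le_rfl, ?_, ?_, ?_, ?_⟩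
      · rw [runA_succ u e X _ (by omega), hS.hst, hr, step_adv u e _ _ _ _ hnd' hρ hdl.1 hdl.2, hlen,
          runA_self]
        rfl
      · exact hS.hpre.trans (prefix_take hρ (by omega))
      · intro l h1 h2; omega
      · intro l hl
        have := hmono m l (by omega)
        rw [List.length_take]; omega
    · left
      refine ⟨hρ, ?_, haa, by omega, ?_, hS.hpre, ?_, fun l hl => hS.hlen l (by omega)⟩
      · rintro ⟨f, rest, h1, h2, h3⟩
        rw [hr] at h1
        obtain ⟨rfl, rfl⟩ := List.cons_eq_cons.1 h1
        exact hdl ⟨h2, h3⟩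
      · rw [runA_succ u e X _ (by omega), hS.hst, runA_succ u e X _ ham, hr,
          step_sub u e _ _ _ _ hnd' hρ hdl]
      · intro l h1 h2
        rcases Nat.lt_succ_iff_lt_or_eq.1 h2 with h | rfl
        · exact hS.hX l h1 h
        · exact hρ
  · right; right
    have hlt := lcp_take ρ (X m)
    have hτh : τ.length ≤ lcp ρ (X m) := by
      apply le_lcp hS.hpre.length_le
      rw [← List.prefix_iff_eq_take.1 hτ, ← List.prefix_iff_eq_take.1 hS.hpre]
    have hhρ : lcp ρ (X m) < ρ.length := by
      rcases (lcp_le ρ (X m)).lt_or_eq with h1 | h1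
      · exact h1
      · exfalso; apply hρ
        rw [h1, List.take_length] at hlt
        rw [← hlt]; exact List.take_prefix _ _
    refine ⟨hρ, hτh, hhρ, by omega, D', by omega, le_rfl, ?_, ?_, ?_, ?_⟩
    · rw [runA_succ u e X _ (by omega), hS.hst, hr, step_pop u e _ _ _ _ hnd' hρ, hlen, runA_self]
      rfl
    · exact prefix_take hτ (by omega)
    · intro l h1 h2; omega
    · intro l hl
      have := hmono m l (by omega)
      rw [List.length_take]; omega

def nodeOf (L : List Frame) : Str := (L.getD 1 ([], (0, 0), 0, 0, (0, 0))).1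

lemma St.node {j : ℕ} {X : ℕ → Str} {a : ℕ} {τ : Str} {goal : Dy} {d m a1 : ℕ} {ρ : Str} {c : ℕ}
    {D : Dy} (hS : St u e j X a τ goal d m a1 ρ c D) :
    nodeOf (runA u e X (fresh u e (j + 2) τ goal d) a m) = ρ := by
  obtain ⟨c', D', r', hr⟩ := runA_head u e X (rest := fresh u e j ρ (dshift (d + 1 + c + 1 + e) (u ρ)) (d + 1 + c + 2))
    (a := a1) (m := m) hS.ham (f := (ρ, (dshift (d + 1 + e) (u ρ)), (d + 1 + c), 1, (0, 0)))
  rw [← fresh_succ] at hr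
  rw [hS.hst, hr]
  rfl


theorem golden (hstep : Computable₂ (step u e))
    (hu : ∀ ρ : Str, ∑ k ∈ Finset.range (ρ.length + 1), dv (u (ρ.take k)) ≤ 2 ^ e)
    (hu1 : ∀ ρ, (u ρ).1 ≤ 1)
    (A : ℕ → Bool) (j : ℕ) (hj : SuccLev u e A j) (hj1 : ¬ SuccLev u e A (j + 1)) : Cover u A := by
  unfold SuccLev at hj1
  push Not at hj1
  obtain ⟨X, hX, a, τ, goal, d, hg, hτ, hnd⟩ := hj1
  -- states
  have hSt : ∀ m, a ≤ m → ∃ a1 ρ c D, St u e j X a τ goal d m a1 ρ c D := by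
    intro m ham
    induction m, ham using Nat.le_induction with
    | base =>
      refine ⟨a, τ, 1, (0, 0), le_rfl, le_rfl, ?_, List.prefix_rfl, fun l h1 h2 => by omega,
        fun l hl => (hτ l hl).length_le⟩
      rw [runA_self, runA_self, fresh_succ]
    | succ m ham ih =>
      obtain ⟨a1, ρ, c, D, hS⟩ := ih
      rcases hS.next u e hX.mono (hτ m ham) (hnd m ham) with h | h | h
      · exact ⟨_, _, _, _, h.2.2⟩
      · exact ⟨_, _, _, _, h.2.2⟩
      · obtain ⟨D', h⟩ := h.2.2.2.2
        exact ⟨_, _, _, _, h⟩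
  set node : ℕ → Str := fun m => nodeOf (runA u e X (fresh u e (j + 2) τ goal d) a m) with hnode
  refine ⟨fun ρ => ∃ k, decide (ρ <+: node (a + k) ∧ ρ ≠ node (a + k)) = true, ?_, ?_, ?_⟩
  · apply re_exists
    have h1 : Computable (fun k => runA u e X (fresh u e (j + 2) τ goal d) a (a + k)) := by
      have : Computable (fun k : ℕ => (Nat.rec (fresh u e (j + 2) τ goal d)
          (fun k ih => (step u e (X (a + k)) ih).1) k : List Frame)) := by
        refine Computable.nat_rec (f := fun k : ℕ => k) (g := fun _ => fresh u e (j + 2) τ goal d)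
          (h := fun _ p => (step u e (X (a + p.1)) p.2).1) Computable.id (Computable.const _) ?_
        refine Computable.fst.comp (hstep.comp (hX.comp.comp ?_) ?_)
        · exact (Primrec.nat_add.comp (Primrec.const a) (Primrec.fst.comp Primrec.snd)).to_comp
        · exact (Primrec.snd.comp Primrec.snd).to_comp
      refine this.of_eq fun k => ?_
      simp [runA]
    have h2 : Computable (fun k => node (a + k)) := by
      have : Primrec nodeOf :=
        Primrec.fst.comp ((Primrec.list_getD _).comp Primrec.id (Primrec.const 1))
      exact this.to_comp.comp h1
    have h3 : PrimrecRel (fun a b : Str => a <+: b ∧ a ≠ b) :=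
      PrimrecPred.and primrecRel_prefix (PrimrecPred.not Primrec.eq)
    exact h3.decide.to_comp.comp Computable.fst (h2.comp Computable.snd)
  · -- the true path is covered
    have main : ∀ n, ∃ m1, a ≤ m1 ∧ ∀ m, m1 ≤ m → strPrefix A n <+: node m := by
      intro n
      induction n with
      | zero => exact ⟨a, le_rfl, fun m _ => by simp [strPrefix]⟩
      | succ n ih =>
        obtain ⟨m1, ham1, hm1⟩ := ih
        obtain ⟨m2, hm2⟩ := hX.conv (n + 1)
        have hXl : ∀ m, m2 ≤ m → n + 1 ≤ (X m).length := by
          intro m hm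
          have := congrArg List.length (hm2 m hm)
          rw [List.length_take, strPrefix_length] at this; omega
        have hXn : ∀ m, m2 ≤ m → (X m).take n = strPrefix A n := by
          intro m hm
          have := congrArg (List.take n) (hm2 m hm)
          rwa [List.take_take, min_eq_left (by omega), strPrefix_take A (by omega)] at this
        have keep : ∀ m, m1 ≤ m → m2 ≤ m → strPrefix A (n + 1) <+: node m →
            strPrefix A (n + 1) <+: node (m + 1) := by
          intro m h1 h2 h3
          obtain ⟨a1, ρ, c, D, hS⟩ := hSt m (by omega)
          have hn : node m = ρ := hS.node
          rw [hn] at h3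
          have hl := h3.length_le
          rw [strPrefix_length] at hl
          rcases hS.next u e hX.mono (hτ m (by omega)) (hnd m (by omega)) with h | h | h
          · rw [show node (m + 1) = ρ from h.2.2.node]; exact h3
          · rw [show node (m + 1) = _ from h.2.2.node]
            exact h3.trans (prefix_take h.1 (by omega))
          · obtain ⟨D', h'⟩ := h.2.2.2.2
            rw [show node (m + 1) = _ from h'.node]
            have : n + 1 ≤ lcp ρ (X m) := by
              apply le_lcp hl
              rw [hm2 m h2, List.prefix_iff_eq_take.1 h3, strPrefix_length]
            rw [← hm2 m h2]
            exact take_prefix_mono (by omega)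
        suffices hex : ∃ m, m1 ≤ m ∧ m2 ≤ m ∧ strPrefix A (n + 1) <+: node m by
          obtain ⟨m, h1, h2, h3⟩ := hex
          refine ⟨m, by omega, fun m' hm' => ?_⟩
          induction m', hm' using Nat.le_induction with
          | base => exact h3
          | succ k hk ih => exact keep k (by omega) (by omega) ih
        by_contra hcon
        push Not at hcon
        have heq : ∀ m, m1 ≤ m → m2 ≤ m → node m = strPrefix A n := by
          intro m h1 h2
          by_contra hne
          obtain ⟨a1, ρ, c, D, hS⟩ := hSt m (by omega)
          have hn : node m = ρ := hS.node
          have hpre := hm1 m h1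
          have hnc := hcon m h1 h2
          rw [hn] at hpre hne hnc
          have hl := hpre.length_le
          rw [strPrefix_length] at hl
          have hl' : n < ρ.length := by
            rcases hl.lt_or_eq with h | h
            · exact h
            · exfalso; apply hne
              exact (hpre.eq_of_length (by rw [strPrefix_length]; exact h)).symm
          have hρX : ¬ ρ <+: X m := by
            intro hρ
            apply hnc
            rw [← hm2 m h2]
            have : (X m).take (n + 1) = ρ.take (n + 1) := by
              obtain ⟨t, ht⟩ := hρ
              rw [← ht, List.take_append_of_le_length (by omega)]
            rw [this]; exact List.take_prefix _ _
          rcases hS.next u e hX.mono (hτ m (by omega)) (hnd m (by omega)) with h | h | h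
          · exact hρX h.1
          · exact hρX h.1
          · obtain ⟨D', h'⟩ := h.2.2.2.2
            apply hcon (m + 1) (by omega) (by omega)
            rw [show node (m + 1) = _ from h'.node, ← hm2 m h2]
            apply take_prefix_mono
            have : n ≤ lcp ρ (X m) := by
              apply le_lcp hl
              rw [hXn m h2, List.prefix_iff_eq_take.1 hpre, strPrefix_length]
            omega
        set M := max m1 m2 with hM
        obtain ⟨a1, ρ, c, D, hS⟩ := hSt M (by omega)
        have hρ : ρ = strPrefix A n := by
          rw [← heq M (by omega) (by omega)]; exact (hS.node).symm
        have stay : ∀ m, M ≤ m → St u e j X a τ goal d m a1 ρ c D ∧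
            ¬ (∃ f rest, runA u e X (fresh u e (j + 1) ρ (dshift (d + 1 + e) (u ρ)) (d + 1 + c)) a1 m
              = f :: rest ∧ done f ∧ ρ.length < (X m).length) := by
          have aux : ∀ m, M ≤ m → St u e j X a τ goal d m a1 ρ c D →
            ¬ (∃ f rest, runA u e X (fresh u e (j + 1) ρ (dshift (d + 1 + e) (u ρ)) (d + 1 + c)) a1 m
              = f :: rest ∧ done f ∧ ρ.length < (X m).length) ∧
              St u e j X a τ goal d (m + 1) a1 ρ c D := by
            intro m hm hS
            have hnx : node (m + 1) = ρ := by rw [heq (m + 1) (by omega) (by omega), hρ]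
            rcases hS.next u e hX.mono (hτ m (by omega)) (hnd m (by omega)) with h | h | h
            · exact h.2
            · exfalso
              have h1 : node (m + 1) = _ := h.2.2.node
              rw [hnx] at h1
              have := congrArg List.length h1
              rw [List.length_take] at this
              have := h.2.1
              omega
            · exfalso; apply h.1
              rw [hρ, ← hXn m (by omega)]; exact List.take_prefix _ _
          intro m hm
          induction m, hm using Nat.le_induction with
          | base => exact ⟨hS, (aux M le_rfl hS).1⟩
          | succ k hk ih =>
            have h1 := (aux k hk ih.1).2
            exact ⟨h1, (aux (k + 1) (by omega) h1).1⟩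
        have hall : ∀ l, a1 ≤ l → ρ <+: X l := by
          intro l hl
          rcases Nat.lt_or_ge l M with h | h
          · exact hS.hX l hl h
          · rw [hρ, ← hXn l (by omega)]; exact List.take_prefix _ _
        obtain ⟨m, hm, f, rest, h1, h2⟩ := hj X hX a1 ρ (dshift (d + 1 + e) (u ρ)) (d + 1 + c)
          (hu1 ρ) hall
        have h3 := runA_done u e hm h1 h2 (show m ≤ max m M by omega)
        apply (stay (max m M) (by omega)).2
        refine ⟨f, rest, h3, h2, ?_⟩
        have := hXl (max m M) (by omega)
        rw [hρ, strPrefix_length]; omega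
    intro n
    obtain ⟨m1, h1, h2⟩ := main (n + 1)
    refine ⟨m1 - a, ?_⟩
    rw [show a + (m1 - a) = m1 by omega]
    have h3 := h2 m1 le_rfl
    rw [decide_eq_true_iff]
    constructor
    · refine List.IsPrefix.trans ?_ h3
      rw [← strPrefix_take A (Nat.le_succ n)]; exact List.take_prefix _ _
    · intro h4
      have := h3.length_le
      rw [← h4, strPrefix_length, strPrefix_length] at this
      omega
  · -- bound
    refine ⟨dv goal * 2 ^ (d + 1 + e) + 2 ^ e, fun F hF => ?_⟩
    have hQ : ∀ m, a ≤ m → ∃ a1 ρ c D, St u e j X a τ goal d m a1 ρ c D ∧ ∃ Z : Finset Str,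
        ∑ σ ∈ Z, dv (u σ) / 2 ^ (d + 1 + e) ≤ dv D ∧
        ∀ m', a ≤ m' → m' ≤ m → ∀ σ, σ <+: node m' → σ ≠ node m' → σ ∈ Z ∨ (σ <+: ρ ∧ σ ≠ ρ) := by
      intro m ham
      induction m, ham using Nat.le_induction with
      | base =>
        obtain ⟨a1, ρ, c, D, hS⟩ := hSt a le_rfl
        refine ⟨a1, ρ, c, D, hS, ∅, by simp [dv_nonneg], fun m' h1 h2 σ h3 h4 => ?_⟩
        obtain rfl : m' = a := by omega
        rw [show node m' = ρ from hS.node] at h3 h4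
        exact Or.inr ⟨h3, h4⟩
      | succ m ham ih =>
        obtain ⟨a1, ρ, c, D, hS, Z, hZ, hcov⟩ := ih
        rcases hS.next u e hX.mono (hτ m (by omega)) (hnd m (by omega)) with h | h | h
        · refine ⟨_, _, _, _, h.2.2, Z, hZ, fun m' h1 h2 σ h3 h4 => ?_⟩
          rcases Nat.lt_succ_iff_lt_or_eq.1 (Nat.lt_succ_of_le h2) with h5 | rfl
          · exact hcov m' h1 (by omega) σ h3 h4
          · rw [show node (m + 1) = _ from h.2.2.node] at h3 h4
            exact Or.inr ⟨h3, h4⟩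
        · refine ⟨_, _, _, _, h.2.2, Z, hZ, fun m' h1 h2 σ h3 h4 => ?_⟩
          rcases Nat.lt_succ_iff_lt_or_eq.1 (Nat.lt_succ_of_le h2) with h5 | rfl
          · rcases hcov m' h1 (by omega) σ h3 h4 with h6 | h6
            · exact Or.inl h6
            · right
              refine ⟨h6.1.trans (prefix_take h.1 (by omega)), fun h7 => ?_⟩
              have h8 := h6.1.length_le
              rw [h7, List.length_take] at h8
              have := h.2.1
              omega
          · rw [show node (m + 1) = _ from h.2.2.node] at h3 h4
            exact Or.inr ⟨h3, h4⟩
        · obtain ⟨g1, g2, g3, g4, D', h'⟩ := h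
          set hh := lcp ρ (X m) with hhh
          set Z1 := (Finset.Ioo hh ρ.length).image (fun k => ρ.take k) with hZ1
          refine ⟨_, _, _, _, h', Z ∪ Z1, ?_, fun m' h1 h2 σ h3 h4 => ?_⟩
          · have s1 : ∑ σ ∈ Z ∪ Z1, dv (u σ) / 2 ^ (d + 1 + e) ≤
                ∑ σ ∈ Z, dv (u σ) / 2 ^ (d + 1 + e) + ∑ σ ∈ Z1, dv (u σ) / 2 ^ (d + 1 + e) := by
              rw [← Finset.sum_union_inter]
              have : 0 ≤ ∑ σ ∈ Z ∩ Z1, dv (u σ) / 2 ^ (d + 1 + e) :=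
                Finset.sum_nonneg fun σ _ => div_nonneg (dv_nonneg _) (by positivity)
              linarith
            have s2 : ∑ σ ∈ Z1, dv (u σ) / 2 ^ (d + 1 + e) ≤
                ∑ k ∈ Finset.range ρ.length, if hh < k then dv (u (ρ.take k)) / 2 ^ (d + 1 + e) else 0 := by
              rw [hZ1]
              refine (Finset.sum_image_le_of_nonneg (fun k _ => ?_)).trans ?_
              · exact div_nonneg (dv_nonneg _) (by positivity)
              rw [← Finset.sum_filter]
              apply le_of_eq
              apply Finset.sum_congr _ (fun _ _ => rfl)
              ext k; simp; omega
            rw [popD, dv_dadd, dv_dadd, dv_gain, ← hhh]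
            have := dv_nonneg D'
            linarith
          · have hl2 : ((X m).take (hh + 1)).length = hh + 1 := by rw [List.length_take]; omega
            rcases Nat.lt_succ_iff_lt_or_eq.1 (Nat.lt_succ_of_le h2) with h5 | rfl
            · rcases hcov m' h1 (by omega) σ h3 h4 with h6 | h6
              · left; rw [Finset.mem_union]; exact Or.inl h6
              · have hσl : σ.length < ρ.length := by
                  rcases h6.1.length_le.lt_or_eq with h7 | h7
                  · exact h7
                  · exact absurd (h6.1.eq_of_length h7) h6.2
                have hσ := List.prefix_iff_eq_take.1 h6.1
                rcases Nat.lt_or_ge hh σ.length with h7 | h7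
                · left
                  rw [Finset.mem_union, hZ1, Finset.mem_image]
                  right
                  exact ⟨σ.length, by rw [Finset.mem_Ioo]; exact ⟨h7, hσl⟩, hσ.symm⟩
                · right
                  constructor
                  · have e1 : ρ.take σ.length <+: ρ.take hh := take_prefix_mono h7
                    rw [← hσ, hhh, ← lcp_take] at e1
                    exact e1.trans (take_prefix_mono (by omega))
                  · intro h8
                    rw [h8, hl2] at h7
                    omega
            · rw [show node (m + 1) = _ from h'.node] at h3 h4
              exact Or.inr ⟨h3, h4⟩
    have hF' : ∃ M, a ≤ M ∧ ∀ ρ ∈ F, ∃ m, a ≤ m ∧ m ≤ M ∧ ρ <+: node m ∧ ρ ≠ node m := by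
      choose! k hk using hF
      refine ⟨a + F.sup k, by omega, fun ρ hρ => ⟨a + k ρ, by omega, ?_, ?_⟩⟩
      · have := Finset.le_sup (f := k) hρ; omega
      · have := hk ρ hρ
        rwa [decide_eq_true_iff] at this
    obtain ⟨M, haM, hM⟩ := hF'
    obtain ⟨a1, ρ, c, D, hS, Z, hZ, hcov⟩ := hQ M haM
    have hD : dv D ≤ dv goal := by
      have := hnd M haM _ _ hS.hst
      rw [done_iff, not_le] at this
      exact this.le
    set P := (Finset.range (ρ.length + 1)).image (fun k => ρ.take k) with hP
    have hsub : F ⊆ Z ∪ P := by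
      intro σ hσ
      obtain ⟨m, h1, h2, h3, h4⟩ := hM σ hσ
      rw [Finset.mem_union]
      rcases hcov m h1 h2 σ h3 h4 with h | h
      · exact Or.inl h
      · right
        rw [hP, Finset.mem_image]
        refine ⟨σ.length, ?_, (List.prefix_iff_eq_take.1 h.1).symm⟩
        rw [Finset.mem_range]; have := h.1.length_le; omega
    have t1 : ∑ σ ∈ F, dv (u σ) ≤ ∑ σ ∈ Z ∪ P, dv (u σ) :=
      Finset.sum_le_sum_of_subset_of_nonneg hsub (fun _ _ _ => dv_nonneg _)
    have t2 : ∑ σ ∈ Z ∪ P, dv (u σ) ≤ ∑ σ ∈ Z, dv (u σ) + ∑ σ ∈ P, dv (u σ) := by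
      rw [← Finset.sum_union_inter]
      have : 0 ≤ ∑ σ ∈ Z ∩ P, dv (u σ) := Finset.sum_nonneg fun σ _ => dv_nonneg _
      linarith
    have t3 : ∑ σ ∈ P, dv (u σ) ≤ 2 ^ e := by
      refine le_trans ?_ (hu ρ)
      rw [hP]
      exact Finset.sum_image_le_of_nonneg (fun k _ => dv_nonneg _)
    have t4 : ∑ σ ∈ Z, dv (u σ) ≤ dv goal * 2 ^ (d + 1 + e) := by
      rw [← Finset.sum_div, div_le_iff₀ (by positivity)] at hZ
      refine hZ.trans ?_
      gcongr
    linarith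

theorem succ_all (hstep : Computable₂ (step u e))
    (hu : ∀ ρ : Str, ∑ k ∈ Finset.range (ρ.length + 1), dv (u (ρ.take k)) ≤ 2 ^ e)
    (hu1 : ∀ ρ, (u ρ).1 ≤ 1) (A : ℕ → Bool) (hno : ¬ Cover u A) (j : ℕ) : SuccLev u e A j := by
  induction j with
  | zero => exact succ_zero u e A
  | succ j ih => by_contra h; exact hno (golden u e hstep hu hu1 A j ih h)

end
end KT

namespace KT

lemma primrec_pow : Primrec₂ (fun a b : ℕ => a ^ b) := by
  have : Primrec₂ (fun (a : ℕ) (b : ℕ) => (Nat.rec 1 (fun _ ih => ih * a) b : ℕ)) :=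
    Primrec.nat_rec (f := fun _ : ℕ => 1) (g := fun a p => p.2 * a) (Primrec.const 1)
      (Primrec.nat_mul.comp (Primrec.snd.comp Primrec.snd) Primrec.fst)
  refine this.of_eq fun a b => ?_
  induction b with
  | zero => rfl
  | succ n ih => rw [pow_succ, ← ih]

lemma primrec_pow2 {α : Type*} [Primcodable α] {f : α → ℕ} (hf : Primrec f) :
    Primrec (fun a => 2 ^ f a) := primrec_pow.comp (Primrec.const 2) hf

def bits (n k : ℕ) : Str := (List.range n).map (fun t => k.testBit (n - 1 - t))

lemma bits_length (n k : ℕ) : (bits n k).length = n := by simp [bits]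

lemma primrec_testBit : Primrec₂ Nat.testBit := by
  have : PrimrecRel (fun x i : ℕ => x / 2 ^ i % 2 = 1) := by
    apply Primrec.eq.comp _ (Primrec.const 1)
    exact Primrec.nat_mod.comp (Primrec.nat_div.comp Primrec.fst (primrec_pow2 Primrec.snd))
      (Primrec.const 2)
  refine this.decide.of_eq fun x i => ?_
  rw [Nat.testBit_eq_decide_div_mod_eq]

lemma primrec_bits : Primrec₂ bits := by
  refine Primrec.list_map (f := fun p : ℕ × ℕ => List.range p.1)
    (g := fun p t => p.2.testBit (p.1 - 1 - t)) (Primrec.list_range.comp Primrec.fst) ?_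
  refine primrec_testBit.comp (Primrec.snd.comp Primrec.fst) ?_
  exact Primrec.nat_sub.comp (Primrec.nat_sub.comp (Primrec.fst.comp Primrec.fst)
    (Primrec.const 1)) Primrec.snd

lemma bits_prefix {n k n' k' : ℕ} (hk : k < 2 ^ n) (hk' : k' < 2 ^ n') (h : bits n k <+: bits n' k') :
    n ≤ n' ∧ k = k' / 2 ^ (n' - n) := by
  have hl := h.length_le
  rw [bits_length, bits_length] at hl
  refine ⟨hl, ?_⟩
  apply Nat.eq_of_testBit_eq
  intro i
  rw [Nat.testBit_div_two_pow]
  rcases Nat.lt_or_ge i n with hi | hi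
  · have h1 := h.getElem (i := n - 1 - i) (by rw [bits_length]; omega)
    simp only [bits, List.getElem_map, List.getElem_range] at h1
    rw [show n - 1 - (n - 1 - i) = i by omega, show n' - 1 - (n - 1 - i) = n' - n + i by omega] at h1
    rw [h1]; congr 1; omega
  · rw [Nat.testBit_lt_two_pow (lt_of_lt_of_le hk (Nat.pow_le_pow_right (by norm_num) hi)),
      Nat.testBit_lt_two_pow (lt_of_lt_of_le hk' (Nat.pow_le_pow_right (by norm_num) (by omega)))]

noncomputable def wq (q : Option (ℕ × ℕ)) : ℝ := q.elim 0 (fun r => 1 / 2 ^ r.1)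

lemma wq_nonneg (q : Option (ℕ × ℕ)) : 0 ≤ wq q := by cases q <;> simp [wq]

def dsum (req : ℕ → Option (ℕ × ℕ)) (n : ℕ) : Dy :=
  Nat.rec (0, 0) (fun k ih => (req k).casesOn ih (fun r => dadd ih (1, r.1))) n

lemma dv_dsum (req : ℕ → Option (ℕ × ℕ)) (n : ℕ) :
    dv (dsum req n) = ∑ i ∈ Finset.range n, wq (req i) := by
  induction n with
  | zero => simp [dsum]
  | succ n ih =>
    rw [Finset.sum_range_succ, ← ih]
    show dv ((req n).casesOn (dsum req n) (fun r => dadd (dsum req n) (1, r.1))) = _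
    cases req n with
    | none => simp [wq]
    | some r =>
      show dv (dadd (dsum req n) (1, r.1)) = dv (dsum req n) + 1 / 2 ^ r.1
      rw [dv_dadd]; simp [dv]

def kcIdx (S : Dy) (r : ℕ) : ℕ := S.1 * 2 ^ (r + 1) / 2 ^ S.2 + 1

lemma kcIdx_lo (S : Dy) (r : ℕ) : dv S < (kcIdx S r : ℝ) / 2 ^ (r + 1) := by
  rw [dv, div_lt_div_iff₀ (by positivity) (by positivity), kcIdx]
  have := Nat.lt_div_mul_add (a := S.1 * 2 ^ (r + 1)) (b := 2 ^ S.2) (by positivity)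
  have h2 : S.1 * 2 ^ (r + 1) < (S.1 * 2 ^ (r + 1) / 2 ^ S.2 + 1) * 2 ^ S.2 := by linarith
  exact_mod_cast h2

lemma kcIdx_hi (S : Dy) (r : ℕ) : ((kcIdx S r : ℝ) + 1) / 2 ^ (r + 1) ≤ dv S + 1 / 2 ^ r := by
  have h1 : S.1 * 2 ^ (r + 1) / 2 ^ S.2 * 2 ^ S.2 ≤ S.1 * 2 ^ (r + 1) := Nat.div_mul_le_self _ _
  have h2 : ((S.1 * 2 ^ (r + 1) / 2 ^ S.2 : ℕ) : ℝ) * 2 ^ S.2 ≤ S.1 * 2 ^ (r + 1) := by exact_mod_cast h1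
  have h3 : ((S.1 * 2 ^ (r + 1) / 2 ^ S.2 : ℕ) : ℝ) / 2 ^ (r + 1) ≤ dv S := by
    rw [dv, div_le_div_iff₀ (by positivity) (by positivity)]; exact h2
  have h4 : (2:ℝ) / 2 ^ (r + 1) = 1 / 2 ^ r := by rw [pow_succ]; field_simp
  rw [kcIdx, ← h4]
  push_cast
  rw [show ((S.1 * 2 ^ (r + 1) / 2 ^ S.2 : ℕ) : ℝ) + 1 + 1 = ((S.1 * 2 ^ (r + 1) / 2 ^ S.2 : ℕ) : ℝ) + 2 by ring,
    add_div]
  linarith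

def kcStr (req : ℕ → Option (ℕ × ℕ)) (i r : ℕ) : Str := bits (r + 1) (kcIdx (dsum req i) r)

/-- There is a program of cost at most `v` for `x`. -/
def Kle (x v : ℕ) : Prop :=
  ∃ e, ∃ σ : List Bool, PrefixFreeMachine e ∧
    x ∈ (Denumerable.ofNat Nat.Partrec.Code e).eval (Encodable.encode σ) ∧
    σ.length + 2 * e + 2 ≤ v

theorem kraft_chaitin (req : ℕ → Option (ℕ × ℕ)) (hc : Computable req)
    (hs : ∀ N, ∑ i ∈ Finset.range N, wq (req i) ≤ 1) :
    ∃ C, ∀ i r x, req i = some (r, x) → Kle x (r + C) := by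
  have hlt : ∀ i r x, req i = some (r, x) → kcIdx (dsum req i) r < 2 ^ (r + 1) := by
    intro i r x h
    have h1 := kcIdx_hi (dsum req i) r
    have h2 := hs (i + 1)
    rw [Finset.sum_range_succ, ← dv_dsum, h] at h2
    have h3 : wq (some (r, x)) = 1 / 2 ^ r := rfl
    rw [h3] at h2
    have h4 := h1.trans h2
    rw [div_le_one (by positivity)] at h4
    have : kcIdx (dsum req i) r + 1 ≤ 2 ^ (r + 1) := by exact_mod_cast h4
    omega
  have hpf' : ∀ i r x i' r' x', req i = some (r, x) → req i' = some (r', x') →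
      kcStr req i r <+: kcStr req i' r' → i = i' := by
    intro i r x i' r' x' h h' hp
    obtain ⟨h1, h2⟩ := bits_prefix (hlt i r x h) (hlt i' r' x' h') hp
    have lo := kcIdx_lo (dsum req i) r
    have hi := kcIdx_hi (dsum req i) r
    have lo' := kcIdx_lo (dsum req i') r'
    have hi' := kcIdx_hi (dsum req i') r'
    set k := kcIdx (dsum req i) r
    set k' := kcIdx (dsum req i') r'
    have hsucc : ∀ i r x, req i = some (r, x) → dv (dsum req i) + 1 / 2 ^ r = dv (dsum req (i + 1)) := by
      intro i r x h
      rw [dv_dsum, dv_dsum, Finset.sum_range_succ, h]; rfl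
    rw [hsucc i r x h] at hi
    rw [hsucc i' r' x' h'] at hi'
    have hmono : ∀ p q, p ≤ q → dv (dsum req p) ≤ dv (dsum req q) := by
      intro p q hpq
      rw [dv_dsum, dv_dsum]
      apply Finset.sum_le_sum_of_subset_of_nonneg
      · intro t; simp; omega
      · intro t _ _; exact wq_nonneg _
    -- k / 2^(r+1) ≤ k' / 2^(r'+1) < (k+1)/2^(r+1)
    obtain ⟨t, ht⟩ := Nat.exists_eq_add_of_le h1
    have ht' : r' + 1 - (r + 1) = t := by omega
    rw [ht'] at h2
    have e1 : k * 2 ^ t ≤ k' := by rw [h2]; exact Nat.div_mul_le_self _ _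
    have e2 : k' + 1 ≤ (k + 1) * 2 ^ t := by
      have := Nat.lt_div_mul_add (a := k') (b := 2 ^ t) (by positivity)
      rw [← h2] at this; rw [add_mul, one_mul]; omega
    have e1' : (k : ℝ) * 2 ^ t ≤ k' := by exact_mod_cast e1
    have e2' : (k' : ℝ) + 1 ≤ (k + 1) * 2 ^ t := by exact_mod_cast e2
    have f1 : (k : ℝ) / 2 ^ (r + 1) ≤ k' / 2 ^ (r' + 1) := by
      rw [ht, pow_add 2 (r + 1) t, div_le_div_iff₀ (by positivity) (by positivity)]
      have : (0:ℝ) < 2 ^ (r + 1) := by positivity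
      nlinarith
    have f2 : ((k' : ℝ) + 1) / 2 ^ (r' + 1) ≤ (k + 1) / 2 ^ (r + 1) := by
      rw [ht, pow_add 2 (r + 1) t, div_le_div_iff₀ (by positivity) (by positivity)]
      have : (0:ℝ) < 2 ^ (r + 1) := by positivity
      nlinarith
    have f3 : (k' : ℝ) / 2 ^ (r' + 1) < (k' + 1) / 2 ^ (r' + 1) := by
      apply div_lt_div_of_pos_right _ (by positivity); linarith
    rcases lt_trichotomy i i' with hh | hh | hh
    · have := hmono (i + 1) i' hh
      linarith
    · exact hh
    · have := hmono (i' + 1) i hh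
      linarith
  -- the machine
  set F : ℕ → ℕ → Option ℕ := fun s i => (req i).bind (fun q =>
    if Encodable.encode (kcStr req i q.1) = s then some q.2 else none) with hF
  have hFmem : ∀ s i x, x ∈ F s i ↔ ∃ r, req i = some (r, x) ∧ Encodable.encode (kcStr req i r) = s := by
    intro s i x
    simp only [hF, Option.mem_def, Option.bind_eq_some_iff]
    constructor
    · rintro ⟨⟨r, y⟩, h1, h2⟩
      split_ifs at h2 with h3
      simp only [Option.some.injEq] at h2
      subst h2
      exact ⟨r, h1, h3⟩
    · rintro ⟨r, h1, h2⟩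
      exact ⟨(r, x), h1, by simp [h2]⟩
  have hds : Computable (dsum req) := by
    have : Computable (fun n => (Nat.rec ((0, 0) : Dy) (fun k ih =>
        ((req k).casesOn ih (fun r => dadd ih (1, r.1)) : Dy)) n : Dy)) := by
      refine Computable.nat_rec (f := fun n : ℕ => n) (g := fun _ => ((0, 0) : Dy))
        (h := fun _ p => ((req p.1).casesOn p.2 (fun r => dadd p.2 (1, r.1)) : Dy))
        Computable.id (Computable.const _) ?_
      refine Computable.option_casesOn (o := fun p : ℕ × ℕ × Dy => req p.2.1)
        (f := fun p => p.2.2) (g := fun p r => dadd p.2.2 (1, r.1))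
        (hc.comp (Computable.fst.comp Computable.snd)) (Computable.snd.comp Computable.snd) ?_
      apply Primrec.to_comp
      unfold dadd
      have q1 : Primrec (fun p : (ℕ × ℕ × Dy) × ℕ × ℕ => p.1.2.2.1) :=
        Primrec.fst.comp (Primrec.snd.comp (Primrec.snd.comp Primrec.fst))
      have q2 : Primrec (fun p : (ℕ × ℕ × Dy) × ℕ × ℕ => p.1.2.2.2) :=
        Primrec.snd.comp (Primrec.snd.comp (Primrec.snd.comp Primrec.fst))
      have q3 : Primrec (fun p : (ℕ × ℕ × Dy) × ℕ × ℕ => p.2.1) := Primrec.fst.comp Primrec.snd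
      exact Primrec.pair (Primrec.nat_add.comp (Primrec.nat_mul.comp q1 (primrec_pow2 q3))
        (Primrec.nat_mul.comp (Primrec.const 1) (primrec_pow2 q2))) (Primrec.nat_add.comp q2 q3)
    exact this
  have hkc : Computable₂ (kcStr req) := by
    have p1 : Primrec₂ kcIdx := by
      unfold kcIdx
      have a1 : Primrec (fun p : Dy × ℕ => p.1.1) := Primrec.fst.comp Primrec.fst
      have a2 : Primrec (fun p : Dy × ℕ => p.1.2) := Primrec.snd.comp Primrec.fst
      exact Primrec.succ.comp (Primrec.nat_div.comp (Primrec.nat_mul.comp a1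
        (primrec_pow2 (Primrec.succ.comp Primrec.snd))) (primrec_pow2 a2))
    refine primrec_bits.to_comp.comp (Primrec.succ.comp Primrec.snd).to_comp ?_
    exact p1.to_comp.comp (hds.comp Computable.fst) Computable.snd
  have hFc : Computable₂ F := by
    refine Computable.option_bind (hc.comp Computable.snd) ?_
    have t1 : Computable (fun p : (ℕ × ℕ) × ℕ × ℕ =>
        decide (Encodable.encode (kcStr req p.1.2 p.2.1) = p.1.1)) := by
      refine Primrec.eq.decide.to_comp.comp (Computable.encode.comp (hkc.comp ?_ ?_)) ?_
      · exact Computable.snd.comp Computable.fst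
      · exact Computable.fst.comp Computable.snd
      · exact Computable.fst.comp Computable.fst
    have t2 : Computable (fun p : (ℕ × ℕ) × ℕ × ℕ => some p.2.2) :=
      Computable.option_some.comp (Computable.snd.comp Computable.snd)
    refine (Computable.cond t1 t2 (Computable.const none)).of_eq fun p => ?_
    by_cases h : Encodable.encode (kcStr req p.1.2 p.2.1) = p.1.1 <;> simp [h]
  have hpart : Nat.Partrec (fun s => Nat.rfindOpt (F s)) :=
    Partrec.nat_iff.1 (Partrec.rfindOpt hFc)
  obtain ⟨cd, hcd⟩ := Nat.Partrec.Code.exists_code.1 hpart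
  have hev : ∀ s, (Denumerable.ofNat Nat.Partrec.Code (Encodable.encode cd)).eval s = Nat.rfindOpt (F s) := by
    intro s; rw [Denumerable.ofNat_encode, hcd]
  refine ⟨2 * Encodable.encode cd + 3, fun i r x hi => ?_⟩
  have hpf : PrefixFreeMachine (Encodable.encode cd) := by
    intro σ hσ τ hτ hp
    simp only [machineDom, Set.mem_ofPred_eq, hev, Nat.rfindOpt_dom] at hσ hτ
    obtain ⟨i1, x1, h1⟩ := hσ
    obtain ⟨i2, x2, h2⟩ := hτ
    obtain ⟨r1, g1, g1'⟩ := (hFmem _ _ _).1 h1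
    obtain ⟨r2, g2, g2'⟩ := (hFmem _ _ _).1 h2
    have k1 := Encodable.encode_injective g1'
    have k2 := Encodable.encode_injective g2'
    rw [← k1, ← k2] at hp
    have hii := hpf' _ _ _ _ _ _ g1 g2 hp
    rw [← k1, ← k2]
    subst hii
    rw [g1] at g2
    simp only [Option.some.injEq, Prod.mk.injEq] at g2
    rw [g2.1]
  refine ⟨Encodable.encode cd, kcStr req i r, hpf, ?_, ?_⟩
  · rw [hev]
    have hd : (Nat.rfindOpt (F (Encodable.encode (kcStr req i r)))).Dom := by
      rw [Nat.rfindOpt_dom]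
      exact ⟨i, x, (hFmem _ _ _).2 ⟨r, hi, rfl⟩⟩
    obtain ⟨y, hy⟩ := Part.dom_iff_mem.1 hd
    obtain ⟨i', h'⟩ := Nat.rfindOpt_spec hy
    obtain ⟨r', h1, h2⟩ := (hFmem _ _ _).1 h'
    have h2 := Encodable.encode_injective h2
    have := hpf' _ _ _ _ _ _ h1 hi (by rw [h2])
    subst this
    rw [h1] at hi
    simp only [Option.some.injEq, Prod.mk.injEq] at hi
    rw [← hi.2]; exact hy
  · rw [kcStr, bits_length]; omega

end KT

namespace KT

lemma kle_univ (x : ℕ) : ∃ v, Kle x v := by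
  have hs : ∀ N, ∑ i ∈ Finset.range N, wq ((fun i : ℕ => some (i + 1, i)) i) = 1 - 1 / 2 ^ N := by
    intro N
    induction N with
    | zero => simp
    | succ n ih => rw [Finset.sum_range_succ, ih]; simp only [wq, Option.elim, pow_succ]; field_simp; ring
  obtain ⟨C, hC⟩ := kraft_chaitin (fun i => some (i + 1, i))
    (Primrec.option_some.comp (Primrec.pair Primrec.succ Primrec.id)).to_comp
    (by
      intro N; rw [hs N]
      have : (0:ℝ) ≤ 1 / 2 ^ N := by positivity
      linarith)
  exact ⟨_, hC x (x + 1) x rfl⟩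

lemma kle_iff (x v : ℕ) : Kle x v ↔ Kcpx x ≤ v := by
  constructor
  · rintro ⟨e, σ, h1, h2, h3⟩
    refine le_trans (Nat.sInf_le ?_) h3
    exact ⟨e, σ, h1, h2, rfl⟩
  · intro h
    obtain ⟨v', e', σ', h1', h2', _⟩ := kle_univ x
    have hne : {k | ∃ e, ∃ σ : List Bool, PrefixFreeMachine e ∧
      x ∈ (Denumerable.ofNat Nat.Partrec.Code e).eval (Encodable.encode σ) ∧
      k = σ.length + 2 * e + 2}.Nonempty := ⟨_, e', σ', h1', h2', rfl⟩
    obtain ⟨e, σ, h1, h2, h3⟩ := Nat.sInf_mem hne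
    exact ⟨e, σ, h1, h2, by rw [← h3]; exact h⟩

def dec (s : ℕ) : Str := (Encodable.decode s).getD []

lemma dec_encode (σ : Str) : dec (Encodable.encode σ) = σ := by simp [dec]

lemma primrec_dec : Primrec dec := Primrec.option_getD.comp Primrec.decode (Primrec.const [])

def ev (t e : ℕ) (σ : Str) : Option ℕ :=
  Nat.Partrec.Code.evaln t (Denumerable.ofNat Nat.Partrec.Code e) (Encodable.encode σ)

lemma ev_bound {t e : ℕ} {σ : Str} {x : ℕ} (h : ev t e σ = some x) : Encodable.encode σ < t :=
  Nat.Partrec.Code.evaln_bound h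

lemma ev_mono {t t' e : ℕ} {σ : Str} {x : ℕ} (h : ev t e σ = some x) (ht : t ≤ t') :
    ev t' e σ = some x := Nat.Partrec.Code.evaln_mono ht h

lemma ev_complete {e : ℕ} {σ : Str} {x : ℕ} :
    x ∈ (Denumerable.ofNat Nat.Partrec.Code e).eval (Encodable.encode σ) ↔ ∃ t, ev t e σ = some x :=
  Nat.Partrec.Code.evaln_complete

def pf (t e : ℕ) : Prop := ∀ s < t, ∀ s' < t, (ev t e (dec s)).isSome = true →
  (ev t e (dec s')).isSome = true → dec s <+: dec s' → dec s = dec s'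

lemma pf_spec {t e : ℕ} (h : pf t e) {σ σ' : Str} {x x' : ℕ} (h1 : ev t e σ = some x)
    (h2 : ev t e σ' = some x') (h3 : σ <+: σ') : σ = σ' := by
  have := h _ (ev_bound h1) _ (ev_bound h2)
  simp only [dec_encode, h1, h2] at this
  exact this rfl rfl h3

def test (t x v : ℕ) : Prop := ∃ e < t, ∃ s < t, ev t e (dec s) = some x ∧
  (dec s).length + 2 * e + 2 ≤ v ∧ pf t e

lemma test_iff (t x v : ℕ) : test t x v ↔ ∃ e < t, ∃ σ, ev t e σ = some x ∧
    σ.length + 2 * e + 2 ≤ v ∧ pf t e := by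
  constructor
  · rintro ⟨e, he, s, hs, h⟩; exact ⟨e, he, _, h⟩
  · rintro ⟨e, he, σ, h1, h2⟩
    exact ⟨e, he, _, ev_bound h1, by rw [dec_encode]; exact ⟨h1, h2⟩⟩

lemma test_mono {t x v v' : ℕ} (h : test t x v) (hv : v ≤ v') : test t x v' := by
  obtain ⟨e, he, s, hs, h1, h2, h3⟩ := h
  exact ⟨e, he, s, hs, h1, by omega, h3⟩

lemma pf_of_machine {e : ℕ} (h : PrefixFreeMachine e) (t : ℕ) : pf t e := by
  intro s _ s' _ h1 h2 h3
  obtain ⟨x, h1⟩ := Option.isSome_iff_exists.1 h1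
  obtain ⟨x', h2⟩ := Option.isSome_iff_exists.1 h2
  refine h _ ?_ _ ?_ h3
  · exact Part.dom_iff_mem.2 ⟨x, ev_complete.2 ⟨t, h1⟩⟩
  · exact Part.dom_iff_mem.2 ⟨x', ev_complete.2 ⟨t, h2⟩⟩

lemma pf_eventually_not {e : ℕ} (h : ¬ PrefixFreeMachine e) : ∃ t0, ∀ t ≥ t0, ¬ pf t e := by
  unfold PrefixFreeMachine PrefixFreeSet at h
  push Not at h
  obtain ⟨σ, h1, σ', h2, h3, h4⟩ := h
  obtain ⟨x, h1⟩ := Part.dom_iff_mem.1 h1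
  obtain ⟨x', h2⟩ := Part.dom_iff_mem.1 h2
  obtain ⟨t1, h1⟩ := ev_complete.1 h1
  obtain ⟨t2, h2⟩ := ev_complete.1 h2
  refine ⟨max t1 t2, fun t ht hp => h4 ?_⟩
  exact pf_spec hp (ev_mono h1 (le_trans (le_max_left _ _) ht))
    (ev_mono h2 (le_trans (le_max_right _ _) ht)) h3

/-- finitely many eventualities hold simultaneously -/
lemma eventually_all_lt {P : ℕ → ℕ → Prop} (n : ℕ) (h : ∀ i < n, ∃ t0, ∀ t ≥ t0, P i t) :
    ∃ t0, ∀ t ≥ t0, ∀ i < n, P i t := by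
  induction n with
  | zero => exact ⟨0, fun t _ i hi => by omega⟩
  | succ n ih =>
    obtain ⟨t1, h1⟩ := ih (fun i hi => h i (by omega))
    obtain ⟨t2, h2⟩ := h n (by omega)
    refine ⟨max t1 t2, fun t ht i hi => ?_⟩
    rcases Nat.lt_succ_iff_lt_or_eq.1 hi with hi | rfl
    · exact h1 t (le_trans (le_max_left _ _) ht) i hi
    · exact h2 t (le_trans (le_max_right _ _) ht)

lemma test_eventually (x v : ℕ) : ∃ t0, ∀ t ≥ t0, (test t x v ↔ Kcpx x ≤ v) := by
  by_cases h : Kcpx x ≤ v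
  · obtain ⟨e, σ, h1, h2, h3⟩ := (kle_iff x v).2 h
    obtain ⟨t1, h2⟩ := ev_complete.1 h2
    refine ⟨max t1 (e + 1), fun t ht => iff_of_true ?_ h⟩
    rw [test_iff]
    exact ⟨e, by have := le_max_right t1 (e + 1); omega, σ, ev_mono h2 (le_trans (le_max_left _ _) ht), h3,
      pf_of_machine h1 t⟩
  · obtain ⟨t0, h0⟩ := eventually_all_lt (P := fun e t => pf t e → PrefixFreeMachine e) (v + 1)
      (fun e _ => by
        by_cases hp : PrefixFreeMachine e
        · exact ⟨0, fun _ _ _ => hp⟩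
        · obtain ⟨t0, h0⟩ := pf_eventually_not hp
          exact ⟨t0, fun t ht h => absurd h (h0 t ht)⟩)
    refine ⟨t0, fun t ht => iff_of_false ?_ h⟩
    rw [test_iff]
    rintro ⟨e, _, σ, h1, h2, h3⟩
    exact h ((kle_iff x v).1 ⟨e, σ, h0 t ht e (by omega) h3, ev_complete.2 ⟨t, h1⟩, h2⟩)

/-! Kraft -/

lemma kraft_fin (S : Finset Str) (h : PrefixFreeSet (S : Set Str)) :
    ∑ w ∈ S, (1 / 2 : ℝ) ^ w.length ≤ 1 := by
  by_cases h0 : ([] : Str) ∈ S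
  · have : S = {[]} := by
      ext w; simp only [Finset.mem_singleton]
      constructor
      · intro hw; exact (h [] h0 w hw List.nil_prefix).symm
      · rintro rfl; exact h0
    rw [this]; simp
  · have hu : InformationTheory.UniquelyDecodable (S : Set Str) := by
      intro L1
      induction L1 with
      | nil =>
        intro L2 _ h2 heq
        cases L2 with
        | nil => rfl
        | cons w L2 =>
          exfalso
          have hw := h2 w (by simp)
          simp at heq
          rw [heq.1] at hw
          exact h0 hw
      | cons w L1 ih =>
        intro L2 h1 h2 heq
        cases L2 with
        | nil =>
          exfalso
          have hw := h1 w (by simp)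
          simp at heq
          rw [heq.1] at hw
          exact h0 hw
        | cons w' L2 =>
          have hw := h1 w (by simp)
          have hw' := h2 w' (by simp)
          simp only [List.flatten_cons] at heq
          have e1 : w <+: w' ++ L2.flatten := ⟨L1.flatten, heq⟩
          have e2 : w' <+: w' ++ L2.flatten := ⟨_, rfl⟩
          have : w = w' := by
            rcases List.prefix_or_prefix_of_prefix e1 e2 with h' | h'
            · exact h _ hw _ hw' h'
            · exact (h _ hw' _ hw h').symm
          subst this
          rw [ih L2 (fun z hz => h1 z (by simp [hz])) (fun z hz => h2 z (by simp [hz]))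
            (List.append_cancel_left heq)]
    have := InformationTheory.kraft_mcmillan_inequality hu
    simpa using this

def DD (e : ℕ) : Set Str := {σ | ∃ t, pf t e ∧ (ev t e σ).isSome = true}

lemma DD_pf (e : ℕ) : PrefixFreeSet (DD e) := by
  rintro σ ⟨t, h1, h2⟩ σ' ⟨t', h1', h2'⟩ hp
  obtain ⟨x, h2⟩ := Option.isSome_iff_exists.1 h2
  obtain ⟨x', h2'⟩ := Option.isSome_iff_exists.1 h2'
  rcases le_total t t' with h | h
  · exact pf_spec h1' (ev_mono h2 h) h2' hp
  · exact pf_spec h1 h2 (ev_mono h2' h) hp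

open Classical in
noncomputable def massE (x : ℕ) : ℝ≥0∞ :=
  ∑' e : ℕ, ∑' σ : Str, if σ ∈ DD e ∧ x ∈ (Denumerable.ofNat Nat.Partrec.Code e).eval (Encodable.encode σ)
    then 2⁻¹ ^ (σ.length + 2 * e + 2) else 0

lemma massE_total : ∑' x, massE x ≤ 1 := by
  classical
  unfold massE
  rw [ENNReal.tsum_comm]
  have h1 : ∀ e : ℕ, (∑' x : ℕ, ∑' σ : Str, if σ ∈ DD e ∧ x ∈ (Denumerable.ofNat Nat.Partrec.Code e).eval (Encodable.encode σ)
    then (2⁻¹ ^ (σ.length + 2 * e + 2) : ℝ≥0∞) else 0) ≤ 2⁻¹ ^ (e + 1) := by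
    intro e
    rw [ENNReal.tsum_comm]
    have h2 : ∀ σ : Str, (∑' x : ℕ, if σ ∈ DD e ∧ x ∈ (Denumerable.ofNat Nat.Partrec.Code e).eval (Encodable.encode σ)
        then (2⁻¹ ^ (σ.length + 2 * e + 2) : ℝ≥0∞) else 0) ≤
        2⁻¹ ^ (e + 1) * if σ ∈ DD e then 2⁻¹ ^ σ.length else 0 := by
      intro σ
      by_cases hσ : σ ∈ DD e
      · obtain ⟨t, _, h⟩ := id hσ
        obtain ⟨y, h⟩ := Option.isSome_iff_exists.1 h
        have hy := ev_complete.2 ⟨t, h⟩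
        rw [tsum_eq_single y]
        · simp only [hσ, hy, and_self, if_true]
          rw [← pow_add]
          exact pow_le_pow_of_le_one (by simp) (by simp) (by omega)
        · intro x hx
          rw [if_neg]
          rintro ⟨_, hx'⟩
          exact hx (Part.mem_unique hx' hy)
      · simp [hσ]
    refine (ENNReal.tsum_le_tsum h2).trans ?_
    rw [ENNReal.tsum_mul_left]
    refine (mul_le_mul_right (b := (∑' σ : Str, if σ ∈ DD e then (2⁻¹ ^ σ.length : ℝ≥0∞) else 0)) (c := 1) ?_ _).trans (by simp)
    rw [ENNReal.tsum_eq_iSup_sum]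
    refine iSup_le fun S => ?_
    rw [← Finset.sum_filter]
    have := kraft_fin (S.filter (· ∈ DD e)) (by
      intro σ hσ τ hτ hp
      simp only [Finset.coe_filter, Set.mem_ofPred_eq] at hσ hτ
      exact DD_pf e σ hσ.2 τ hτ.2 hp)
    have h3 := ENNReal.ofReal_le_ofReal this
    rw [ENNReal.ofReal_sum_of_nonneg (fun _ _ => by positivity), ENNReal.ofReal_one] at h3
    refine le_of_eq_of_le (Finset.sum_congr rfl fun σ _ => ?_) h3
    rw [ENNReal.ofReal_pow (by norm_num)]
    congr 1
    rw [one_div, ENNReal.ofReal_inv_of_pos (by norm_num)]; simp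
  refine (ENNReal.tsum_le_tsum h1).trans ?_
  have : ∑' e : ℕ, (2⁻¹ ^ (e + 1) : ℝ≥0∞) = 1 := by
    rw [ENNReal.tsum_geometric_add_one, ENNReal.one_sub_inv_two, inv_inv]
    exact ENNReal.inv_mul_cancel (by simp) (by simp)
  rw [this]

lemma test_massE {t x v : ℕ} (h : test t x v) : (2⁻¹ ^ v : ℝ≥0∞) ≤ massE x := by
  classical
  obtain ⟨e, _, σ, h1, h2, h3⟩ := (test_iff _ _ _).1 h
  unfold massE
  refine le_trans ?_ (ENNReal.le_tsum e)
  refine le_trans ?_ (ENNReal.le_tsum σ)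
  rw [if_pos ⟨⟨t, h3, by rw [h1]; rfl⟩, ev_complete.2 ⟨t, h1⟩⟩]
  exact pow_le_pow_of_le_one (by simp) (by simp) h2

noncomputable def mass (x : ℕ) : ℝ := (massE x).toReal

lemma massE_ne_top (x : ℕ) : massE x ≠ ⊤ :=
  ne_top_of_le_ne_top one_ne_top ((ENNReal.le_tsum x).trans massE_total)

lemma mass_nonneg (x : ℕ) : 0 ≤ mass x := ENNReal.toReal_nonneg

lemma mass_sum (F : Finset ℕ) : ∑ x ∈ F, mass x ≤ 1 := by
  unfold mass
  rw [← ENNReal.toReal_sum (fun x _ => massE_ne_top x)]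
  have : ∑ x ∈ F, massE x ≤ 1 := (ENNReal.sum_le_tsum F).trans massE_total
  simpa using ENNReal.toReal_mono one_ne_top this

lemma test_mass {t x v : ℕ} (h : test t x v) : (1 / 2 ^ v : ℝ) ≤ mass x := by
  have := ENNReal.toReal_mono (massE_ne_top x) (test_massE h)
  simpa [mass] using this

end KT

namespace KT

section helpers
variable {α β : Type*} [Primcodable α] [Primcodable β]

lemma pex {P : α → ℕ → Prop} {f : α → ℕ} (hP : PrimrecPred (fun p : α × ℕ => P p.1 p.2))
    (hf : Primrec f) : PrimrecPred (fun a => ∃ i < f a, P a i) := by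
  have h1 : PrimrecRel (fun (i : ℕ) (a : α) => P a i) :=
    hP.comp (Primrec.pair Primrec.snd Primrec.fst)
  have h2 := h1.exists_mem_list
  have h3 : PrimrecPred (fun a : α => ∃ i ∈ List.range (f a), P a i) :=
    h2.comp (Primrec.list_range.comp hf) Primrec.id
  exact h3.of_eq (fun a => by simp)

lemma pall {P : α → ℕ → Prop} {f : α → ℕ} (hP : PrimrecPred (fun p : α × ℕ => P p.1 p.2))
    (hf : Primrec f) : PrimrecPred (fun a => ∀ i < f a, P a i) := by
  have h1 : PrimrecRel (fun (i : ℕ) (a : α) => P a i) :=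
    hP.comp (Primrec.pair Primrec.snd Primrec.fst)
  have h2 := h1.forall_mem_list
  have h3 : PrimrecPred (fun a : α => ∀ i ∈ List.range (f a), P a i) :=
    h2.comp (Primrec.list_range.comp hf) Primrec.id
  exact h3.of_eq (fun a => by simp)

lemma pallL {P : α → β → Prop} {f : α → List β} (hP : PrimrecPred (fun p : α × β => P p.1 p.2))
    (hf : Primrec f) : PrimrecPred (fun a => ∀ i ∈ f a, P a i) := by
  have h1 : PrimrecRel (fun (i : β) (a : α) => P a i) :=
    hP.comp (Primrec.pair Primrec.snd Primrec.fst)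
  exact h1.forall_mem_list.comp hf Primrec.id

lemma pfilter {P : α → β → Prop} [∀ a, DecidablePred (P a)] {f : α → List β}
    (hP : PrimrecPred (fun p : α × β => P p.1 p.2))
    (hf : Primrec f) : Primrec (fun a => (f a).filter (fun i => P a i)) := by
  have h1 : PrimrecRel (fun (i : β) (a : α) => P a i) :=
    hP.comp (Primrec.pair Primrec.snd Primrec.fst)
  have := h1.listFilter.comp hf Primrec.id
  exact this

lemma pimp {p q : α → Prop} (hp : PrimrecPred p) (hq : PrimrecPred q) :
    PrimrecPred (fun a => p a → q a) :=
  (hp.not.or hq).of_eq (fun a => by tauto)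

end helpers

lemma primrec_ev : Primrec (fun p : ℕ × ℕ × Str => ev p.1 p.2.1 p.2.2) := by
  refine Nat.Partrec.Code.primrec_evaln.comp (Primrec.pair (Primrec.pair Primrec.fst ?_) ?_)
  · exact (Primrec.ofNat _).comp (Primrec.fst.comp Primrec.snd)
  · exact Primrec.encode.comp (Primrec.snd.comp Primrec.snd)

lemma primrec_pf : PrimrecPred (fun p : ℕ × ℕ => pf p.1 p.2) := by
  have hd1 : Primrec (fun p : ((ℕ × ℕ) × ℕ) × ℕ => dec p.1.2) :=
    primrec_dec.comp (Primrec.snd.comp Primrec.fst)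
  have hd2 : Primrec (fun p : ((ℕ × ℕ) × ℕ) × ℕ => dec p.2) := primrec_dec.comp Primrec.snd
  have ht : Primrec (fun p : ((ℕ × ℕ) × ℕ) × ℕ => p.1.1.1) :=
    Primrec.fst.comp (Primrec.fst.comp Primrec.fst)
  have he : Primrec (fun p : ((ℕ × ℕ) × ℕ) × ℕ => p.1.1.2) :=
    Primrec.snd.comp (Primrec.fst.comp Primrec.fst)
  refine pall (α := ℕ × ℕ) (P := fun p s => ∀ s' < p.1, (ev p.1 p.2 (dec s)).isSome = true →
    (ev p.1 p.2 (dec s')).isSome = true → dec s <+: dec s' → dec s = dec s') ?_ Primrec.fst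
  refine pall (α := (ℕ × ℕ) × ℕ) (P := fun p s' => (ev p.1.1 p.1.2 (dec p.2)).isSome = true →
    (ev p.1.1 p.1.2 (dec s')).isSome = true → dec p.2 <+: dec s' → dec p.2 = dec s') ?_
    (Primrec.fst.comp Primrec.fst)
  refine pimp ?_ (pimp ?_ (pimp ?_ ?_))
  · exact Primrec.eq.comp (Primrec.option_isSome.comp (primrec_ev.comp (Primrec.pair ht (Primrec.pair he hd1))))
      (Primrec.const true)
  · exact Primrec.eq.comp (Primrec.option_isSome.comp (primrec_ev.comp (Primrec.pair ht (Primrec.pair he hd2))))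
      (Primrec.const true)
  · exact primrecRel_prefix.comp hd1 hd2
  · exact Primrec.eq.comp hd1 hd2

lemma primrec_test : PrimrecPred (fun p : ℕ × ℕ × ℕ => test p.1 p.2.1 p.2.2) := by
  have hd1 : Primrec (fun p : ((ℕ × ℕ × ℕ) × ℕ) × ℕ => dec p.2) := primrec_dec.comp Primrec.snd
  have ht : Primrec (fun p : ((ℕ × ℕ × ℕ) × ℕ) × ℕ => p.1.1.1) :=
    Primrec.fst.comp (Primrec.fst.comp Primrec.fst)
  have hx : Primrec (fun p : ((ℕ × ℕ × ℕ) × ℕ) × ℕ => p.1.1.2.1) :=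
    Primrec.fst.comp (Primrec.snd.comp (Primrec.fst.comp Primrec.fst))
  have hv : Primrec (fun p : ((ℕ × ℕ × ℕ) × ℕ) × ℕ => p.1.1.2.2) :=
    Primrec.snd.comp (Primrec.snd.comp (Primrec.fst.comp Primrec.fst))
  have he : Primrec (fun p : ((ℕ × ℕ × ℕ) × ℕ) × ℕ => p.1.2) :=
    Primrec.snd.comp Primrec.fst
  refine pex (α := ℕ × ℕ × ℕ) (P := fun p e => ∃ s < p.1, ev p.1 e (dec s) = some p.2.1 ∧
    (dec s).length + 2 * e + 2 ≤ p.2.2 ∧ pf p.1 e) ?_ Primrec.fst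
  refine pex (α := (ℕ × ℕ × ℕ) × ℕ) (P := fun p s => ev p.1.1 p.2 (dec s) = some p.1.2.1 ∧
    (dec s).length + 2 * p.2 + 2 ≤ p.1.2.2 ∧ pf p.1.1 p.2) ?_ (Primrec.fst.comp Primrec.fst)
  refine PrimrecPred.and ?_ (PrimrecPred.and ?_ ?_)
  · exact Primrec.eq.comp (primrec_ev.comp (Primrec.pair ht (Primrec.pair he hd1))) (Primrec.option_some.comp hx)
  · refine Primrec.nat_le.comp ?_ hv
    refine Primrec.nat_add.comp (Primrec.nat_add.comp (Primrec.list_length.comp hd1)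
      (Primrec.nat_mul.comp (Primrec.const 2) he)) (Primrec.const 2)
  · exact primrec_pf.comp (Primrec.pair ht he)

def allStr (n : ℕ) : List Str := (List.range (2 ^ n)).map (bits n)

lemma primrec_allStr : Primrec allStr :=
  Primrec.list_map (Primrec.list_range.comp (primrec_pow2 Primrec.id)) primrec_bits

lemma bits_surj (x : Str) : ∃ k < 2 ^ x.length, bits x.length k = x := by
  induction x with
  | nil => exact ⟨0, by simp, rfl⟩
  | cons b x ih =>
    obtain ⟨k, hk, h⟩ := ih
    refine ⟨b.toNat * 2 ^ x.length + k, ?_, ?_⟩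
    · rw [List.length_cons, pow_succ]
      have := Bool.toNat_le b
      nlinarith
    · have h1 : ∀ i < x.length, (b.toNat * 2 ^ x.length + k).testBit i = k.testBit i := by
        intro i hi
        rw [mul_comm, Nat.testBit_two_pow_mul_add _ hk, if_pos hi]
      rw [bits, List.length_cons, List.range_succ_eq_map, List.map_cons, List.map_map]
      congr 1
      · simp only [Nat.add_sub_cancel, Nat.sub_zero]
        rw [mul_comm, Nat.testBit_two_pow_mul_add _ hk]
        cases b <;> simp
      · refine Eq.trans ?_ h
        rw [bits]
        apply List.map_congr_left
        intro t ht
        rw [List.mem_range] at ht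
        simp only [Function.comp]
        rw [show x.length + 1 - 1 - t.succ = x.length - 1 - t by omega]
        exact h1 _ (by omega)

lemma mem_allStr {n : ℕ} {x : Str} : x ∈ allStr n ↔ x.length = n := by
  unfold allStr
  rw [List.mem_map]
  constructor
  · rintro ⟨k, _, rfl⟩; exact bits_length _ _
  · rintro rfl
    obtain ⟨k, hk, h⟩ := bits_surj x
    exact ⟨k, by simpa using hk, h⟩

lemma allStr_nodup (n : ℕ) : (allStr n).Nodup := by
  unfold allStr
  refine List.Nodup.map_on ?_ List.nodup_range
  intro k hk k' hk' h
  have := (bits_prefix (by simpa using hk) (by simpa using hk') (by rw [h])).2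
  simpa using this

end KT

namespace KT

lemma tsum_unpair (F : ℕ → ℕ → ℝ≥0∞) :
    ∑' i : ℕ, F i.unpair.1 i.unpair.2 = ∑' a, ∑' b, F a b := by
  rw [← ENNReal.tsum_prod, ← (Nat.pairEquiv.symm).tsum_eq]
  rfl

noncomputable def wqE (q : Option (ℕ × ℕ)) : ℝ≥0∞ := q.elim 0 (fun r => 2⁻¹ ^ r.1)

lemma wqE_toReal (q : Option (ℕ × ℕ)) : (wqE q).toReal = wq q := by
  cases q <;> simp [wqE, wq]

lemma wqE_ne_top (q : Option (ℕ × ℕ)) : wqE q ≠ ⊤ := by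
  cases q <;> simp [wqE]

lemma kcE (req : ℕ → Option (ℕ × ℕ)) (hc : Computable req) (hs : ∑' i, wqE (req i) ≤ 1) :
    ∃ C, ∀ i r x, req i = some (r, x) → Kle x (r + C) := by
  refine kraft_chaitin req hc fun N => ?_
  simp only [← wqE_toReal]
  rw [← ENNReal.toReal_sum (fun x _ => wqE_ne_top _)]
  have : ∑ i ∈ Finset.range N, wqE (req i) ≤ 1 := (ENNReal.sum_le_tsum _).trans hs
  simpa using ENNReal.toReal_mono one_ne_top this

lemma tsum_unique_le {P : ℕ → Prop} [DecidablePred P] {c B : ℝ≥0∞}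
    (hu : ∀ t t', P t → P t' → t = t') (hB : ∀ t, P t → c ≤ B) :
    ∑' t, (if P t then c else 0) ≤ B := by
  by_cases h : ∃ t, P t
  · obtain ⟨t, ht⟩ := h
    rw [tsum_eq_single t (fun t' h' => if_neg (fun hp => h' (hu _ _ hp ht))), if_pos ht]
    exact hB t ht
  · push Not at h
    simp [h]

lemma tsum_geom_le (m : ℝ≥0∞) : ∑' v : ℕ, (if (2⁻¹ ^ v : ℝ≥0∞) ≤ m then (2⁻¹ ^ v : ℝ≥0∞) else 0) ≤ 2 * m := by
  classical
  by_cases h : ∃ v : ℕ, (2⁻¹ ^ v : ℝ≥0∞) ≤ m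
  · have hv := Nat.find_spec h
    have hlt : ∀ v < Nat.find h, ¬ (2⁻¹ ^ v : ℝ≥0∞) ≤ m := fun v hv => Nat.find_min h hv
    set v0 := Nat.find h
    rw [← ENNReal.summable.sum_add_tsum_nat_add' (k := v0),
      Finset.sum_eq_zero (fun v hv => if_neg (hlt v (Finset.mem_range.1 hv))), zero_add]
    calc _ ≤ ∑' k : ℕ, (2⁻¹ ^ v0 * 2⁻¹ ^ k : ℝ≥0∞) := by
          refine ENNReal.tsum_le_tsum fun k => ?_
          rw [← pow_add, add_comm v0 k]
          split_ifs <;> simp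
      _ = 2⁻¹ ^ v0 * 2 := by
          rw [ENNReal.tsum_mul_left, ENNReal.tsum_geometric, ENNReal.one_sub_inv_two, inv_inv]
      _ ≤ 2 * m := by rw [mul_comm]; gcongr
  · push Not at h
    simp [fun v => not_le.2 (h v)]

open Classical in
noncomputable instance (t v : ℕ) : DecidablePred (fun x : Str => test t (Encodable.encode x) v) :=
  fun _ => Classical.propDecidable _

noncomputable def cnt (t n v : ℕ) : ℕ :=
  ((allStr n).filter (fun x => test t (Encodable.encode x) v)).length

lemma primrec_cnt : Primrec (fun p : ℕ × ℕ × ℕ => cnt p.1 p.2.1 p.2.2) := by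
  unfold cnt
  refine Primrec.list_length.comp ?_
  refine pfilter (α := ℕ × ℕ × ℕ) (P := fun p x => test p.1 (Encodable.encode x) p.2.2) ?_
    (primrec_allStr.comp (Primrec.fst.comp Primrec.snd))
  refine primrec_test.comp (Primrec.pair (Primrec.fst.comp Primrec.fst)
    (Primrec.pair (Primrec.encode.comp Primrec.snd) (Primrec.snd.comp (Primrec.snd.comp Primrec.fst))))

lemma cnt_eq (t n v : ℕ) :
    cnt t n v = ((allStr n).toFinset.filter (fun x => test t (Encodable.encode x) v)).card := by
  classical
  unfold cnt
  rw [← List.toFinset_card_of_nodup ((allStr_nodup n).filter _)]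
  congr 1; ext x; simp

lemma cnt_mass (t n v : ℕ) : (cnt t n v : ℝ≥0∞) * 2⁻¹ ^ v ≤ ∑' x : Str,
    (if x.length = n ∧ (2⁻¹ ^ v : ℝ≥0∞) ≤ massE (Encodable.encode x) then (2⁻¹ ^ v : ℝ≥0∞) else 0) := by
  classical
  refine le_trans ?_ (ENNReal.sum_le_tsum
    ((allStr n).toFinset.filter (fun x => test t (Encodable.encode x) v)))
  rw [cnt_eq, ← nsmul_eq_mul, ← Finset.sum_const]
  refine Finset.sum_le_sum fun x hx => ?_
  rw [Finset.mem_filter, List.mem_toFinset, mem_allStr] at hx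
  rw [if_pos ⟨hx.1, test_massE hx.2⟩]

lemma sum_enc_mass : ∑' x : Str, massE (Encodable.encode x) ≤ 1 :=
  (ENNReal.tsum_comp_le_tsum_of_injective Encodable.encode_injective _).trans massE_total

lemma cnt_le {t n v γ : ℕ} (h : 4 ^ γ ≤ cnt t n v) : 2 * γ ≤ v := by
  have h1 := (cnt_mass t n v).trans (b := _) (c := 1) (by
    refine le_trans (ENNReal.tsum_le_tsum fun x => ?_) sum_enc_mass
    split_ifs with h
    · exact h.2
    · simp)
  have h2 : ((4 ^ γ : ℕ) : ℝ≥0∞) * 2⁻¹ ^ v ≤ 1 := le_trans (by gcongr) h1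
  have h3 := ENNReal.toReal_mono one_ne_top h2
  rw [ENNReal.toReal_mul] at h3
  simp at h3
  have h4 : (2:ℝ) ^ (2 * γ) ≤ 2 ^ v := by
    rw [pow_mul]; norm_num
    rwa [← div_eq_mul_inv, div_le_one (by positivity)] at h3
  exact (pow_le_pow_iff_right₀ (by norm_num)).1 h4

/-- firing condition -/
def fire (n v γ t : ℕ) : Prop := 4 ^ (γ + 1) ≤ cnt t n v ∧ ∀ t' < t, cnt t' n v < 4 ^ (γ + 1)

lemma primrec_fire : PrimrecPred (fun p : ℕ × ℕ × ℕ × ℕ => fire p.1 p.2.1 p.2.2.1 p.2.2.2) := by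
  have hn : Primrec (fun p : ℕ × ℕ × ℕ × ℕ => p.1) := Primrec.fst
  have hv : Primrec (fun p : ℕ × ℕ × ℕ × ℕ => p.2.1) := Primrec.fst.comp Primrec.snd
  have hγ : Primrec (fun p : ℕ × ℕ × ℕ × ℕ => p.2.2.1) :=
    Primrec.fst.comp (Primrec.snd.comp Primrec.snd)
  have ht : Primrec (fun p : ℕ × ℕ × ℕ × ℕ => p.2.2.2) :=
    Primrec.snd.comp (Primrec.snd.comp Primrec.snd)
  have h4 : Primrec (fun p : ℕ × ℕ × ℕ × ℕ => 4 ^ (p.2.2.1 + 1)) :=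
    primrec_pow.comp (Primrec.const 4) (Primrec.succ.comp hγ)
  refine PrimrecPred.and ?_ ?_
  · exact Primrec.nat_le.comp h4 (primrec_cnt.comp (Primrec.pair ht (Primrec.pair hn hv)))
  · refine pall (α := ℕ × ℕ × ℕ × ℕ) (P := fun p t' => cnt t' p.1 p.2.1 < 4 ^ (p.2.2.1 + 1)) ?_ ht
    exact Primrec.nat_lt.comp (primrec_cnt.comp (Primrec.pair Primrec.snd
      (Primrec.pair (hn.comp Primrec.fst) (hv.comp Primrec.fst)))) (h4.comp Primrec.fst)

open Classical in
noncomputable def wreq (n v γ t : ℕ) : Option (ℕ × ℕ) :=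
  if fire n v γ t then some (v - γ, Encodable.encode (List.replicate n true)) else none

lemma primrec_replicate : Primrec (fun n : ℕ => List.replicate n true) := by
  have : Primrec (fun n : ℕ => (List.range n).map (fun _ => true)) :=
    Primrec.list_map Primrec.list_range (Primrec.const true)
  refine this.of_eq fun n => ?_
  simp [List.map_const']

lemma computable_wreq : Primrec (fun p : ℕ × ℕ × ℕ × ℕ => wreq p.1 p.2.1 p.2.2.1 p.2.2.2) := by
  classical
  unfold wreq
  refine Primrec.ite primrec_fire ?_ (Primrec.const none)
  refine Primrec.option_some.comp (Primrec.pair ?_ ?_)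
  · exact Primrec.nat_sub.comp (Primrec.fst.comp Primrec.snd)
      (Primrec.fst.comp (Primrec.snd.comp Primrec.snd))
  · exact Primrec.encode.comp (primrec_replicate.comp Primrec.fst)

lemma wreq_t (n v γ : ℕ) : ∑' t, wqE (wreq n v γ t) ≤ 2⁻¹ ^ (γ + 2) * ∑' x : Str,
    (if x.length = n ∧ (2⁻¹ ^ v : ℝ≥0∞) ≤ massE (Encodable.encode x) then (2⁻¹ ^ v : ℝ≥0∞) else 0) := by
  classical
  have h1 : ∀ t, wqE (wreq n v γ t) = if fire n v γ t then 2⁻¹ ^ (v - γ) else 0 := by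
    intro t; unfold wreq; split_ifs <;> simp [wqE]
  simp only [h1]
  refine tsum_unique_le ?_ ?_
  · intro t t' h h'
    by_contra hne
    rcases lt_or_gt_of_ne hne with hl | hl
    · exact absurd (h'.2 t hl) (not_lt.2 h.1)
    · exact absurd (h.2 t' hl) (not_lt.2 h'.1)
  · intro t h
    have h2 := cnt_le h.1
    refine le_trans ?_ (mul_le_mul_right (cnt_mass t n v) _)
    have h3 : ((4 ^ (γ + 1) : ℕ) : ℝ≥0∞) ≤ cnt t n v := by exact_mod_cast h.1
    refine le_trans ?_ (mul_le_mul_right (mul_le_mul_left h3 _) _)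
    have h4 : ((4 ^ (γ + 1) : ℕ) : ℝ≥0∞) = 2 ^ (2 * γ + 2) := by
      push_cast
      rw [show 2 * γ + 2 = 2 * (γ + 1) by ring, pow_mul]; norm_num
    rw [h4]
    have h5 : ∀ k : ℕ, (2⁻¹ ^ k * 2 ^ k : ℝ≥0∞) = 1 := by
      intro k; rw [← mul_pow, ENNReal.inv_mul_cancel (by simp) (by simp), one_pow]
    obtain ⟨w, rfl⟩ := Nat.exists_eq_add_of_le (show γ ≤ v by omega)
    rw [show γ + w - γ = w by omega]
    apply le_of_eq
    calc (2⁻¹ ^ w : ℝ≥0∞) = 2⁻¹ ^ w * ((2⁻¹ ^ (γ + 2) * 2 ^ (γ + 2)) * (2⁻¹ ^ γ * 2 ^ γ)) := by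
          rw [h5, h5]; simp
      _ = _ := by ring

lemma wreq_total : ∑' n, ∑' v, ∑' γ, ∑' t, wqE (wreq n v γ t) ≤ 1 := by
  classical
  set g : ℕ → ℕ → ℝ≥0∞ := fun n v => ∑' x : Str,
    (if x.length = n ∧ (2⁻¹ ^ v : ℝ≥0∞) ≤ massE (Encodable.encode x) then (2⁻¹ ^ v : ℝ≥0∞) else 0) with hg
  have hgeo : ∑' γ : ℕ, (2⁻¹ ^ (γ + 2) : ℝ≥0∞) = 2⁻¹ := by
    have : ∀ γ : ℕ, (2⁻¹ ^ (γ + 2) : ℝ≥0∞) = 2⁻¹ * 2⁻¹ ^ (γ + 1) := fun γ => by ring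
    simp only [this]
    rw [ENNReal.tsum_mul_left, ENNReal.tsum_geometric_add_one, ENNReal.one_sub_inv_two, inv_inv,
      ENNReal.inv_mul_cancel (by simp) (by simp), mul_one]
  have h1 : ∀ n v, ∑' γ, ∑' t, wqE (wreq n v γ t) ≤ 2⁻¹ * g n v := by
    intro n v
    refine (ENNReal.tsum_le_tsum fun γ => wreq_t n v γ).trans ?_
    rw [ENNReal.tsum_mul_right, hgeo]
  have h2 : ∑' n, ∑' v, g n v ≤ 2 := by
    have e1 : ∀ n, ∑' v, g n v ≤ ∑' x : Str, if x.length = n then 2 * massE (Encodable.encode x) else 0 := by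
      intro n
      rw [hg]
      simp only
      rw [ENNReal.tsum_comm]
      refine ENNReal.tsum_le_tsum fun x => ?_
      by_cases hx : x.length = n
      · simp only [hx, true_and, if_true]; exact tsum_geom_le _
      · simp [hx]
    refine (ENNReal.tsum_le_tsum e1).trans ?_
    rw [ENNReal.tsum_comm]
    have e2 : ∀ x : Str, ∑' n : ℕ, (if x.length = n then 2 * massE (Encodable.encode x) else 0) =
        2 * massE (Encodable.encode x) := by
      intro x
      rw [tsum_eq_single x.length (fun n hn => if_neg (fun h => hn h.symm)), if_pos rfl]
    simp only [e2]
    rw [ENNReal.tsum_mul_left]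
    calc _ ≤ 2 * (1 : ℝ≥0∞) := mul_le_mul_right sum_enc_mass _
      _ = 2 := by simp
  calc _ ≤ ∑' n, ∑' v, 2⁻¹ * g n v := ENNReal.tsum_le_tsum fun n => ENNReal.tsum_le_tsum fun v => h1 n v
    _ = 2⁻¹ * ∑' n, ∑' v, g n v := by simp only [ENNReal.tsum_mul_left]
    _ ≤ 2⁻¹ * 2 := mul_le_mul_right h2 _
    _ = 1 := ENNReal.inv_mul_cancel (by simp) (by simp)

theorem width (c : ℕ) : ∃ B, ∀ n, ∀ F : Finset Str,
    (∀ x ∈ F, x.length = n ∧ Kcpx (Encodable.encode x) ≤ KofNat n + c) → F.card ≤ B := by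
  classical
  obtain ⟨C, hC⟩ := kcE (fun i => wreq i.unpair.1 i.unpair.2.unpair.1 i.unpair.2.unpair.2.unpair.1
      i.unpair.2.unpair.2.unpair.2) (by
      refine (computable_wreq.comp (Primrec.pair ?_ (Primrec.pair ?_ (Primrec.pair ?_ ?_)))).to_comp
      · exact Primrec.fst.comp Primrec.unpair
      · exact Primrec.fst.comp (Primrec.unpair.comp (Primrec.snd.comp Primrec.unpair))
      · exact Primrec.fst.comp (Primrec.unpair.comp (Primrec.snd.comp (Primrec.unpair.comp
          (Primrec.snd.comp Primrec.unpair))))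
      · exact Primrec.snd.comp (Primrec.unpair.comp (Primrec.snd.comp (Primrec.unpair.comp
          (Primrec.snd.comp Primrec.unpair)))))
    (by
      rw [tsum_unpair (fun a b => wqE (wreq a b.unpair.1 b.unpair.2.unpair.1 b.unpair.2.unpair.2))]
      refine le_trans (le_of_eq ?_) wreq_total
      congr 1; ext n
      rw [tsum_unpair (fun a b => wqE (wreq n a b.unpair.1 b.unpair.2))]
      congr 1; ext v
      rw [tsum_unpair (fun a b => wqE (wreq n v a b))])
  refine ⟨4 ^ (c + C + 1 + 1), fun n F hF => ?_⟩
  by_contra hlt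
  push Not at hlt
  set v := KofNat n + c with hv
  have hex : ∃ t, 4 ^ (c + C + 1 + 1) ≤ cnt t n v := by
    have : ∃ t, ∀ x ∈ F, test t (Encodable.encode x) v := by
      have : ∀ F' : Finset Str, F' ⊆ F → ∃ t0, ∀ t ≥ t0, ∀ x ∈ F', test t (Encodable.encode x) v := by
        intro F'
        induction F' using Finset.induction_on with
        | empty => intro _; exact ⟨0, by simp⟩
        | insert a s ha ih =>
          intro hs
          obtain ⟨t1, h1⟩ := ih (fun x hx => hs (Finset.mem_insert_of_mem hx))
          obtain ⟨t2, h2⟩ := test_eventually (Encodable.encode a) v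
          refine ⟨max t1 t2, fun t ht x hx => ?_⟩
          rcases Finset.mem_insert.1 hx with rfl | hx
          · exact (h2 t (le_trans (le_max_right _ _) ht)).2 (hF _ (hs hx)).2
          · exact h1 t (le_trans (le_max_left _ _) ht) x hx
      obtain ⟨t, h⟩ := this F subset_rfl
      exact ⟨t, h t le_rfl⟩
    obtain ⟨t, ht⟩ := this
    refine ⟨t, hlt.le.trans ?_⟩
    rw [cnt_eq]
    refine Finset.card_le_card fun x hx => ?_
    rw [Finset.mem_filter, List.mem_toFinset, mem_allStr]
    exact ⟨(hF x hx).1, ht x hx⟩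
  have hf : fire n v (c + C + 1) (Nat.find hex) :=
    ⟨Nat.find_spec hex, fun t' ht' => not_le.1 (Nat.find_min hex ht')⟩
  have h1 := hC (Nat.pair n (Nat.pair v (Nat.pair (c + C + 1) (Nat.find hex)))) (v - (c + C + 1))
    (Encodable.encode (List.replicate n true)) (by simp only [Nat.unpair_pair]; rw [wreq, if_pos hf])
  have h2 := (kle_iff _ _).1 h1
  have h3 := cnt_le hf.1
  change KofNat n ≤ _ at h2
  omega

end KT

namespace KT

def TT (c : ℕ) (ρ : Str) : Prop :=
  ∀ m < ρ.length + 1, Kcpx (Encodable.encode (ρ.take m)) ≤ KofNat m + c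

def Ts (c s : ℕ) (ρ : Str) : Prop :=
  ∀ m < ρ.length + 1, ∀ v < s, test s (Encodable.encode (List.replicate m true)) v →
    test s (Encodable.encode (ρ.take m)) (v + c)

lemma TT_take {c : ℕ} {ρ : Str} (h : TT c ρ) (n : ℕ) : TT c (ρ.take n) := by
  intro m hm
  rw [List.length_take] at hm
  rw [List.take_take, min_eq_left (by omega)]
  exact h m (by omega)

lemma primrec_Ts (c : ℕ) : PrimrecPred (fun p : ℕ × Str => Ts c p.1 p.2) := by
  refine pall (α := ℕ × Str) (P := fun p m => ∀ v < p.1,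
    test p.1 (Encodable.encode (List.replicate m true)) v →
    test p.1 (Encodable.encode (p.2.take m)) (v + c)) ?_
    (Primrec.succ.comp (Primrec.list_length.comp Primrec.snd))
  refine pall (α := (ℕ × Str) × ℕ) (P := fun p v =>
    test p.1.1 (Encodable.encode (List.replicate p.2 true)) v →
    test p.1.1 (Encodable.encode (p.1.2.take p.2)) (v + c)) ?_ (Primrec.fst.comp Primrec.fst)
  have hs : Primrec (fun p : ((ℕ × Str) × ℕ) × ℕ => p.1.1.1) :=
    Primrec.fst.comp (Primrec.fst.comp Primrec.fst)
  have hρ : Primrec (fun p : ((ℕ × Str) × ℕ) × ℕ => p.1.1.2) :=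
    Primrec.snd.comp (Primrec.fst.comp Primrec.fst)
  have hm : Primrec (fun p : ((ℕ × Str) × ℕ) × ℕ => p.1.2) := Primrec.snd.comp Primrec.fst
  refine pimp ?_ ?_
  · exact primrec_test.comp (Primrec.pair hs (Primrec.pair
      (Primrec.encode.comp (primrec_replicate.comp hm)) Primrec.snd))
  · exact primrec_test.comp (Primrec.pair hs (Primrec.pair
      (Primrec.encode.comp (Primrec.list_take.comp hm hρ))
      (Primrec.nat_add.comp Primrec.snd (Primrec.const c))))

lemma Ts_eventually (c : ℕ) (ρ : Str) : ∃ s0, ∀ s ≥ s0, (Ts c s ρ ↔ TT c ρ) := by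
  by_cases h : TT c ρ
  · obtain ⟨s0, h0⟩ := eventually_all_lt (P := fun m s => ∀ v < s,
      test s (Encodable.encode (List.replicate m true)) v →
      test s (Encodable.encode (ρ.take m)) (v + c)) (ρ.length + 1) (fun m hm => by
        obtain ⟨s1, h1⟩ := test_eventually (Encodable.encode (ρ.take m)) (KofNat m + c)
        obtain ⟨s2, h2⟩ := eventually_all_lt (P := fun v s =>
          test s (Encodable.encode (List.replicate m true)) v → KofNat m ≤ v) (KofNat m) (fun v _ => by
            obtain ⟨s3, h3⟩ := test_eventually (Encodable.encode (List.replicate m true)) v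
            exact ⟨s3, fun s hs ht => (h3 s hs).1 ht⟩)
        refine ⟨max s1 s2, fun s hs v _ ht => ?_⟩
        have hv : KofNat m ≤ v := by
          by_contra hlt
          exact hlt (h2 s (le_trans (le_max_right _ _) hs) v (by omega) ht)
        exact test_mono ((h1 s (le_trans (le_max_left _ _) hs)).2 (h m hm)) (by omega))
    exact ⟨s0, fun s hs => iff_of_true (h0 s hs) h⟩
  · have h' := h
    unfold TT at h'
    push Not at h'
    obtain ⟨m, hm, hK⟩ := h'
    obtain ⟨s1, h1⟩ := test_eventually (Encodable.encode (ρ.take m)) (KofNat m + c)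
    obtain ⟨s2, h2⟩ := test_eventually (Encodable.encode (List.replicate m true)) (KofNat m)
    refine ⟨max (max s1 s2) (KofNat m + 1), fun s hs => iff_of_false (fun hT => ?_) h⟩
    have a1 : s ≥ s1 := le_trans (le_trans (le_max_left _ _) (le_max_left _ _)) hs
    have a2 : s ≥ s2 := le_trans (le_trans (le_max_right _ _) (le_max_left _ _)) hs
    have a3 : s ≥ KofNat m + 1 := le_trans (le_max_right _ _) hs
    have := (h1 s a1).1 (hT m hm (KofNat m) (by omega) ((h2 s a2).2 le_rfl))
    omega

/-- extendible nodes -/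
def Ext (c : ℕ) (σ : Str) : Prop := ∀ N ≥ σ.length, ∃ ρ : Str, ρ.length = N ∧ σ <+: ρ ∧ TT c ρ

lemma Ext_take {c : ℕ} {ρ : Str} (h : Ext c ρ) (k : ℕ) : Ext c (ρ.take k) := by
  intro N hN
  obtain ⟨π, h1, h2, h3⟩ := h (max N ρ.length) (le_max_right _ _)
  refine ⟨π.take N, ?_, ?_, TT_take h3 _⟩
  · rw [List.length_take, h1]; simp
  · exact prefix_take ((List.take_prefix _ _).trans h2) hN

lemma Ext_extend {c : ℕ} {σ : Str} (h : Ext c σ) {n : ℕ} (hn : σ.length ≤ n) :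
    ∃ ρ : Str, ρ.length = n ∧ σ <+: ρ ∧ Ext c ρ := by
  classical
  by_contra hno
  push Not at hno
  have h1 : ∀ ρ : Str, ∃ N, ρ.length = n → σ <+: ρ → n ≤ N ∧
      ∀ π : Str, π.length = N → ρ <+: π → ¬ TT c π := by
    intro ρ
    by_cases hρ : ρ.length = n ∧ σ <+: ρ
    · have := hno ρ hρ.1 hρ.2
      unfold Ext at this
      push Not at this
      obtain ⟨N, hN, h2⟩ := this
      exact ⟨N, fun _ _ => ⟨by omega, h2⟩⟩
    · exact ⟨0, fun a b => absurd ⟨a, b⟩ hρ⟩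
  choose f hf using h1
  set M := max n ((allStr n).toFinset.sup f)
  obtain ⟨π, e1, e2, e3⟩ := h M (le_trans hn (le_max_left _ _))
  have hl : (π.take n).length = n := by
    rw [List.length_take, e1]; exact min_eq_left (le_max_left _ _)
  obtain ⟨g1, g2⟩ := hf (π.take n) hl (prefix_take e2 hn)
  have hfM : f (π.take n) ≤ M := by
    refine le_trans ?_ (le_max_right _ _)
    exact Finset.le_sup (f := f) (by rw [List.mem_toFinset, mem_allStr]; exact hl)
  refine g2 (π.take (f (π.take n))) ?_ ?_ (TT_take e3 _)
  · rw [List.length_take, e1]; exact min_eq_left hfM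
  · exact prefix_take (List.take_prefix _ _) (by omega)

lemma isolate (A : ℕ → Bool) (c : ℕ)
    (hc : ∀ n, Kcpx (Encodable.encode (strPrefix A n)) ≤ KofNat n + c) :
    ∃ k, ∀ n, ∃ N, n ≤ N ∧ k ≤ N ∧ ∀ ρ : Str, ρ.length = N → strPrefix A k <+: ρ → TT c ρ →
      ρ.take n = strPrefix A n := by
  classical
  have hTA : ∀ n, TT c (strPrefix A n) := by
    intro n m hm
    rw [strPrefix_length] at hm
    rw [strPrefix_take A (by omega)]
    exact hc m
  have hpre : ∀ m n, m ≤ n → strPrefix A m <+: strPrefix A n := by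
    intro m n h
    rw [← strPrefix_take A h]; exact List.take_prefix _ _
  have hEA : ∀ n, Ext c (strPrefix A n) := by
    intro n N hN
    rw [strPrefix_length] at hN
    exact ⟨strPrefix A N, strPrefix_length _ _, hpre _ _ hN, hTA N⟩
  obtain ⟨B, hB⟩ := width c
  set E : ℕ → Finset Str := fun n => (allStr n).toFinset.filter (Ext c) with hE
  have memE : ∀ n ρ, ρ ∈ E n ↔ ρ.length = n ∧ Ext c ρ := by
    intro n ρ; simp [hE, mem_allStr]
  have hEB : ∀ n, (E n).card ≤ B := by
    intro n
    apply hB n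
    intro x hx
    obtain ⟨h1, h2⟩ := (memE _ _).1 hx
    refine ⟨h1, ?_⟩
    obtain ⟨ρ, e1, e2, e3⟩ := h2 x.length le_rfl
    have : x = ρ := e2.eq_of_length e1.symm
    subst this
    have := e3 n (by omega)
    rwa [← h1, List.take_length, h1] at this
  -- k maximal
  have hmax : ∃ k, ∀ n, (E n).card ≤ (E k).card := by
    by_contra hno
    push Not at hno
    have : ∀ j, ∃ n, j ≤ (E n).card := by
      intro j
      induction j with
      | zero => exact ⟨0, Nat.zero_le _⟩
      | succ j ih =>
        obtain ⟨n, hn⟩ := ih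
        obtain ⟨n', hn'⟩ := hno n
        exact ⟨n', by omega⟩
    obtain ⟨n, hn⟩ := this (B + 1)
    have := hEB n
    omega
  obtain ⟨k, hk⟩ := hmax
  have huniq : ∀ n ≥ k, ∀ ρ, ρ.length = n → Ext c ρ → strPrefix A k <+: ρ → ρ = strPrefix A n := by
    intro n hn ρ h1 h2 h3
    have := Finset.inj_on_of_surj_on_of_card_le (s := E n) (t := E k) (fun ρ _ => ρ.take k)
      (by
        intro ρ hρ
        obtain ⟨a, b⟩ := (memE _ _).1 hρ
        refine (memE _ _).2 ⟨?_, Ext_take b k⟩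
        rw [List.length_take, a]; omega)
      (by
        intro σ hσ
        obtain ⟨a, b⟩ := (memE _ _).1 hσ
        obtain ⟨ρ, e1, e2, e3⟩ := Ext_extend b (n := n) (by omega)
        refine ⟨ρ, (memE _ _).2 ⟨e1, e3⟩, ?_⟩
        rw [← a]; exact (List.prefix_iff_eq_take.1 e2).symm)
      (hk n)
    refine this ((memE _ _).2 ⟨h1, h2⟩) ((memE _ _).2 ⟨strPrefix_length _ _, hEA n⟩) ?_
    rw [strPrefix_take A hn]
    have := List.prefix_iff_eq_take.1 h3
    rw [strPrefix_length] at this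
    exact this.symm
  refine ⟨k, fun n => ?_⟩
  -- compactness
  set n' := max n k
  have h1 : ∀ ρ : Str, ∃ N, ρ.length = n' → ¬ Ext c ρ → n' ≤ N ∧
      ∀ π : Str, π.length = N → ρ <+: π → ¬ TT c π := by
    intro ρ
    by_cases hρ : ρ.length = n' ∧ ¬ Ext c ρ
    · have := hρ.2
      unfold Ext at this
      push Not at this
      obtain ⟨N, hN, h2⟩ := this
      exact ⟨N, fun _ _ => ⟨by omega, h2⟩⟩
    · exact ⟨0, fun a b => absurd ⟨a, b⟩ hρ⟩
  choose f hf using h1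
  have hnn : n ≤ n' := le_max_left _ _
  have hkn : k ≤ n' := le_max_right _ _
  have hnM : n' ≤ max n' ((allStr n').toFinset.sup f) := le_max_left _ _
  refine ⟨max n' ((allStr n').toFinset.sup f), by omega, by omega, ?_⟩
  intro π e1 e2 e3
  have hl : (π.take n').length = n' := by
    rw [List.length_take, e1]; exact min_eq_left (le_max_left _ _)
  have hExt : Ext c (π.take n') := by
    by_contra hnE
    obtain ⟨g1, g2⟩ := hf _ hl hnE
    have hfM : f (π.take n') ≤ max n' ((allStr n').toFinset.sup f) := by
      refine le_trans ?_ (le_max_right _ _)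
      exact Finset.le_sup (f := f) (by rw [List.mem_toFinset, mem_allStr]; exact hl)
    refine g2 (π.take (f (π.take n'))) ?_ ?_ (TT_take e3 _)
    · rw [List.length_take, e1]; exact min_eq_left hfM
    · exact prefix_take (List.take_prefix _ _) (by omega)
  have := huniq n' hkn _ hl hExt (prefix_take e2 (by rw [strPrefix_length]; exact hkn))
  have h2 : (π.take n').take n = (strPrefix A n').take n := by rw [this]
  rw [List.take_take, min_eq_left hnn, strPrefix_take A hnn] at h2
  exact h2

def unan (c : ℕ) (τ : Str) (b : Bool) (s i N : ℕ) : Prop :=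
  i < N ∧ τ.length ≤ N ∧ ∀ ρ ∈ allStr N, τ <+: ρ → Ts c s ρ → ρ.getD i false = b

lemma primrec_unan (c : ℕ) (τ : Str) (b : Bool) :
    PrimrecPred (fun p : ℕ × ℕ × ℕ => unan c τ b p.1 p.2.1 p.2.2) := by
  have hs : Primrec (fun p : ℕ × ℕ × ℕ => p.1) := Primrec.fst
  have hi : Primrec (fun p : ℕ × ℕ × ℕ => p.2.1) := Primrec.fst.comp Primrec.snd
  have hN : Primrec (fun p : ℕ × ℕ × ℕ => p.2.2) := Primrec.snd.comp Primrec.snd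
  refine PrimrecPred.and (Primrec.nat_lt.comp hi hN) (PrimrecPred.and
    (Primrec.nat_le.comp (Primrec.const _) hN) ?_)
  refine pallL (α := ℕ × ℕ × ℕ) (β := Str) (P := fun p ρ => τ <+: ρ → Ts c p.1 ρ → ρ.getD p.2.1 false = b) ?_
    (primrec_allStr.comp hN)
  refine pimp ?_ (pimp ?_ ?_)
  · exact primrecRel_prefix.comp (Primrec.const τ) Primrec.snd
  · exact (primrec_Ts c).comp (Primrec.pair (hs.comp Primrec.fst) Primrec.snd)
  · exact Primrec.eq.comp ((Primrec.list_getD false).comp Primrec.snd (hi.comp Primrec.fst))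
      (Primrec.const b)

lemma eventually_forall_mem {β : Type*} {P : β → ℕ → Prop} (l : List β)
    (h : ∀ x ∈ l, ∃ t0, ∀ t ≥ t0, P x t) : ∃ t0, ∀ t ≥ t0, ∀ x ∈ l, P x t := by
  induction l with
  | nil => exact ⟨0, by simp⟩
  | cons a l ih =>
    obtain ⟨t1, h1⟩ := ih (fun x hx => h x (by simp [hx]))
    obtain ⟨t2, h2⟩ := h a (by simp)
    refine ⟨max t1 t2, fun t ht x hx => ?_⟩
    rcases List.mem_cons.1 hx with rfl | hx
    · exact h2 t (le_trans (le_max_right _ _) ht)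
    · exact h1 t (le_trans (le_max_left _ _) ht) x hx

def bitP (c : ℕ) (τ : Str) (s i : ℕ) : Prop :=
  ∃ N < s + 1, unan c τ true s i N ∧ ∀ N' < N, ¬ unan c τ false s i N'

lemma primrec_bitP (c : ℕ) (τ : Str) : PrimrecPred (fun p : ℕ × ℕ => bitP c τ p.1 p.2) := by
  refine pex (α := ℕ × ℕ) (P := fun p N => unan c τ true p.1 p.2 N ∧ ∀ N' < N, ¬ unan c τ false p.1 p.2 N')
    ?_ (Primrec.succ.comp Primrec.fst)
  refine PrimrecPred.and ?_ ?_
  · exact (primrec_unan c τ true).comp (Primrec.pair (Primrec.fst.comp Primrec.fst)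
      (Primrec.pair (Primrec.snd.comp Primrec.fst) Primrec.snd))
  · refine pall (α := (ℕ × ℕ) × ℕ) (P := fun p N' => ¬ unan c τ false p.1.1 p.1.2 N') ?_ Primrec.snd
    refine PrimrecPred.not ?_
    exact (primrec_unan c τ false).comp (Primrec.pair (Primrec.fst.comp (Primrec.fst.comp Primrec.fst))
      (Primrec.pair (Primrec.snd.comp (Primrec.fst.comp Primrec.fst)) Primrec.snd))

theorem delta2 (A : ℕ → Bool) (hA : KTrivial A) :
    ∃ bit : ℕ → ℕ → Bool, Primrec₂ bit ∧ ∀ i, ∃ s0, ∀ s ≥ s0, bit s i = A i := by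
  classical
  obtain ⟨c, hc⟩ := hA
  obtain ⟨k, hk⟩ := isolate A c hc
  set τ := strPrefix A k
  refine ⟨fun s i => decide (bitP c τ s i), ?_, fun i => ?_⟩
  · obtain ⟨_, h⟩ := primrec_bitP c τ
    exact h.of_eq (fun a => by congr)
  obtain ⟨N0, h0, h1, h2⟩ := hk (i + 1)
  have hTA : ∀ n, TT c (strPrefix A n) := by
    intro n m hm
    rw [strPrefix_length] at hm
    rw [strPrefix_take A (by omega)]
    exact hc m
  obtain ⟨s1, hs1⟩ := eventually_all_lt (P := fun N s => ∀ ρ ∈ allStr N, (Ts c s ρ ↔ TT c ρ)) (N0 + 1)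
    (fun N _ => eventually_forall_mem _ (fun ρ _ => Ts_eventually c ρ))
  refine ⟨max s1 N0, fun s hs => ?_⟩
  have hsN : N0 ≤ s := le_trans (le_max_right _ _) hs
  have hT := hs1 s (le_trans (le_max_left _ _) hs)
  have hget : ∀ N, i < N → (strPrefix A N).getD i false = A i := by
    intro N hN; simp [strPrefix, hN]
  have hun : ∀ N < N0 + 1, ∀ b, unan c τ b s i N → A i = b := by
    intro N hN b ⟨u1, u2, u3⟩
    rw [← hget N u1]
    refine u3 _ (mem_allStr.2 (strPrefix_length _ _)) ?_ ((hT N hN _ (mem_allStr.2 (strPrefix_length _ _))).2 (hTA N))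
    rw [strPrefix_length] at u2
    show strPrefix A k <+: _
    rw [← strPrefix_take A u2]; exact List.take_prefix _ _
  have hN0 : unan c τ (A i) s i N0 := by
    refine ⟨by omega, by rw [strPrefix_length]; exact h1, fun ρ hρ hp ht => ?_⟩
    have e := h2 ρ (mem_allStr.1 hρ) hp ((hT N0 (by omega) ρ hρ).1 ht)
    rw [← hget (i + 1) (by omega), ← e]
    simp [List.getD_eq_getElem?_getD]
  cases hAi : A i with
  | true =>
    rw [hAi] at hN0 hun
    simp only [decide_eq_true_eq]
    refine ⟨N0, by omega, hN0, fun N' hN' hu => ?_⟩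
    have := hun N' (by omega) false hu
    simp at this
  | false =>
    rw [hAi] at hN0 hun
    simp only [decide_eq_false_iff_not]
    rintro ⟨N, hN, u1, u2⟩
    by_cases h : N < N0 + 1
    · have := hun N h true u1
      simp at this
    · exact u2 N0 (by omega) hN0

end KT

namespace KT

section
variable {α : Type*} [Primcodable α]

lemma p_add {f g : α → ℕ} (hf : Primrec f) (hg : Primrec g) : Primrec (fun a => f a + g a) :=
  Primrec.nat_add.comp hf hg

lemma p_mul {f g : α → ℕ} (hf : Primrec f) (hg : Primrec g) : Primrec (fun a => f a * g a) :=
  Primrec.nat_mul.comp hf hg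

lemma p_sub {f g : α → ℕ} (hf : Primrec f) (hg : Primrec g) : Primrec (fun a => f a - g a) :=
  Primrec.nat_sub.comp hf hg

lemma p_c {β : Type*} [Primcodable β] (b : β) : Primrec (fun _ : α => b) := Primrec.const b

lemma p_dadd {f g : α → Dy} (hf : Primrec f) (hg : Primrec g) : Primrec (fun a => dadd (f a) (g a)) := by
  unfold dadd
  exact Primrec.pair (p_add (p_mul (Primrec.fst.comp hf) (primrec_pow2 (Primrec.snd.comp hg)))
    (p_mul (Primrec.fst.comp hg) (primrec_pow2 (Primrec.snd.comp hf))))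
    (p_add (Primrec.snd.comp hf) (Primrec.snd.comp hg))

lemma p_dshift {f : α → ℕ} {g : α → Dy} (hf : Primrec f) (hg : Primrec g) :
    Primrec (fun a => dshift (f a) (g a)) := by
  unfold dshift
  exact Primrec.pair (Primrec.fst.comp hg) (p_add (Primrec.snd.comp hg) hf)

lemma p_done {f : α → Frame} (hf : Primrec f) : PrimrecPred (fun a => done (f a)) := by
  unfold done
  have g : Primrec (fun a => (f a).2.1) := Primrec.fst.comp (Primrec.snd.comp hf)
  have D : Primrec (fun a => (f a).2.2.2.2) :=
    Primrec.snd.comp (Primrec.snd.comp (Primrec.snd.comp (Primrec.snd.comp hf)))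
  exact Primrec.nat_le.comp (p_mul (Primrec.fst.comp g) (primrec_pow2 (Primrec.snd.comp D)))
    (p_mul (Primrec.fst.comp D) (primrec_pow2 (Primrec.snd.comp g)))

lemma p_take {f : α → ℕ} {g : α → Str} (hf : Primrec f) (hg : Primrec g) :
    Primrec (fun a => (g a).take (f a)) := Primrec.list_take.comp hf hg

lemma p_lcp {f g : α → Str} (hf : Primrec f) (hg : Primrec g) : Primrec (fun a => lcp (f a) (g a)) := by
  unfold lcp
  refine Primrec.nat_findGreatest (p := fun a h => (g a).take h = (f a).take h)
    (Primrec.list_length.comp hf) ?_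
  exact Primrec.eq.comp (p_take Primrec.snd (hg.comp Primrec.fst))
    (p_take Primrec.snd (hf.comp Primrec.fst))

variable {u : Str → Dy} (e : ℕ)

lemma p_fresh (hu : Primrec u) {n : α → ℕ} {τ : α → Str} {goal : α → Dy} {d : α → ℕ} (hn : Primrec n)
    (hτ : Primrec τ) (hg : Primrec goal) (hd : Primrec d) :
    Primrec (fun a => fresh u e (n a) (τ a) (goal a) (d a)) := by
  unfold fresh
  refine Primrec.list_map (f := fun a => List.range (n a)) (g := fun a i => ((τ a,
    (if i = 0 then goal a else dshift (d a + 2 * (i - 1) + 1 + e) (u (τ a))), d a + 2 * i, 1, (0, 0)) : Frame))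
    (Primrec.list_range.comp hn) ?_
  have hτ' := hτ.comp (Primrec.fst (α := α) (β := ℕ))
  have hg' := hg.comp (Primrec.fst (α := α) (β := ℕ))
  have hd' := hd.comp (Primrec.fst (α := α) (β := ℕ))
  have hi := (Primrec.snd (α := α) (β := ℕ))
  refine Primrec.pair hτ' (Primrec.pair ?_ (Primrec.pair (p_add hd' (p_mul (p_c 2) hi)) (p_c _)))
  refine Primrec.ite (Primrec.eq.comp hi (p_c 0)) hg' (p_dshift ?_ (hu.comp hτ'))
  exact p_add (p_add (p_add hd' (p_mul (p_c 2) (p_sub hi (p_c 1)))) (p_c 1)) (p_c e)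

lemma p_gain (hu : Primrec u) {a h n : α → ℕ} {ρ : α → Str} (ha : Primrec a) (hρ : Primrec ρ)
    (hh : Primrec h) (hn : Primrec n) : Primrec (fun x => gain u (a x) (ρ x) (h x) (n x)) := by
  unfold gain
  refine Primrec.nat_rec' (f := n) (g := fun _ => ((0, 0) : Dy))
    (h := fun x p => if h x < p.1 then dadd p.2 (dshift (a x) (u ((ρ x).take p.1))) else p.2)
    hn (p_c _) ?_
  have hk : Primrec (fun q : α × ℕ × Dy => q.2.1) := Primrec.fst.comp Primrec.snd
  have hD : Primrec (fun q : α × ℕ × Dy => q.2.2) := Primrec.snd.comp Primrec.snd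
  refine Primrec.ite (Primrec.nat_lt.comp (hh.comp Primrec.fst) hk) ?_ hD
  exact p_dadd hD (p_dshift (ha.comp Primrec.fst) (hu.comp (p_take hk (hρ.comp Primrec.fst))))

lemma p_restart (hu : Primrec u) {ρ : α → Str} {f : α → Frame} {D : α → Dy} {n : α → ℕ}
    (hρ : Primrec ρ) (hf : Primrec f) (hD : Primrec D) (hn : Primrec n) :
    Primrec (fun a => restart u e (ρ a) (f a) (D a) (n a)) := by
  unfold restart
  have f1 : Primrec (fun a => (f a).1) := Primrec.fst.comp hf
  have f2 : Primrec (fun a => (f a).2.1) := Primrec.fst.comp (Primrec.snd.comp hf)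
  have f3 : Primrec (fun a => (f a).2.2.1) := Primrec.fst.comp (Primrec.snd.comp (Primrec.snd.comp hf))
  have f4 : Primrec (fun a => (f a).2.2.2.1 + 1) := Primrec.succ.comp
    (Primrec.fst.comp (Primrec.snd.comp (Primrec.snd.comp (Primrec.snd.comp hf))))
  have f5 : Primrec (fun a => (f a).2.2.1 + 1) := Primrec.succ.comp f3
  exact Primrec.list_cons.comp (Primrec.pair f1 (Primrec.pair f2 (Primrec.pair f3 (Primrec.pair f4 hD))))
    (p_fresh e hu hn hρ (p_dshift (p_add f5 (p_c e)) (hu.comp hρ)) (p_add f5 f4))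

lemma p_actG (hu : Primrec u) {X : α → Str} {f g : α → Frame} {rest : α → List Frame}
    {ih : α → List Frame × Option ℕ} (hX : Primrec X) (hf : Primrec f) (hr : Primrec rest)
    (hi : Primrec ih) (hg : Primrec g) :
    Primrec (fun a => actG u e (X a) (f a) (rest a) (ih a) (g a)) := by
  unfold actG
  have g1 : Primrec (fun a => (g a).1) := Primrec.fst.comp hg
  have f3 : Primrec (fun a => (f a).2.2.1) := Primrec.fst.comp (Primrec.snd.comp (Primrec.snd.comp hf))
  have fD : Primrec (fun a => (f a).2.2.2.2) :=
    Primrec.snd.comp (Primrec.snd.comp (Primrec.snd.comp (Primrec.snd.comp hf)))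
  have gD : Primrec (fun a => (g a).2.2.2.2) :=
    Primrec.snd.comp (Primrec.snd.comp (Primrec.snd.comp (Primrec.snd.comp hg)))
  have gl : Primrec (fun a => (g a).1.length) := Primrec.list_length.comp g1
  have rl : Primrec (fun a => (rest a).length) := Primrec.list_length.comp hr
  have lc : Primrec (fun a => lcp (g a).1 (X a)) := p_lcp g1 hX
  refine Primrec.ite (primrecRel_prefix.comp g1 hX) (Primrec.ite (p_done hg)
    (Primrec.ite (Primrec.nat_lt.comp gl (Primrec.list_length.comp hX)) ?_ ?_) ?_) ?_
  · exact Primrec.pair (p_restart e hu (p_take (Primrec.succ.comp gl) hX) hf fD rl) (p_c _)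
  · exact Primrec.pair (Primrec.list_cons.comp hf hr) (p_c _)
  · exact Primrec.pair (Primrec.list_cons.comp hf (Primrec.fst.comp hi)) (Primrec.snd.comp hi)
  · refine Primrec.pair (p_restart e hu (p_take (Primrec.succ.comp lc) hX) hf (p_dadd fD (p_dadd
      (p_gain hu ?_ g1 lc gl) gD)) rl) (p_c _)
    exact p_add (Primrec.succ.comp f3) (p_c e)

lemma p_act (hu : Primrec u) {X : α → Str} {f : α → Frame} {rest : α → List Frame}
    {ih : α → List Frame × Option ℕ} (hX : Primrec X) (hf : Primrec f) (hr : Primrec rest)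
    (hi : Primrec ih) :
    Primrec (fun a => act u e (X a) (f a) (rest a) (ih a)) := by
  unfold act
  refine Primrec.ite (p_done hf) (Primrec.pair (Primrec.list_cons.comp hf hr) (p_c _)) ?_
  have f1 : Primrec (fun a => (f a).1) := Primrec.fst.comp hf
  have f2 : Primrec (fun a => (f a).2.1) := Primrec.fst.comp (Primrec.snd.comp hf)
  have f3 : Primrec (fun a => (f a).2.2.1) := Primrec.fst.comp (Primrec.snd.comp (Primrec.snd.comp hf))
  have f4 : Primrec (fun a => (f a).2.2.2.1) :=
    Primrec.fst.comp (Primrec.snd.comp (Primrec.snd.comp (Primrec.snd.comp hf)))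
  refine Primrec.list_casesOn (f := rest)
    (g := fun a => (([((f a).1, (f a).2.1, (f a).2.2.1, (f a).2.2.2.1, (f a).2.1)], some (f a).2.1.2) :
      List Frame × Option ℕ))
    (h := fun a p => actG u e (X a) (f a) (rest a) (ih a) p.1) hr ?_ ?_
  · refine Primrec.pair (Primrec.list_cons.comp (Primrec.pair f1 (Primrec.pair f2 (Primrec.pair f3
      (Primrec.pair f4 f2)))) (p_c _)) (Primrec.option_some.comp (Primrec.snd.comp f2))
  · exact p_actG e hu (hX.comp Primrec.fst) (hf.comp Primrec.fst) (hr.comp Primrec.fst)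
      (hi.comp Primrec.fst) (Primrec.fst.comp Primrec.snd)

lemma primrec_step (hu : Primrec u) : Primrec₂ (step u e) := by
  refine Primrec.list_rec (α := Str × List Frame) (f := fun p => p.2) (g := fun _ => ([], none))
    (h := fun p q => act u e p.1 q.1 q.2.1 q.2.2) Primrec.snd (p_c _) ?_
  exact p_act e hu (Primrec.fst.comp Primrec.fst) (Primrec.fst.comp Primrec.snd)
    (Primrec.fst.comp (Primrec.snd.comp Primrec.snd)) (Primrec.snd.comp (Primrec.snd.comp Primrec.snd))

end
end KT

namespace KT

section
variable (u : Str → Dy) (e : ℕ) (Y : ℕ → Str) (c : ℕ)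

def good (b t : ℕ) (coins : List (ℕ × ℕ)) : Prop :=
  ∀ q ∈ coins, test t (Encodable.encode ((Y t).take q.1)) (q.2 + b)

abbrev DS := List (ℕ × ℕ) × List Frame

def pay (t : ℕ) (coins : List (ℕ × ℕ)) (o : Option ℕ) : List (ℕ × ℕ) :=
  o.elim coins (fun q => (t, q) :: coins)

open Classical in
noncomputable def dst (b t : ℕ) (S : DS) : DS × Option ℕ :=
  if good Y b t S.1 then
    ((pay t S.1 (step u e (Y t) S.2).2, (step u e (Y t) S.2).1), (step u e (Y t) S.2).2)
  else (S, none)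

def bnd (d : ℕ) : ℕ := 2 * d + 1 + c
def kk (d : ℕ) : ℕ := 2 ^ (bnd c d + 1) + 1

noncomputable def drv (d t : ℕ) : DS :=
  Nat.rec ([], fresh u e (kk c d + 1) [] (1, 1) 1) (fun t ih => (dst u e Y (bnd c d) t ih).1) t

noncomputable def outp (d t : ℕ) : Option ℕ := (dst u e Y (bnd c d) t (drv u e Y c d t)).2

def GoodT (d t : ℕ) : Prop := good Y (bnd c d) t (drv u e Y c d t).1

lemma p_good (hY : Primrec Y) :
    PrimrecPred (fun p : ℕ × ℕ × List (ℕ × ℕ) => good Y p.1 p.2.1 p.2.2) := by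
  refine pallL (α := ℕ × ℕ × List (ℕ × ℕ))
    (P := fun p q => test p.2.1 (Encodable.encode ((Y p.2.1).take q.1)) (q.2 + p.1)) ?_
    (Primrec.snd.comp Primrec.snd)
  have ht : Primrec (fun p : (ℕ × ℕ × List (ℕ × ℕ)) × (ℕ × ℕ) => p.1.2.1) :=
    Primrec.fst.comp (Primrec.snd.comp Primrec.fst)
  refine primrec_test.comp (Primrec.pair ht (Primrec.pair (Primrec.encode.comp (p_take
    (Primrec.fst.comp Primrec.snd) (hY.comp ht))) (p_add (Primrec.snd.comp Primrec.snd)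
    (Primrec.fst.comp Primrec.fst))))

open Classical in
lemma p_dst (hu : Primrec u) (hY : Primrec Y) :
    Primrec (fun p : ℕ × ℕ × DS => dst u e Y p.1 p.2.1 p.2.2) := by
  unfold dst
  have ht : Primrec (fun p : ℕ × ℕ × DS => p.2.1) := Primrec.fst.comp Primrec.snd
  have hS : Primrec (fun p : ℕ × ℕ × DS => p.2.2) := Primrec.snd.comp Primrec.snd
  have hs : Primrec (fun p : ℕ × ℕ × DS => step u e (Y p.2.1) p.2.2.2) :=
    (primrec_step e hu).comp (hY.comp ht) (Primrec.snd.comp hS)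
  refine Primrec.ite ?_ ?_ (Primrec.pair hS (p_c _))
  · exact (p_good Y hY).comp (Primrec.pair Primrec.fst (Primrec.pair ht (Primrec.fst.comp hS)))
  · refine Primrec.pair (Primrec.pair ?_ (Primrec.fst.comp hs)) (Primrec.snd.comp hs)
    have : Primrec (fun p : ℕ × ℕ × DS => (Option.casesOn (step u e (Y p.2.1) p.2.2.2).2 p.2.2.1
        (fun q => (p.2.1, q) :: p.2.2.1) : List (ℕ × ℕ))) := by
      refine Primrec.option_casesOn (Primrec.snd.comp hs) (Primrec.fst.comp hS) ?_
      exact Primrec.list_cons.comp (Primrec.pair (ht.comp Primrec.fst) Primrec.snd)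
        (Primrec.fst.comp (hS.comp Primrec.fst))
    refine this.of_eq fun p => ?_
    unfold pay
    cases (step u e (Y p.2.1) p.2.2.2).2 <;> rfl

lemma p_bnd : Primrec (bnd c) :=
  p_add (p_add (p_mul (p_c 2) Primrec.id) (p_c 1)) (p_c c)

lemma p_drv (hu : Primrec u) (hY : Primrec Y) : Primrec (fun p : ℕ × ℕ => drv u e Y c p.1 p.2) := by
  refine Primrec.nat_rec' (α := ℕ × ℕ) (f := fun p => p.2)
    (g := fun p => (([], fresh u e (kk c p.1 + 1) [] (1, 1) 1) : DS))
    (h := fun p q => (dst u e Y (bnd c p.1) q.1 q.2).1) Primrec.snd ?_ ?_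
  · refine Primrec.pair (p_c _) (p_fresh e hu (Primrec.succ.comp (Primrec.succ.comp
      (primrec_pow2 (Primrec.succ.comp ((p_bnd c).comp Primrec.fst))))) (p_c _) (p_c _) (p_c _))
  · exact Primrec.fst.comp ((p_dst u e Y hu hY).comp (Primrec.pair ((p_bnd c).comp
      (Primrec.fst.comp Primrec.fst)) Primrec.snd))

lemma p_outp (hu : Primrec u) (hY : Primrec Y) : Primrec (fun p : ℕ × ℕ => outp u e Y c p.1 p.2) :=
  Primrec.snd.comp ((p_dst u e Y hu hY).comp (Primrec.pair ((p_bnd c).comp Primrec.fst)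
    (Primrec.pair Primrec.snd (p_drv u e Y c hu hY))))

lemma p_GoodT (hu : Primrec u) (hY : Primrec Y) :
    PrimrecPred (fun p : ℕ × ℕ => GoodT u e Y c p.1 p.2) :=
  (p_good Y hY).comp (Primrec.pair ((p_bnd c).comp Primrec.fst)
    (Primrec.pair Primrec.snd (Primrec.fst.comp (p_drv u e Y c hu hY))))

noncomputable def XX (d m : ℕ) : Str := Y (Nat.nth (GoodT u e Y c d) m)

lemma drv_succ (d t : ℕ) : drv u e Y c d (t + 1) = (dst u e Y (bnd c d) t (drv u e Y c d t)).1 := rfl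

open Classical in
lemma drv_run (d t : ℕ) : (drv u e Y c d t).2 =
    runA u e (XX u e Y c d) (fresh u e (kk c d + 1) [] (1, 1) 1) 0 (Nat.count (GoodT u e Y c d) t) := by
  induction t with
  | zero => simp [drv]
  | succ t ih =>
    rw [drv_succ, Nat.count_succ]
    unfold dst
    by_cases h : GoodT u e Y c d t
    · have h' := h
      unfold GoodT at h'
      rw [if_pos h', if_pos h, runA_succ u e _ _ (Nat.zero_le _), ← ih]
      simp only [XX, Nat.nth_count h]
    · have h' := h
      unfold GoodT at h'
      rw [if_neg h', if_neg h, add_zero, ih]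

noncomputable def ww (d m : ℕ) : ℝ := rw' (step u e (XX u e Y c d m)
  (runA u e (XX u e Y c d) (fresh u e (kk c d + 1) [] (1, 1) 1) 0 m)).2

open Classical in
lemma outp_good {d t : ℕ} (h : GoodT u e Y c d t) : outp u e Y c d t =
    (step u e (XX u e Y c d (Nat.count (GoodT u e Y c d) t))
  (runA u e (XX u e Y c d) (fresh u e (kk c d + 1) [] (1, 1) 1) 0 (Nat.count (GoodT u e Y c d) t))).2 := by
  rw [← drv_run]
  unfold outp dst
  have h' := h
  unfold GoodT at h'
  rw [if_pos h']
  simp only [XX, Nat.nth_count h]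

lemma outp_not_good {d t : ℕ} (h : ¬ GoodT u e Y c d t) : outp u e Y c d t = none := by
  unfold outp dst
  unfold GoodT at h
  rw [if_neg h]

open Classical in
lemma sum_outp (d t : ℕ) : ∑ i ∈ Finset.range t, rw' (outp u e Y c d i) =
    ∑ i ∈ Finset.Ico 0 (Nat.count (GoodT u e Y c d) t), ww u e Y c d i := by
  induction t with
  | zero => simp
  | succ t ih =>
    rw [Finset.sum_range_succ, ih, Nat.count_succ]
    by_cases h : GoodT u e Y c d t
    · rw [if_pos h, Finset.sum_Ico_succ_top (Nat.zero_le _), outp_good u e Y c h]; rfl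
    · rw [if_neg h, outp_not_good u e Y c h]; simp [rw']

variable (hu1 : ∀ ρ, (u ρ).1 ≤ 1)
  (hu : ∀ ρ : Str, ∑ k ∈ Finset.range (ρ.length + 1), dv (u (ρ.take k)) ≤ 2 ^ e)
  (hYl : ∀ t, (Y t).length = t)

lemma drv_contract (hu1 : ∀ ρ, (u ρ).1 ≤ 1)
    (hu : ∀ ρ : Str, ∑ k ∈ Finset.range (ρ.length + 1), dv (u (ρ.take k)) ≤ 2 ^ e)
    (hYl : ∀ t, (Y t).length = t) (d K : ℕ)
    (hK : ∀ hf : (Set.ofPred (GoodT u e Y c d)).Finite, K ≤ hf.toFinset.card) :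
    Contract (kk c d) (XX u e Y c d) 0 [] (1, 1) 1 (ww u e Y c d) K
      (runA u e (XX u e Y c d) (fresh u e (kk c d + 1) [] (1, 1) 1) 0 K) := by
  refine contract_all u e hu1 hu (kk c d) (XX u e Y c d) 0 K [] (1, 1) 1 (ww u e Y c d) le_rfl
    (fun l _ _ => List.nil_prefix) ?_ (fun m _ _ => rfl) K (Nat.zero_le _) le_rfl
  intro l l' _ h1 h2
  simp only [XX, hYl]
  exact Nat.nth_le_nth' h1 (fun hf => h2.trans_le (hK hf))

open Classical in
lemma outp_sum_le (hu1 : ∀ ρ, (u ρ).1 ≤ 1)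
    (hu : ∀ ρ : Str, ∑ k ∈ Finset.range (ρ.length + 1), dv (u (ρ.take k)) ≤ 2 ^ e)
    (hYl : ∀ t, (Y t).length = t) (d t : ℕ) :
    ∑ i ∈ Finset.range t, rw' (outp u e Y c d i) ≤ 1 := by
  rw [sum_outp]
  obtain ⟨_, D, _, _, _, h, _⟩ := drv_contract u e Y c hu1 hu hYl d _ (fun hf => Nat.count_le_card hf t)
  refine h.trans ?_
  have := min_le_right (dv D) (dv (1, 1))
  have h2 : dv (1, 1) = 1 / 2 := by norm_num [dv]
  linarith

/-- coins come from outputs -/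
lemma coin_src {d t : ℕ} {q : ℕ × ℕ} (h : q ∈ (drv u e Y c d t).1) :
    q.1 < t ∧ outp u e Y c d q.1 = some q.2 := by
  induction t with
  | zero => simp [drv] at h
  | succ t ih =>
    rw [drv_succ] at h
    by_cases hg : GoodT u e Y c d t
    · have hg' := hg
      unfold GoodT at hg'
      have ho : outp u e Y c d t = (step u e (Y t) (drv u e Y c d t).2).2 := by
        unfold outp dst; rw [if_pos hg']
      unfold dst at h
      rw [if_pos hg', ← ho] at h
      cases hq : outp u e Y c d t with
      | none => rw [hq] at h; have := ih h; exact ⟨by omega, this.2⟩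
      | some r =>
        rw [hq] at h
        simp only [pay, Option.elim, List.mem_cons] at h
        rcases h with rfl | h
        · exact ⟨Nat.lt_succ_self _, hq⟩
        · have := ih h; exact ⟨by omega, this.2⟩
    · unfold GoodT at hg
      unfold dst at h
      rw [if_neg hg] at h
      have := ih h; exact ⟨by omega, this.2⟩

lemma coin_mono (d t : ℕ) {q : ℕ × ℕ} (h : q ∈ (drv u e Y c d t).1) : q ∈ (drv u e Y c d (t + 1)).1 := by
  rw [drv_succ]; unfold dst
  split_ifs
  · cases hq : (step u e (Y t) (drv u e Y c d t).2).2 <;> simp [pay, h]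
  · exact h

lemma coin_in {d t r : ℕ} (h : outp u e Y c d t = some r) {t' : ℕ} (ht : t < t') :
    (t, r) ∈ (drv u e Y c d t').1 := by
  induction t', (Nat.succ_le_of_lt ht) using Nat.le_induction with
  | base =>
    have hg : GoodT u e Y c d t := by
      by_contra hg; rw [outp_not_good u e Y c hg] at h; simp at h
    unfold GoodT at hg
    have ho : outp u e Y c d t = (step u e (Y t) (drv u e Y c d t).2).2 := by
      unfold outp dst; rw [if_pos hg]
    rw [Nat.succ_eq_add_one, drv_succ]
    unfold dst
    rw [if_pos hg, ← ho, h]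
    simp [pay]
  | succ t' h1 ih => exact coin_mono u e Y c d t' (ih (by omega))

/-- the L-requests -/
noncomputable def req (i : ℕ) : Option (ℕ × ℕ) :=
  (outp u e Y c i.unpair.1 i.unpair.2).map
    (fun r => (r + i.unpair.1 + 1, Encodable.encode (List.replicate i.unpair.2 true)))

lemma c_req (hu : Primrec u) (hY : Primrec Y) : Primrec (req u e Y c) := by
  unfold req
  refine Primrec.option_map ((p_outp u e Y c hu hY).comp Primrec.unpair) ?_
  have hp : Primrec (fun q : ℕ × ℕ => q.1.unpair) := Primrec.unpair.comp Primrec.fst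
  refine Primrec.pair (Primrec.succ.comp (p_add Primrec.snd (Primrec.fst.comp hp)))
    (Primrec.encode.comp (primrec_replicate.comp (Primrec.snd.comp hp)))

lemma rwE (q : Option ℕ) (f : ℕ → ℕ) (d : ℕ) : wqE (q.map (fun r => (r + d + 1, f r))) =
    2⁻¹ ^ (d + 1) * ENNReal.ofReal (rw' q) := by
  cases q with
  | none => simp [wqE, rw']
  | some r =>
    simp only [wqE, Option.map_some, Option.elim, rw']
    rw [ENNReal.ofReal_div_of_pos (by positivity), ENNReal.ofReal_pow (by norm_num)]
    simp only [ofReal_one, ofReal_ofNat]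
    rw [one_div, ENNReal.inv_pow, ← pow_add]
    congr 1; ring

lemma req_sum (hu1 : ∀ ρ, (u ρ).1 ≤ 1)
    (hu : ∀ ρ : Str, ∑ k ∈ Finset.range (ρ.length + 1), dv (u (ρ.take k)) ≤ 2 ^ e)
    (hYl : ∀ t, (Y t).length = t) : ∑' i, wqE (req u e Y c i) ≤ 1 := by
  have h1 : ∀ i, wqE (req u e Y c i) = (fun a b => (2⁻¹ ^ (a + 1) * ENNReal.ofReal (rw' (outp u e Y c a b)) : ℝ≥0∞))
      i.unpair.1 i.unpair.2 := fun i => rwE _ (fun _ => _) _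
  rw [tsum_congr h1, tsum_unpair (fun a b => (2⁻¹ ^ (a + 1) * ENNReal.ofReal (rw' (outp u e Y c a b)) : ℝ≥0∞))]
  calc _ ≤ ∑' a : ℕ, (2⁻¹ ^ (a + 1) : ℝ≥0∞) := by
        refine ENNReal.tsum_le_tsum fun a => ?_
        rw [ENNReal.tsum_mul_left]
        refine mul_le_of_le_one_right zero_le ?_
        rw [ENNReal.tsum_eq_iSup_nat]
        refine iSup_le fun n => ?_
        rw [← ENNReal.ofReal_sum_of_nonneg (fun i _ => rw'_nonneg _)]
        rw [← ENNReal.ofReal_one]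
        exact ENNReal.ofReal_le_ofReal (outp_sum_le u e Y c hu1 hu hYl a n)
    _ ≤ 1 := by
      rw [ENNReal.tsum_geometric_add_one, ENNReal.one_sub_inv_two, inv_inv,
        ENNReal.inv_mul_cancel two_ne_zero ofNat_ne_top]

open Classical in
lemma XX_comp (hu : Primrec u) (hY : Primrec Y) (d : ℕ) (hinf : (Set.ofPred (GoodT u e Y c d)).Infinite) :
    Computable (XX u e Y c d) := by
  have hg : PrimrecPred (GoodT u e Y c d) :=
    (p_GoodT u e Y c hu hY).comp (Primrec.pair (p_c d) Primrec.id)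
  have hcnt : Primrec (Nat.count (GoodT u e Y c d)) := by
    have : Primrec (fun t : ℕ => (Nat.rec 0 (fun n ih => if GoodT u e Y c d n then ih + 1 else ih) t : ℕ)) := by
      refine Primrec.nat_rec' (α := ℕ) (f := fun p => p) (g := fun _ => 0)
        (h := fun _ q => if GoodT u e Y c d q.1 then q.2 + 1 else q.2) Primrec.id (p_c _) ?_
      exact Primrec.ite (hg.comp (Primrec.fst.comp Primrec.snd))
        (Primrec.succ.comp (Primrec.snd.comp Primrec.snd)) (Primrec.snd.comp Primrec.snd)
    refine this.of_eq fun t => ?_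
    induction t with
    | zero => simp
    | succ t ih => rw [Nat.count_succ, ← ih]; dsimp only; split_ifs <;> rfl
  have hP : PrimrecPred (fun p : ℕ × ℕ => GoodT u e Y c d p.2 ∧ Nat.count (GoodT u e Y c d) p.2 = p.1) :=
    (hg.comp Primrec.snd).and (Primrec.eq.comp (hcnt.comp Primrec.snd) Primrec.fst)
  have hP' : Primrec (fun p : ℕ × ℕ => decide (GoodT u e Y c d p.2 ∧ Nat.count (GoodT u e Y c d) p.2 = p.1)) := by
    obtain ⟨_, h⟩ := hP
    exact h.of_eq (fun a => by congr)
  have hr := Partrec.rfind (p := fun m t => Part.some (decide (GoodT u e Y c d t ∧ Nat.count (GoodT u e Y c d) t = m)))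
    (Computable₂.partrec₂ (f := fun m t => decide (GoodT u e Y c d t ∧ Nat.count (GoodT u e Y c d) t = m)) hP'.to_comp)
  have hn : Computable (Nat.nth (GoodT u e Y c d)) := by
    refine Partrec.of_eq_tot hr fun m => ?_
    refine Nat.mem_rfind.2 ⟨?_, ?_⟩
    · rw [Part.mem_some_iff, eq_comm, decide_eq_true_eq]
      exact ⟨Nat.nth_mem_of_infinite hinf m, Nat.count_nth_of_infinite hinf m⟩
    · intro k hk
      rw [Part.mem_some_iff, eq_comm, decide_eq_false_iff_not]
      rintro ⟨h1, h2⟩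
      have := Nat.nth_count h1
      rw [h2] at this
      omega
  exact hY.to_comp.comp hn

open Classical in
lemma lev_bound (hYl : ∀ t, (Y t).length = t) (d : ℕ) (hinf : (Set.ofPred (GoodT u e Y c d)).Infinite) (m : ℕ) :
    ∑ i ∈ Finset.Ico 0 m, ww u e Y c d i * lev (XX u e Y c d) i m ≤ 2 ^ bnd c d := by
  set X := XX u e Y c d with hX
  set N := Nat.nth (GoodT u e Y c d) with hN
  have hlen : ∀ i, (X i).length = N i := fun i => hYl _
  have hmono : StrictMono N := Nat.nth_strictMono hinf
  set I : ℕ → Finset Str := fun i => (Finset.Ioo i m).image (fun l => (X l).take (X i).length) with hI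
  have h1 : ∀ i ∈ Finset.Ico 0 m, ww u e Y c d i * lev X i m ≤
      2 ^ bnd c d * ∑ x ∈ I i, mass (Encodable.encode x) := by
    intro i hi
    have hgi : GoodT u e Y c d (N i) := Nat.nth_mem_of_infinite hinf i
    have ho := outp_good u e Y c hgi
    rw [Nat.count_nth_of_infinite hinf i] at ho
    have hw : ww u e Y c d i = rw' (outp u e Y c d (N i)) := by rw [ho]; rfl
    cases hq : outp u e Y c d (N i) with
    | none =>
      rw [hw, hq]
      simp only [rw', Option.elim, zero_mul]
      exact mul_nonneg (by positivity) (Finset.sum_nonneg fun x _ => mass_nonneg _)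
    | some r =>
      rw [hw, hq]
      simp only [rw', Option.elim]
      have : (lev X i m : ℝ) * (1 / 2 ^ (r + bnd c d)) ≤ ∑ x ∈ I i, mass (Encodable.encode x) := by
        unfold lev
        rw [← nsmul_eq_mul]
        refine Finset.card_nsmul_le_sum _ _ _ ?_
        intro x hx
        obtain ⟨l, hl, rfl⟩ := Finset.mem_image.1 hx
        rw [Finset.mem_Ioo] at hl
        have hgl : GoodT u e Y c d (N l) := Nat.nth_mem_of_infinite hinf l
        have := hgl _ (coin_in u e Y c hq (hmono hl.1))
        rw [hlen]
        exact test_mass this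
      calc _ = 2 ^ bnd c d * ((lev X i m : ℝ) * (1 / 2 ^ (r + bnd c d))) := by
            rw [pow_add]; field_simp
        _ ≤ _ := by gcongr
  refine (Finset.sum_le_sum h1).trans ?_
  rw [← Finset.mul_sum, ← Finset.sum_biUnion]
  · refine mul_le_of_le_one_right (by positivity) ?_
    have := mass_sum (((Finset.Ico 0 m).biUnion I).image Encodable.encode)
    rwa [Finset.sum_image (fun x _ y _ h => Encodable.encode_injective h)] at this
  · intro i _ i' _ hne
    rw [Function.onFun, Finset.disjoint_left]
    intro x hx hx'
    obtain ⟨l, hl, rfl⟩ := Finset.mem_image.1 hx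
    obtain ⟨l', hl', h⟩ := Finset.mem_image.1 hx'
    rw [Finset.mem_Ioo] at hl hl'
    have := congrArg List.length h
    simp only [List.length_take, hlen] at this
    rw [min_eq_left (hmono hl.1).le, min_eq_left (hmono hl'.1).le] at this
    exact hne (hmono.injective this).symm

end

theorem cover_of_ktrivial (A : ℕ → Bool) (hA : KTrivial A) (u : Str → Dy) (e : ℕ) (hup : Primrec u)
    (hu1 : ∀ ρ, (u ρ).1 ≤ 1)
    (hu : ∀ ρ : Str, ∑ k ∈ Finset.range (ρ.length + 1), dv (u (ρ.take k)) ≤ 2 ^ e) : Cover u A := by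
  classical
  by_contra hno
  obtain ⟨bit, hbp, hbit⟩ := delta2 A hA
  obtain ⟨c, hc⟩ := hA
  set Y : ℕ → Str := fun t => (List.range t).map (bit t) with hYdef
  have hY : Primrec Y := Primrec.list_map Primrec.list_range hbp
  have hYl : ∀ t, (Y t).length = t := fun t => by simp [hYdef]
  have hYconv : ∀ n, ∃ t0, ∀ t ≥ t0, (Y t).take n = strPrefix A n := by
    intro n
    obtain ⟨s, hs⟩ := eventually_all_lt (P := fun i s => bit s i = A i) n (fun i _ => hbit i)
    refine ⟨max s n, fun t ht => ?_⟩
    have h1 : n ≤ t := le_trans (le_max_right _ _) ht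
    simp only [hYdef, strPrefix, ← List.map_take, List.take_range, min_eq_left h1]
    exact List.map_congr_left fun i hi => hs t (le_trans (le_max_left _ _) ht) i (List.mem_range.1 hi)
  obtain ⟨C, hC⟩ := kcE (req u e Y c) (c_req u e Y c hup hY).to_comp (req_sum u e Y c hu1 hu hYl)
  have hK : ∀ t r, outp u e Y c C t = some r → Kcpx (Encodable.encode (strPrefix A t)) ≤ r + bnd c C := by
    intro t r h
    have h1 := hC (Nat.pair C t) (r + C + 1) (Encodable.encode (List.replicate t true)) (by simp [req, h])
    rw [kle_iff] at h1
    have h2 := hc t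
    unfold KofNat at h2
    unfold bnd
    omega
  have hinf : (Set.ofPred (GoodT u e Y c C)).Infinite := by
    by_contra hfin
    rw [Set.not_infinite] at hfin
    obtain ⟨T, hT⟩ := hfin.bddAbove
    have hbad : ∀ t, T < t → ¬ GoodT u e Y c C t := fun t ht hg => absurd (hT hg) (by omega)
    have hconst : ∀ t, T + 1 ≤ t → drv u e Y c C t = drv u e Y c C (T + 1) := by
      intro t ht
      induction t, ht using Nat.le_induction with
      | base => rfl
      | succ t ht ih =>
        rw [drv_succ]
        have := hbad t (by omega)
        unfold GoodT at this
        unfold dst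
        rw [if_neg this, ih]
    obtain ⟨s, hs⟩ := eventually_forall_mem (P := fun (q : ℕ × ℕ) t =>
        test t (Encodable.encode ((Y t).take q.1)) (q.2 + bnd c C)) (drv u e Y c C (T + 1)).1 (by
      intro q hq
      have hk := hK q.1 q.2 (coin_src u e Y c hq).2
      obtain ⟨t1, h1⟩ := hYconv q.1
      obtain ⟨t2, h2⟩ := test_eventually (Encodable.encode (strPrefix A q.1)) (q.2 + bnd c C)
      refine ⟨max t1 t2, fun t ht => ?_⟩
      rw [h1 t (le_trans (le_max_left _ _) ht)]
      exact (h2 t (le_trans (le_max_right _ _) ht)).2 hk)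
    refine hbad (max s (T + 1)) (by omega) ?_
    unfold GoodT
    rw [hconst _ (le_max_right _ _)]
    exact hs _ (le_max_left _ _)
  have hmono := Nat.nth_strictMono hinf
  have hGX : GoodX A (XX u e Y c C) := by
    refine ⟨fun l l' h => ?_, fun n => ?_, XX_comp u e Y c hup hY C hinf⟩
    · simp only [XX, hYl]; exact hmono.monotone h
    · obtain ⟨t0, h0⟩ := hYconv n
      exact ⟨t0, fun m hm => h0 _ (hm.trans hmono.le_apply)⟩
  obtain ⟨m, _, f, rest, hrun, hd⟩ := succ_all u e (primrec_step e hup).to_comp hu hu1 A hno (kk c C) _ hGX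
    0 [] (1, 1) 1 le_rfl (fun _ _ => List.nil_prefix)
  obtain ⟨c', D, rest', h1, _, _, h4⟩ := drv_contract u e Y c hu1 hu hYl C m (fun hf => absurd hf hinf)
  rw [hrun] at h1
  obtain ⟨rfl, rfl⟩ := List.cons.inj h1
  rw [done_iff] at hd
  have hd' : (1 / 2 : ℝ) ≤ dv D := by
    refine le_trans (le_of_eq ?_) hd
    norm_num [dv]
  have h5 := h4.trans (lev_bound u e Y c hYl C hinf m)
  have h6 : ((kk c C : ℕ) : ℝ) * (1 / 2) ≤ kk c C * dv D := by gcongr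
  have h7 : ((kk c C : ℕ) : ℝ) = 2 * 2 ^ bnd c C + 1 := by
    unfold kk; push_cast; rw [pow_succ]; ring
  rw [h7] at h5 h6
  linarith

end KT

namespace KT

lemma re_code {G : Str → Prop} (hG : REPred G) :
    ∃ cd : Nat.Partrec.Code, ∀ ρ, G ρ ↔ (cd.eval (Encodable.encode ρ)).Dom := by
  have h : Partrec (fun a => Part.assert (G a) (fun _ => Part.some ())) := hG
  obtain ⟨cd, hcd⟩ := Nat.Partrec.Code.exists_code.1 h
  refine ⟨cd, fun ρ => ?_⟩
  rw [hcd]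
  simp [Part.assert]

lemma ce_of_re {W : Set Str} (hW : REPred (fun σ => σ ∈ W)) : CeStr W := by
  obtain ⟨cd, hcd⟩ := re_code hW
  have hp : Partrec (fun n : ℕ => cd.eval n.unpair.2.unpair.1) := by
    have h1 : Partrec (fun n : ℕ => cd.eval n) := Partrec.nat_iff.2 (Nat.Partrec.Code.exists_code.2 ⟨cd, rfl⟩)
    refine h1.comp ?_
    exact (Primrec.fst.comp (Primrec.unpair.comp (Primrec.snd.comp Primrec.unpair))).to_comp
  obtain ⟨cd', hcd'⟩ := Nat.Partrec.Code.exists_code.1 (Partrec.nat_iff.1 hp)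
  refine ⟨Encodable.encode cd', fun σ => ?_⟩
  have key : ∀ a m, WEnum (Encodable.encode cd') (Nat.pair a (Nat.pair (Encodable.encode σ) m)) ↔ σ ∈ W := by
    intro a m
    unfold WEnum
    rw [Denumerable.ofNat_encode, hcd', hcd]
    simp
  unfold OracleComputes
  constructor
  · intro h
    exact ⟨0, [], fun i => i.elim0, (key _ _).2 h⟩
  · rintro ⟨m, τ, _, h⟩
    exact (key _ _).1 h

section
variable (cd : Nat.Partrec.Code) (e : ℕ)

def nd (ρ : Str) : ℕ := ρ.length.unpair.1

def hit (ρ : Str) : Prop := Encodable.encode (dec (nd ρ)) = nd ρ ∧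
  ∃ i < ρ.length + 1, ∃ m < ρ.length + 1,
    (Nat.Partrec.Code.evaln ρ.length.unpair.2 cd
      (Nat.pair (Encodable.encode (ρ.take i)) (Nat.pair (nd ρ) m))).isSome = true

def frst (ρ : Str) : Prop := hit cd ρ ∧ ∀ n' < ρ.length, n'.unpair.1 = nd ρ → ¬ hit cd (ρ.take n')

open Classical in
noncomputable def u0 (ρ : Str) : Dy := if frst cd ρ then (1, (dec (nd ρ)).length) else (0, 0)

noncomputable def tot (ρ : Str) (n : ℕ) : Dy := Nat.rec (0, 0) (fun k ih => dadd ih (u0 cd (ρ.take k))) n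

noncomputable def uu (ρ : Str) : Dy :=
  if (tot cd ρ (ρ.length + 1)).1 ≤ 2 ^ (e + (tot cd ρ (ρ.length + 1)).2) then u0 cd ρ else (0, 0)

lemma p_nd : Primrec nd := Primrec.fst.comp (Primrec.unpair.comp Primrec.list_length)

lemma p_hit : PrimrecPred (hit cd) := by
  unfold hit
  refine PrimrecPred.and (Primrec.eq.comp (Primrec.encode.comp (primrec_dec.comp p_nd)) p_nd) ?_
  refine pex (α := Str) (P := fun ρ i => ∃ m < ρ.length + 1,
    (Nat.Partrec.Code.evaln ρ.length.unpair.2 cd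
      (Nat.pair (Encodable.encode (ρ.take i)) (Nat.pair (nd ρ) m))).isSome = true) ?_
    (Primrec.succ.comp Primrec.list_length)
  refine pex (α := Str × ℕ) (P := fun p m => 
    (Nat.Partrec.Code.evaln p.1.length.unpair.2 cd
      (Nat.pair (Encodable.encode (p.1.take p.2)) (Nat.pair (nd p.1) m))).isSome = true) ?_
    (Primrec.succ.comp (Primrec.list_length.comp Primrec.fst))
  have h1 : Primrec (fun p : (Str × ℕ) × ℕ => p.1.1) := Primrec.fst.comp Primrec.fst
  refine Primrec.eq.comp (Primrec.option_isSome.comp (Nat.Partrec.Code.primrec_evaln.comp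
    (Primrec.pair (Primrec.pair ?_ (p_c cd)) ?_))) (p_c true)
  · exact Primrec.snd.comp (Primrec.unpair.comp (Primrec.list_length.comp h1))
  · exact Primrec₂.natPair.comp (Primrec.encode.comp (p_take (Primrec.snd.comp Primrec.fst) h1))
      (Primrec₂.natPair.comp (p_nd.comp h1) Primrec.snd)

lemma p_frst : PrimrecPred (frst cd) := by
  unfold frst
  refine (p_hit cd).and ?_
  refine pall (α := Str) (P := fun ρ n' => n'.unpair.1 = nd ρ → ¬ hit cd (ρ.take n')) ?_ Primrec.list_length
  refine pimp (Primrec.eq.comp (Primrec.fst.comp (Primrec.unpair.comp Primrec.snd)) (p_nd.comp Primrec.fst)) ?_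
  exact ((p_hit cd).comp (p_take Primrec.snd Primrec.fst)).not

open Classical in
lemma p_u0 : Primrec (u0 cd) := by
  unfold u0
  exact Primrec.ite (p_frst cd) (Primrec.pair (p_c 1) (Primrec.list_length.comp (primrec_dec.comp p_nd))) (p_c _)

lemma p_uu : Primrec (uu cd e) := by
  have ht : Primrec (fun ρ : Str => tot cd ρ (ρ.length + 1)) := by
    unfold tot
    refine Primrec.nat_rec' (α := Str) (f := fun ρ => ρ.length + 1) (g := fun _ => ((0, 0) : Dy))
      (h := fun ρ q => dadd q.2 (u0 cd (ρ.take q.1))) (Primrec.succ.comp Primrec.list_length) (p_c _) ?_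
    exact p_dadd (Primrec.snd.comp Primrec.snd) ((p_u0 cd).comp (p_take (Primrec.fst.comp Primrec.snd) Primrec.fst))
  unfold uu
  refine Primrec.ite ?_ (p_u0 cd) (p_c _)
  exact Primrec.nat_le.comp (Primrec.fst.comp ht) (primrec_pow2 (p_add (p_c e) (Primrec.snd.comp ht)))

lemma u0_one (ρ : Str) : (u0 cd ρ).1 ≤ 1 := by unfold u0; split_ifs <;> simp

lemma uu_one (ρ : Str) : (uu cd e ρ).1 ≤ 1 := by
  unfold uu; split_ifs
  · exact u0_one cd ρ
  · simp

lemma dv_tot (ρ : Str) (n : ℕ) : dv (tot cd ρ n) = ∑ k ∈ Finset.range n, dv (u0 cd (ρ.take k)) := by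
  induction n with
  | zero => simp [tot]
  | succ n ih => rw [Finset.sum_range_succ, ← ih, ← dv_dadd]; rfl

lemma tot_cond (x : Dy) : x.1 ≤ 2 ^ (e + x.2) ↔ dv x ≤ 2 ^ e := by
  unfold dv
  rw [div_le_iff₀ (by positivity), ← pow_add]
  exact_mod_cast Iff.rfl

lemma uu_le (ρ : Str) : dv (uu cd e ρ) ≤ dv (u0 cd ρ) := by
  unfold uu; split_ifs
  · exact le_rfl
  · simpa using dv_nonneg _

lemma uu_sum (ρ : Str) : ∑ k ∈ Finset.range (ρ.length + 1), dv (uu cd e (ρ.take k)) ≤ 2 ^ e := by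
  have : ∀ N, N ≤ ρ.length + 1 → ∑ k ∈ Finset.range N, dv (uu cd e (ρ.take k)) ≤ 2 ^ e := by
    intro N hN
    induction N with
    | zero => simp
    | succ N ih =>
      have hl : (ρ.take N).length = N := by simp; omega
      by_cases h : (tot cd (ρ.take N) ((ρ.take N).length + 1)).1 ≤
          2 ^ (e + (tot cd (ρ.take N) ((ρ.take N).length + 1)).2)
      · rw [tot_cond, hl, dv_tot] at h
        refine le_trans (Finset.sum_le_sum fun k hk => ?_) h
        rw [Finset.mem_range] at hk
        rw [List.take_take, min_eq_left (by omega)]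
        exact uu_le cd e _
      · rw [Finset.sum_range_succ]
        have h0 : uu cd e (ρ.take N) = (0, 0) := by unfold uu; rw [if_neg h]
        rw [h0, dv_zero, add_zero]
        exact ih (by omega)
  exact this _ le_rfl

end

lemma isPrefixOf_iff (σ : Str) (A : ℕ → Bool) : IsPrefixOf σ A ↔ σ = strPrefix A σ.length := by
  unfold IsPrefixOf strPrefix
  constructor
  · intro h
    apply List.ext_getElem
    · simp
    · intro i h1 h2
      simpa using (h ⟨i, h1⟩).symm
  · intro h i
    have : σ[i.1]? = (List.map A (List.range σ.length))[i.1]? := by rw [← h]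
    simpa using this.symm

theorem main (A : ℕ → Bool) (hA : KTrivial A)
    (WA : Set (List Bool)) (hce : CeStrIn A WA) (hbd : BoundedStr WA) :
    ∃ W : Set (List Bool), CeStr W ∧ BoundedStr W ∧ WA ⊆ W := by
  classical
  obtain ⟨e0, he0⟩ := hce
  set cd : Nat.Partrec.Code := Denumerable.ofNat Nat.Partrec.Code e0 with hcd
  have hb : weight WA ≠ ⊤ := ne_of_lt hbd
  obtain ⟨e, he⟩ : ∃ e : ℕ, (weight WA).toReal ≤ 2 ^ e := by
    obtain ⟨n, hn⟩ := exists_nat_gt (weight WA).toReal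
    exact ⟨n, hn.le.trans (by exact_mod_cast Nat.lt_two_pow_self.le)⟩
  obtain ⟨G, hG, hGA, B, hB⟩ := cover_of_ktrivial A hA (uu cd e) e (p_uu cd e) (uu_one cd e) (uu_sum cd e)
  -- hits along A
  have hnd : ∀ n, nd (strPrefix A n) = n.unpair.1 := fun n => by simp [nd, strPrefix_length]
  have hhit : ∀ n, hit cd (strPrefix A n) → dec n.unpair.1 ∈ WA := by
    rintro n ⟨h1, i, hi, m, hm, h2⟩
    rw [strPrefix_length] at hi hm h2
    rw [hnd] at h1 h2
    rw [he0, h1]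
    refine ⟨m, strPrefix A i, (isPrefixOf_iff _ _).2 (by rw [strPrefix_length]), ?_⟩
    rw [strPrefix_take A (by omega)] at h2
    obtain ⟨x, hx⟩ := Option.isSome_iff_exists.1 h2
    have := Nat.Partrec.Code.evaln_sound hx
    exact Part.dom_iff_mem.2 ⟨x, this⟩
  have hfr : ∀ n, frst cd (strPrefix A n) ↔ hit cd (strPrefix A n) ∧
      ∀ n' < n, n'.unpair.1 = n.unpair.1 → ¬ hit cd (strPrefix A n') := by
    intro n
    unfold frst
    rw [strPrefix_length, hnd]
    refine and_congr_right fun _ => forall_congr' fun n' => forall_congr' fun hn => ?_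
    rw [strPrefix_take A hn.le]
  have hsum : ∀ N, ∑ k ∈ Finset.range N, dv (u0 cd (strPrefix A k)) ≤ 2 ^ e := by
    intro N
    set F := (Finset.range N).filter (fun k => frst cd (strPrefix A k)) with hF
    have h1 : ∑ k ∈ Finset.range N, dv (u0 cd (strPrefix A k)) =
        ∑ k ∈ F, ((2⁻¹ : ℝ≥0∞) ^ (dec k.unpair.1).length).toReal := by
      rw [hF, Finset.sum_filter]
      refine Finset.sum_congr rfl fun k _ => ?_
      unfold u0
      split_ifs
      · simp [dv, hnd]
      · simp
    rw [h1, ← ENNReal.toReal_sum (fun k _ => by simp)]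
    refine le_trans (ENNReal.toReal_mono hb ?_) he
    have hinj : Set.InjOn (fun k : ℕ => dec k.unpair.1) F := by
      have hlt : ∀ k k', frst cd (strPrefix A k) → frst cd (strPrefix A k') →
          dec k.unpair.1 = dec k'.unpair.1 → ¬ k < k' := by
        intro k k' hk hk' h hlt
        rw [hfr] at hk hk'
        refine hk'.2 k hlt ?_ hk.1
        have e1 := hk.1.1
        have e2 := hk'.1.1
        rw [hnd] at e1 e2
        rw [← e1, ← e2, h]
      intro k hk k' hk' h
      simp only [hF, Finset.coe_filter, Set.mem_ofPred_eq] at hk hk'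
      have a1 := hlt k k' hk.2 hk'.2 h
      have a2 := hlt k' k hk'.2 hk.2 h.symm
      omega
    rw [← Finset.sum_image (f := fun σ : Str => (2⁻¹ : ℝ≥0∞) ^ σ.length) hinj]
    unfold weight
    rw [tsum_subtype WA (fun σ : Str => (2⁻¹ : ℝ≥0∞) ^ σ.length)]
    refine le_trans (Finset.sum_le_sum fun σ hσ => ?_) (ENNReal.sum_le_tsum _)
    obtain ⟨k, hk, rfl⟩ := Finset.mem_image.1 hσ
    rw [Set.indicator_of_mem (hhit k (Finset.mem_filter.1 hk).2.1)]
  have huA : ∀ n, uu cd e (strPrefix A n) = u0 cd (strPrefix A n) := by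
    intro n
    unfold uu
    rw [if_pos]
    rw [tot_cond, dv_tot, strPrefix_length]
    refine le_trans (le_of_eq (Finset.sum_congr rfl fun k hk => ?_)) (hsum (n + 1))
    rw [Finset.mem_range] at hk
    rw [strPrefix_take A (by omega)]
  have huval : ∀ ρ, (uu cd e ρ).1 ≠ 0 → uu cd e ρ = (1, (dec (nd ρ)).length) := by
    intro ρ h
    unfold uu at h ⊢
    split_ifs at h ⊢ with h1
    · unfold u0 at h ⊢
      split_ifs at h ⊢ with h2
      · rfl
      · simp at h
    · simp at h
  refine ⟨{σ | ∃ ρ, G ρ ∧ (uu cd e ρ).1 ≠ 0 ∧ σ = dec (nd ρ)}, ?_, ?_, ?_⟩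
  · apply ce_of_re
    obtain ⟨cg, hcg⟩ := re_code hG
    have hp : PrimrecPred (fun p : Str × ℕ =>
        ((Nat.Partrec.Code.evaln p.2.unpair.2 cg (Encodable.encode (dec p.2.unpair.1))).isSome = true ∧
        ¬ (uu cd e (dec p.2.unpair.1)).1 = 0) ∧ p.1 = dec (nd (dec p.2.unpair.1))) := by
      have hd : Primrec (fun p : Str × ℕ => dec p.2.unpair.1) :=
        primrec_dec.comp (Primrec.fst.comp (Primrec.unpair.comp Primrec.snd))
      refine PrimrecPred.and (PrimrecPred.and ?_ (PrimrecPred.not ?_)) ?_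
      · exact Primrec.eq.comp (Primrec.option_isSome.comp (Nat.Partrec.Code.primrec_evaln.comp
          (Primrec.pair (Primrec.pair (Primrec.snd.comp (Primrec.unpair.comp Primrec.snd)) (p_c cg))
            (Primrec.encode.comp hd)))) (p_c true)
      · exact Primrec.eq.comp (Primrec.fst.comp ((p_uu cd e).comp hd)) (p_c 0)
      · exact Primrec.eq.comp Primrec.fst (primrec_dec.comp (p_nd.comp hd))
    obtain ⟨_, hp'⟩ := hp
    have hq : Computable₂ (fun (σ : Str) (k : ℕ) => decide
        (((Nat.Partrec.Code.evaln k.unpair.2 cg (Encodable.encode (dec k.unpair.1))).isSome = true ∧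
        ¬ (uu cd e (dec k.unpair.1)).1 = 0) ∧ σ = dec (nd (dec k.unpair.1)))) :=
      Primrec.to_comp (hp'.of_eq fun a => by congr)
    refine (re_exists hq).of_eq fun σ => ?_
    simp only [decide_eq_true_eq, Set.mem_ofPred_eq]
    constructor
    · rintro ⟨k, ⟨h1, h2⟩, h3⟩
      refine ⟨dec k.unpair.1, ?_, h2, h3⟩
      rw [hcg]
      obtain ⟨x, hx⟩ := Option.isSome_iff_exists.1 h1
      exact Part.dom_iff_mem.2 ⟨x, Nat.Partrec.Code.evaln_sound hx⟩
    · rintro ⟨ρ, h1, h2, h3⟩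
      rw [hcg] at h1
      obtain ⟨x, hx⟩ := Part.dom_iff_mem.1 h1
      obtain ⟨k, hk⟩ := Nat.Partrec.Code.evaln_complete.1 hx
      refine ⟨Nat.pair (Encodable.encode ρ) k, ?_⟩
      simp only [Nat.unpair_pair, dec_encode]
      exact ⟨⟨Option.isSome_iff_exists.2 ⟨x, hk⟩, h2⟩, h3⟩
  · unfold BoundedStr weight
    rw [tsum_subtype {σ | ∃ ρ, G ρ ∧ (uu cd e ρ).1 ≠ 0 ∧ σ = dec (nd ρ)} (fun σ : Str => (2⁻¹ : ℝ≥0∞) ^ σ.length)]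
    refine lt_of_le_of_lt ?_ (ENNReal.ofReal_lt_top (r := B))
    rw [ENNReal.tsum_eq_iSup_sum]
    refine iSup_le fun T => ?_
    set W : Set Str := {σ | ∃ ρ, G ρ ∧ (uu cd e ρ).1 ≠ 0 ∧ σ = dec (nd ρ)} with hW
    have hch : ∀ σ : Str, ∃ ρ, σ ∈ W → G ρ ∧ (uu cd e ρ).1 ≠ 0 ∧ σ = dec (nd ρ) := by
      intro σ
      by_cases h : σ ∈ W
      · obtain ⟨ρ, hρ⟩ := h; exact ⟨ρ, fun _ => hρ⟩
      · exact ⟨[], fun h' => absurd h' h⟩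
    choose R hR using hch
    have hTW : ∑ σ ∈ T, W.indicator (fun σ : Str => (2⁻¹ : ℝ≥0∞) ^ σ.length) σ =
        ∑ σ ∈ T.filter (· ∈ W), ENNReal.ofReal (dv (uu cd e (R σ))) := by
      rw [Finset.sum_filter]
      refine Finset.sum_congr rfl fun σ _ => ?_
      by_cases h : σ ∈ W
      · rw [Set.indicator_of_mem h, if_pos h]
        have h2 := hR σ h
        rw [huval _ h2.2.1, ← h2.2.2]
        simp only [dv, Nat.cast_one]
        rw [ENNReal.ofReal_div_of_pos (by positivity), ENNReal.ofReal_pow (by norm_num)]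
        simp [ENNReal.inv_pow]
      · rw [Set.indicator_of_notMem h, if_neg h]
    rw [hTW, ← ENNReal.ofReal_sum_of_nonneg (fun _ _ => dv_nonneg _)]
    apply ENNReal.ofReal_le_ofReal
    have hinj : Set.InjOn R (T.filter (· ∈ W)) := by
      intro σ hσ σ' hσ' h
      have m1 := (Finset.mem_filter.1 (Finset.mem_coe.1 hσ)).2
      have m2 := (Finset.mem_filter.1 (Finset.mem_coe.1 hσ')).2
      rw [(hR σ m1).2.2, (hR σ' m2).2.2, h]
    rw [← Finset.sum_image (f := fun ρ => dv (uu cd e ρ)) hinj]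
    apply hB
    intro ρ hρ
    obtain ⟨σ, hσ, rfl⟩ := Finset.mem_image.1 hρ
    exact (hR σ (Finset.mem_filter.1 hσ).2).1
  · intro σ hσ
    obtain ⟨m, τ, hτ, hx⟩ := (he0 σ).1 hσ
    rw [isPrefixOf_iff] at hτ
    obtain ⟨x, hx⟩ := Part.dom_iff_mem.1 hx
    obtain ⟨k, hk⟩ := Nat.Partrec.Code.evaln_complete.1 hx
    have hex : ∃ n : ℕ, n.unpair.1 = Encodable.encode σ ∧ hit cd (strPrefix A n) := by
      set s := max k (max τ.length m) with hs
      have hn := Nat.right_le_pair (Encodable.encode σ) s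
      refine ⟨Nat.pair (Encodable.encode σ) s, by simp, ?_⟩
      unfold hit
      rw [hnd, strPrefix_length]
      simp only [Nat.unpair_pair, dec_encode]
      refine ⟨trivial, τ.length, by omega, m, by omega, ?_⟩
      rw [strPrefix_take A (by omega), ← hτ]
      exact Option.isSome_iff_exists.2 ⟨x, Nat.Partrec.Code.evaln_mono (by omega) hk⟩
    obtain ⟨hn1, hn2⟩ := Nat.find_spec hex
    have hmin : ∀ n' < Nat.find hex, _ := fun n' h => Nat.find_min hex h
    set n := Nat.find hex
    have hf : frst cd (strPrefix A n) := by
      rw [hfr]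
      exact ⟨hn2, fun n' h1 h2 h3 => hmin n' h1 ⟨h2.trans hn1, h3⟩⟩
    refine ⟨strPrefix A n, hGA n, ?_, ?_⟩
    · rw [huA]; unfold u0; rw [if_pos hf]; simp
    · rw [hnd, hn1, dec_encode]

end KT

/-- covering theorem: any bounded `A`-c.e. set of strings for
K-trivial `A` is contained in a bounded c.e. set of strings. -/
theorem stmt10 (A : ℕ → Bool) (hA : KTrivial A)
    (WA : Set (List Bool)) (hce : CeStrIn A WA) (hbd : BoundedStr WA) :
    ∃ W : Set (List Bool), CeStr W ∧ BoundedStr W ∧ WA ⊆ W := by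
  exact KT.main A hA WA hce hbd
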